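/- Assume the Riemann Hypothesis. Fix real numbers κ and η, a number ϑ with 0 < ϑ < 1/2, and a polynomial P with P(0) = 0. Then as T → ∞, Σ_{T<γ≤2T} | ζ(ρ + 2πiκ/log T) · M(ρ + 2πiη/log T, P) |² ≪ T log T, where ρ = 1/2 + iγ runs over the nontrivial zeros of ζ with ordinate in (T,2T], counted with multiplicity. -/

import Mathlib

open Filter MeasureTheory
open scoped Real

noncomputable section

/-- The multiplicity (order of vanishing) of the Riemann zeta function at a point `z`:
the least `n` such that the `n`-th derivative of `ζ` at `z` is nonzero. -/
def zetaMult (z : ℂ) : ℕ := sInf {n : ℕ | iteratedDeriv n riemannZeta z ≠ 0}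

/-- Under RH, the set of ordinates `γ` with `0 < γ ≤ T` of nontrivial zeros `1/2 + iγ` of `ζ`. -/
def zetaOrds (T : ℝ) : Set ℝ :=
  {γ : ℝ | 0 < γ ∧ γ ≤ T ∧ riemannZeta (1 / 2 + γ * Complex.I) = 0}

/-- The multiplicity of the zero of `ζ` at `1/2 + iγ`. -/
def ordMult (γ : ℝ) : ℕ := zetaMult (1 / 2 + γ * Complex.I)

/-- `N(T)`: the number of ordinates of nontrivial zeros in `(0, T]`, counted with multiplicity. -/
def zetaN (T : ℝ) : ℕ := ∑ᶠ γ ∈ zetaOrds T, ordMult γ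

/-- The next ordinate of a nontrivial zero strictly above `γ`. -/
def nextOrd (γ : ℝ) : ℝ :=
  sInf {γ' : ℝ | γ < γ' ∧ riemannZeta (1 / 2 + γ' * Complex.I) = 0}

/-- The mollifier `M(s, P) = Σ_{n ≤ y} μ(n) P(log(y/n)/log y) n^{-s}` with `y = T^ϑ`. -/
def moll (T ϑ : ℝ) (P : Polynomial ℝ) (s : ℂ) : ℂ :=
  ∑ n ∈ Finset.Icc 1 ⌊T ^ ϑ⌋₊,
    (ArithmeticFunction.moebius n : ℂ) *
      (P.eval (Real.log (T ^ ϑ / n) / Real.log (T ^ ϑ)) : ℝ) * (n : ℂ) ^ (-s)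

/-!
The order of vanishing of `G = ζ · M` at a zero of `ζ` is at least its multiplicity there, and the
shifts `2πiκ / log T`, `2πiη / log T` are absorbed into an evaluation point within `O(1 / log T)` of
the zero and a smooth weight `P(x) e^{c (1 - x)}` in the mollifier. The bound reduces to a second
moment `∫ |G(σ + it)|² dt ≪ T` over `[T / 2, 5T / 2]`, uniformly for `|σ - 1 / 2| ≪ 1 / log T`:
group the zeros into cells of length `≍ 1 / log T`; at a point near `n` zeros of one cell, divide
those zeros out of `G` and apply the mean value property to the quotient on a disc of radius
`≍ 1 / log T`. This gains `4 ^ n`, so that the `n` terms of the cell together cost no more than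
one, and summing the area integrals over the cells loses only a factor `log T`.

For the second moment, `-ζ(s) M(s) / s` is the Mellin transform of the combination
`F(u) = ∑_{k ≤ y} b_k {u / k}` of sawtooth functions. Plancherel's theorem, applied to
`F((1 + x) u) - F(u)` and averaged over `x ≍ 1 / T`, removes the factor `1 / s` and leaves the mean
square of short increments of `F`. Up to a Gaussian-small error, valid because `y ^ 2` is a power
smaller than `T`, this is a quadratic form in the `b_k` depending on `gcd(h, k)`, and the
elementary bound for `∑ μ(n) log(x / n) / n` over `(n, q) = 1` gives it the saving `1 / log y`.
-/

/-! ### Möbius sums over integers coprime to a modulus -/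

section MoebiusSums

open scoped ArithmeticFunction.Moebius

lemma abs_moebius_cast_le_one (n : ℕ) : |(μ n : ℝ)| ≤ 1 := by
  exact_mod_cast ArithmeticFunction.abs_moebius_le_one (n := n)

lemma moebius_prime_mul {p : ℕ} (hp : p.Prime) (i : ℕ) :
    μ (p * i) = if i.Coprime p then -μ i else 0 := by
  split_ifs with h
  · rw [ArithmeticFunction.isMultiplicative_moebius.map_mul_of_coprime h.symm,
      ArithmeticFunction.moebius_apply_prime hp, neg_one_mul]
  · refine ArithmeticFunction.moebius_eq_zero_of_not_squarefree fun hsq => h ?_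
    exact (Nat.coprime_of_squarefree_mul hsq).symm

lemma sum_Ioc_filter_dvd {E : Type*} [AddCommMonoid E] {d : ℕ} (hd : 0 < d) (N : ℕ) (f : ℕ → E) :
    ∑ n ∈ Finset.Ioc 0 N with d ∣ n, f n = ∑ i ∈ Finset.Ioc 0 (N / d), f (d * i) := by
  symm
  refine Finset.sum_nbij' (d * ·) (· / d) ?_ ?_ ?_ ?_ fun _ _ => rfl
  · intro i hi
    rw [Finset.mem_Ioc, Nat.le_div_iff_mul_le hd] at hi
    simp only [Finset.mem_filter, Finset.mem_Ioc, dvd_mul_right, and_true]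
    exact ⟨Nat.mul_pos hd hi.1, by linarith⟩
  · intro n hn
    simp only [Finset.mem_filter, Finset.mem_Ioc] at hn ⊢
    exact ⟨Nat.div_pos (Nat.le_of_dvd hn.1.1 hn.2) hd, Nat.div_le_div_right hn.1.2⟩
  · exact fun i _ => Nat.mul_div_cancel_left i hd
  · exact fun n hn => Nat.mul_div_cancel' (Finset.mem_filter.1 hn).2

lemma sum_Ioc_one_apply {R : Type*} [Semiring R] {N : ℕ} (hN : 1 ≤ N) :
    ∑ n ∈ Finset.Ioc 0 N, (1 : ArithmeticFunction R) n = 1 := by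
  simp [ArithmeticFunction.one_apply, Nat.one_le_iff_ne_zero.1 hN]

lemma sum_moebius_mul_natDiv {N : ℕ} (hN : 1 ≤ N) :
    ∑ n ∈ Finset.Ioc 0 N, (μ n : ℝ) * (N / n : ℕ) = 1 := by
  have h := ArithmeticFunction.sum_Ioc_mul_zeta_eq_sum μ N
  rw [ArithmeticFunction.moebius_mul_coe_zeta, sum_Ioc_one_apply hN] at h
  have hcast := congrArg (Int.cast : ℤ → ℝ) h.symm
  push_cast at hcast
  exact hcast

/-- The arithmetic function `n ↦ 1 / n`. -/
def invArith : ArithmeticFunction ℝ := ⟨fun n => (n : ℝ)⁻¹, by simp⟩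

lemma invArith_apply (n : ℕ) : invArith n = (n : ℝ)⁻¹ := rfl

lemma isMultiplicative_invArith : invArith.IsMultiplicative := by
  rw [ArithmeticFunction.IsMultiplicative.iff_ne_zero]
  exact ⟨by simp [invArith_apply], fun _ _ _ => by simp [invArith_apply, mul_comm]⟩

lemma pmul_moebius_invArith_mul_invArith :
    (((μ : ArithmeticFunction ℝ).pmul invArith) * invArith : ArithmeticFunction ℝ) = 1 := by
  ext n
  have hterm : ∀ x ∈ n.divisorsAntidiagonal,
      ((μ : ArithmeticFunction ℝ).pmul invArith) x.1 * invArith x.2 = (μ x.1 : ℝ) * (n : ℝ)⁻¹ := by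
    intro x hx
    rw [← (Nat.mem_divisorsAntidiagonal.1 hx).1]
    simp [invArith_apply, mul_assoc, mul_comm (x.1 : ℝ)⁻¹]
  have hμ : ∑ x ∈ n.divisorsAntidiagonal, (μ x.1 : ℝ) = (1 : ArithmeticFunction ℝ) n := by
    rw [← ArithmeticFunction.coe_moebius_mul_coe_zeta, ArithmeticFunction.coe_mul_zeta_apply,
      Nat.sum_divisorsAntidiagonal (f := fun i _ => (μ i : ℝ))]
    rfl
  rw [ArithmeticFunction.mul_apply, Finset.sum_congr rfl hterm, ← Finset.sum_mul, hμ,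
    ArithmeticFunction.one_apply]
  split_ifs with h <;> simp [h]

lemma sum_moebius_div_mul_harmonic {N : ℕ} (hN : 1 ≤ N) :
    ∑ n ∈ Finset.Ioc 0 N, (μ n : ℝ) / n * (harmonic (N / n) : ℝ) = 1 := by
  have h := ArithmeticFunction.sum_Ioc_mul_eq_sum_sum
    ((μ : ArithmeticFunction ℝ).pmul invArith) invArith N
  rw [pmul_moebius_invArith_mul_invArith, sum_Ioc_one_apply hN] at h
  rw [h]
  refine Finset.sum_congr rfl fun n _ => ?_
  rw [harmonic_eq_sum_Icc]
  simp [invArith_apply, div_eq_mul_inv, ← Finset.Icc_add_one_left_eq_Ioc]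

lemma abs_div_sub_natDiv_floor_le_one {x : ℝ} (hx : 0 ≤ x) (n : ℕ) :
    |x / n - (⌊x⌋₊ / n : ℕ)| ≤ 1 := by
  rw [← Nat.floor_div_natCast, abs_le]
  have hle := Nat.floor_le (a := x / n) (by positivity)
  have hlt := Nat.lt_floor_add_one (x / n)
  constructor <;> linarith

lemma abs_sum_moebius_div_le {x : ℝ} (hx : 1 ≤ x) :
    |∑ n ∈ Finset.Ioc 0 ⌊x⌋₊, (μ n : ℝ) / n| ≤ 2 := by
  set S := ∑ n ∈ Finset.Ioc 0 ⌊x⌋₊, (μ n : ℝ) / n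
  have hdiff : x * S - 1 = ∑ n ∈ Finset.Ioc 0 ⌊x⌋₊, (μ n : ℝ) * (x / n - (⌊x⌋₊ / n : ℕ)) := by
    rw [← sum_moebius_mul_natDiv ((Nat.one_le_floor_iff x).2 hx), Finset.mul_sum,
      ← Finset.sum_sub_distrib]
    exact Finset.sum_congr rfl fun _ _ => by ring
  have hbound : |x * S - 1| ≤ x := by
    calc |x * S - 1| ≤ ∑ _n ∈ Finset.Ioc 0 ⌊x⌋₊, (1 : ℝ) := by
          rw [hdiff]
          refine (Finset.abs_sum_le_sum_abs _ _).trans (Finset.sum_le_sum fun n _ => ?_)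
          rw [abs_mul]
          exact mul_le_one₀ (abs_moebius_cast_le_one n) (abs_nonneg _)
            (abs_div_sub_natDiv_floor_le_one (by linarith) n)
      _ = ⌊x⌋₊ := by simp
      _ ≤ x := Nat.floor_le (by linarith)
  rw [abs_le] at hbound ⊢
  constructor <;> nlinarith

lemma abs_harmonic_floor_sub_log_sub_eulerMascheroni_le {z : ℝ} (hz : 1 ≤ z) :
    |(harmonic ⌊z⌋₊ : ℝ) - Real.log z - Real.eulerMascheroniConstant| ≤ 2 / z := by
  set n := ⌊z⌋₊
  have hn : 1 ≤ n := (Nat.one_le_floor_iff z).2 hz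
  have hn' : (1 : ℝ) ≤ n := by exact_mod_cast hn
  have hlower := Real.eulerMascheroniSeq_lt_eulerMascheroniConstant n
  have hupper := Real.eulerMascheroniConstant_lt_eulerMascheroniSeq' n
  rw [Real.eulerMascheroniSeq] at hlower
  rw [Real.eulerMascheroniSeq', if_neg (by lia)] at hupper
  have hnz : (n : ℝ) ≤ z := Nat.floor_le (by linarith)
  have hzn : z < n + 1 := Nat.lt_floor_add_one z
  have hlog_le : Real.log n ≤ Real.log z := Real.log_le_log (by linarith) hnz
  have hle_log : Real.log z ≤ Real.log (n + 1) := Real.log_le_log (by linarith) hzn.le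
  have hlog_gap : Real.log (n + 1) - Real.log n ≤ 2 / z := by
    rw [← Real.log_div (by linarith) (by linarith)]
    refine (Real.log_le_sub_one_of_pos (by positivity)).trans ?_
    rw [div_sub_one (by linarith), add_sub_cancel_left,
      div_le_div_iff₀ (by linarith) (by linarith)]
    linarith
  rw [abs_le]
  constructor <;> linarith

/-- The logarithmically weighted Möbius sum `Σ_{n ≤ x, (n, q) = 1} μ(n) log(x / n) / n`. -/
def logMoebiusSum (q : ℕ) (x : ℝ) : ℝ :=
  ∑ n ∈ Finset.Ioc 0 ⌊x⌋₊ with n.Coprime q, (μ n : ℝ) / n * Real.log (x / n)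

lemma logMoebiusSum_of_lt_one (q : ℕ) {x : ℝ} (hx : x < 1) : logMoebiusSum q x = 0 := by
  simp [logMoebiusSum, Nat.floor_eq_zero.2 hx]

lemma abs_sum_moebius_div_mul_harmonic_error_le {x : ℝ} (hx : 1 ≤ x) :
    |∑ n ∈ Finset.Ioc 0 ⌊x⌋₊, (μ n : ℝ) / n *
      ((harmonic (⌊x⌋₊ / n) : ℝ) - Real.log (x / n) - Real.eulerMascheroniConstant)| ≤ 2 := by
  calc _ ≤ ∑ n ∈ Finset.Ioc 0 ⌊x⌋₊, 2 / x := by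
        refine (Finset.abs_sum_le_sum_abs _ _).trans (Finset.sum_le_sum fun n hn => ?_)
        obtain ⟨hn0, hnx⟩ := Finset.mem_Ioc.1 hn
        have hn0' : (0 : ℝ) < n := by exact_mod_cast hn0
        have hnx' : (n : ℝ) ≤ x := (Nat.le_floor_iff (by linarith)).1 hnx
        have herr := abs_harmonic_floor_sub_log_sub_eulerMascheroni_le
          ((one_le_div hn0').2 hnx')
        rw [Nat.floor_div_natCast] at herr
        rw [abs_mul, abs_div, Nat.abs_cast]
        calc _ ≤ 1 / n * (2 / (x / n)) := by
              gcongr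
              exact abs_moebius_cast_le_one n
          _ = 2 / x := by field_simp
    _ = ⌊x⌋₊ * (2 / x) := by simp
    _ ≤ x * (2 / x) := by gcongr; exact Nat.floor_le (by linarith)
    _ = 2 := by field_simp

lemma abs_logMoebiusSum_one_le (x : ℝ) : |logMoebiusSum 1 x| ≤ 5 := by
  rcases lt_or_ge x 1 with hx | hx
  · simp [logMoebiusSum_of_lt_one 1 hx]
  set γ := Real.eulerMascheroniConstant
  set S := ∑ n ∈ Finset.Ioc 0 ⌊x⌋₊, (μ n : ℝ) / n with hS
  set E := ∑ n ∈ Finset.Ioc 0 ⌊x⌋₊, (μ n : ℝ) / n *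
    ((harmonic (⌊x⌋₊ / n) : ℝ) - Real.log (x / n) - γ) with hE
  have hdecomp : logMoebiusSum 1 x = 1 - γ * S - E := by
    rw [← sum_moebius_div_mul_harmonic ((Nat.one_le_floor_iff x).2 hx), hS, hE, Finset.mul_sum,
      ← Finset.sum_sub_distrib, ← Finset.sum_sub_distrib, logMoebiusSum]
    simp only [Nat.coprime_one_right_eq_true, Finset.filter_true]
    exact Finset.sum_congr rfl fun n _ => by ring
  have hS2 : |S| ≤ 2 := abs_sum_moebius_div_le hx
  have hE2 : |E| ≤ 2 := abs_sum_moebius_div_mul_harmonic_error_le hx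
  have hγ0 : 1 / 2 < γ := Real.one_half_lt_eulerMascheroniConstant
  have hγ1 : γ < 2 / 3 := Real.eulerMascheroniConstant_lt_two_thirds
  rw [hdecomp]
  rw [abs_le] at hS2 hE2 ⊢
  constructor <;> nlinarith

lemma logMoebiusSum_prime_mul_of_dvd {p q : ℕ} (hpq : p ∣ q) (x : ℝ) :
    logMoebiusSum (p * q) x = logMoebiusSum q x := by
  have hcop : ∀ n : ℕ, n.Coprime (p * q) ↔ n.Coprime q := fun n => by
    rw [Nat.coprime_mul_iff_right]
    exact ⟨And.right, fun h => ⟨h.coprime_dvd_right hpq, h⟩⟩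
  simp only [logMoebiusSum, hcop]

lemma sum_multiples_logMoebiusSum {p q : ℕ} (hp : p.Prime) (hpq : ¬ p ∣ q) (x : ℝ) :
    ∑ n ∈ Finset.Ioc 0 ⌊x⌋₊ with p ∣ n,
        (if n.Coprime q then (μ n : ℝ) / n * Real.log (x / n) else 0) =
      -(1 / p * logMoebiusSum (p * q) (x / p)) := by
  have hp0 : (0 : ℝ) < p := by exact_mod_cast hp.pos
  have hcop : p.Coprime q := hp.coprime_iff_not_dvd.2 hpq
  rw [sum_Ioc_filter_dvd hp.pos, logMoebiusSum, Nat.floor_div_natCast, Finset.sum_filter,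
    Finset.mul_sum, ← Finset.sum_neg_distrib]
  refine Finset.sum_congr rfl fun i _ => ?_
  have hiff₁ : (p * i).Coprime q ↔ i.Coprime q := by
    rw [Nat.coprime_mul_iff_left, and_iff_right hcop]
  have hiff₂ : i.Coprime (p * q) ↔ i.Coprime p ∧ i.Coprime q := Nat.coprime_mul_iff_right
  rw [moebius_prime_mul hp, if_congr hiff₁ rfl rfl, if_congr hiff₂ rfl rfl]
  by_cases hip : i.Coprime p <;> by_cases hiq : i.Coprime q
  · rw [if_pos hiq, if_pos hip, if_pos ⟨hip, hiq⟩, div_div x]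
    push_cast
    field_simp
  all_goals simp [hip, hiq]

lemma logMoebiusSum_prime_mul_of_not_dvd {p q : ℕ} (hp : p.Prime) (hpq : ¬ p ∣ q) (x : ℝ) :
    logMoebiusSum (p * q) x = logMoebiusSum q x + 1 / p * logMoebiusSum (p * q) (x / p) := by
  have hsplit : logMoebiusSum q x = logMoebiusSum (p * q) x +
      ∑ n ∈ Finset.Ioc 0 ⌊x⌋₊ with p ∣ n,
        (if n.Coprime q then (μ n : ℝ) / n * Real.log (x / n) else 0) := by
    simp only [logMoebiusSum, Finset.sum_filter, ← Finset.sum_add_distrib]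
    refine Finset.sum_congr rfl fun n _ => ?_
    have hiff : n.Coprime (p * q) ↔ ¬ p ∣ n ∧ n.Coprime q := by
      rw [Nat.coprime_mul_iff_right, Nat.coprime_comm, hp.coprime_iff_not_dvd]
    rw [if_congr hiff rfl rfl]
    by_cases hpn : p ∣ n <;> simp [hpn]
  rw [sum_multiples_logMoebiusSum hp hpq] at hsplit
  linarith

/-- The ratio `q / φ(q)`, as a product over the primes dividing `q`. -/
def totientRatio (q : ℕ) : ℝ := ∏ p ∈ q.primeFactors, (1 - 1 / (p : ℝ))⁻¹

lemma one_sub_one_div_prime_pos {p : ℕ} (hp : p.Prime) : (0 : ℝ) < 1 - 1 / p := by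
  have hp1 : (1 : ℝ) < p := by exact_mod_cast hp.one_lt
  rw [sub_pos, div_lt_one (by linarith)]
  exact hp1

lemma one_le_totientRatio (q : ℕ) : 1 ≤ totientRatio q := by
  refine Finset.prod_induction _ (1 ≤ ·) (fun _ _ => one_le_mul_of_one_le_of_one_le) le_rfl ?_
  intro p hp
  rw [one_le_inv₀ (one_sub_one_div_prime_pos (Nat.prime_of_mem_primeFactors hp))]
  have : (0 : ℝ) ≤ 1 / p := by positivity
  linarith

lemma totientRatio_prime_mul_of_dvd {p q : ℕ} (hp : p.Prime) (hq : q ≠ 0) (hpq : p ∣ q) :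
    totientRatio (p * q) = totientRatio q := by
  rw [totientRatio, Nat.primeFactors_mul hp.ne_zero hq, hp.primeFactors,
    Finset.union_eq_right.2 (by simp [hp, hpq, hq]), totientRatio]

lemma totientRatio_prime_mul_of_not_dvd {p q : ℕ} (hp : p.Prime) (hq : q ≠ 0) (hpq : ¬ p ∣ q) :
    totientRatio (p * q) = (1 - 1 / (p : ℝ))⁻¹ * totientRatio q := by
  rw [totientRatio, Nat.primeFactors_mul hp.ne_zero hq, hp.primeFactors,
    Finset.prod_union (by simp [hpq]), Finset.prod_singleton, totientRatio]

-- Iterating the recursion in `x / p` costs a geometric factor `(1 - 1 / p)⁻¹`.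
lemma abs_logMoebiusSum_prime_mul_le {p q : ℕ} (hp : p.Prime) (hpq : ¬ p ∣ q) {B : ℝ} (hB : 0 ≤ B)
    (h : ∀ x, |logMoebiusSum q x| ≤ B) (x : ℝ) :
    |logMoebiusSum (p * q) x| ≤ (1 - 1 / (p : ℝ))⁻¹ * B := by
  have hp1 := one_sub_one_div_prime_pos hp
  induction hn : ⌊x⌋₊ using Nat.strong_induction_on generalizing x with
  | _ n ih =>
    rcases lt_or_ge x 1 with hx | hx
    · rw [logMoebiusSum_of_lt_one _ hx, abs_zero]
      positivity
    have hlt : ⌊x / p⌋₊ < n := by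
      rw [Nat.floor_div_natCast, ← hn]
      exact Nat.div_lt_self (Nat.floor_pos.2 hx) hp.one_lt
    have hrec := ih _ hlt _ rfl
    rw [logMoebiusSum_prime_mul_of_not_dvd hp hpq]
    calc _ ≤ |logMoebiusSum q x| + 1 / p * |logMoebiusSum (p * q) (x / p)| := by
          refine (abs_add_le _ _).trans_eq ?_
          rw [abs_mul, abs_of_nonneg (a := 1 / (p : ℝ)) (by positivity)]
      _ ≤ B + 1 / p * ((1 - 1 / (p : ℝ))⁻¹ * B) := by
          gcongr
          exact h x
      _ = (1 - 1 / (p : ℝ)) * ((1 - 1 / (p : ℝ))⁻¹ * B) + 1 / p * ((1 - 1 / (p : ℝ))⁻¹ * B) := by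
          rw [mul_inv_cancel_left₀ hp1.ne']
      _ = (1 - 1 / (p : ℝ))⁻¹ * B := by ring

lemma abs_logMoebiusSum_le {q : ℕ} (hq : q ≠ 0) (x : ℝ) :
    |logMoebiusSum q x| ≤ 5 * totientRatio q := by
  induction q using induction_on_primes generalizing x with
  | zero => exact absurd rfl hq
  | one => simpa [totientRatio] using abs_logMoebiusSum_one_le x
  | prime_mul p q hp ih =>
    have hq' : q ≠ 0 := right_ne_zero_of_mul hq
    by_cases hpq : p ∣ q
    · rw [logMoebiusSum_prime_mul_of_dvd hpq, totientRatio_prime_mul_of_dvd hp hq' hpq]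
      exact ih hq' x
    · rw [totientRatio_prime_mul_of_not_dvd hp hq' hpq, mul_left_comm]
      exact abs_logMoebiusSum_prime_mul_le hp hpq
        (by linarith [one_le_totientRatio q]) (ih hq') x

end MoebiusSums

/-! ### Smoothly weighted Möbius sums -/

section SmoothMoebiusSums

open scoped ArithmeticFunction.Moebius

section Taylor

variable {E : Type*} [NormedAddCommGroup E] [NormedSpace ℝ E]

lemma integral_max_sub_smul_eq {f : ℝ → E} (hf : Continuous f) {t : ℝ} (ht₀ : 0 ≤ t)
    (ht₁ : t ≤ 1) :
    ∫ s in (0 : ℝ)..1, max (t - s) 0 • f s = ∫ s in (0 : ℝ)..t, (t - s) • f s := by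
  have hcont : Continuous fun s : ℝ => max (t - s) 0 • f s := by fun_prop
  have hright : ∫ s in t..1, max (t - s) 0 • f s = ∫ _s in t..1, (0 : E) := by
    refine intervalIntegral.integral_congr fun s hs => ?_
    rw [Set.uIcc_of_le ht₁] at hs
    simp [max_eq_right (sub_nonpos.2 hs.1)]
  have hleft : ∫ s in (0 : ℝ)..t, max (t - s) 0 • f s = ∫ s in (0 : ℝ)..t, (t - s) • f s := by
    refine intervalIntegral.integral_congr fun s hs => ?_
    rw [Set.uIcc_of_le ht₀] at hs
    simp [max_eq_left (sub_nonneg.2 hs.2)]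
  rw [← intervalIntegral.integral_add_adjacent_intervals (b := t)
    (hcont.intervalIntegrable _ _) (hcont.intervalIntegrable _ _), hleft, hright]
  simp

lemma continuous_deriv_deriv_of_contDiff_two {g : ℝ → E} (hg : ContDiff ℝ 2 g) :
    Continuous (deriv (deriv g)) :=
  ((contDiff_succ_iff_deriv.1 hg).2.2 : ContDiff ℝ 1 (deriv g)).continuous_deriv le_rfl

lemma taylor_integral_remainder_of_map_zero [CompleteSpace E] {g : ℝ → E} (hg : ContDiff ℝ 2 g)
    (hg0 : g 0 = 0) {t : ℝ} (ht₀ : 0 ≤ t) (ht₁ : t ≤ 1) :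
    g t = t • deriv g 0 + ∫ s in (0 : ℝ)..1, max (t - s) 0 • deriv (deriv g) s := by
  have hg' : ContDiff ℝ 1 (deriv g) := (contDiff_succ_iff_deriv.1 hg).2.2
  have hcont := continuous_deriv_deriv_of_contDiff_two hg
  have hFTC : ∫ s in (0 : ℝ)..t, (t - s) • deriv (deriv g) s =
      ((t - t) • deriv g t + g t) - ((t - 0) • deriv g 0 + g 0) := by
    refine intervalIntegral.integral_eq_sub_of_hasDerivAt
      (f := fun s => (t - s) • deriv g s + g s) (fun s _ => ?_) ?_
    · have hlin : HasDerivAt (fun s : ℝ => t - s) (-1) s := (hasDerivAt_id s).const_sub t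
      have hd1 := (hg.differentiable two_ne_zero s).hasDerivAt
      have hd2 := (hg'.differentiable one_ne_zero s).hasDerivAt
      exact ((hlin.smul hd2).add hd1).congr_deriv (by simp)
    · exact Continuous.intervalIntegrable (by fun_prop) _ _
  rw [integral_max_sub_smul_eq hcont ht₀ ht₁, hFTC, hg0]
  simp

end Taylor

lemma log_mul_exp_neg_div_natCast {X : ℝ} (hX : 0 < X) (c : ℝ) {j : ℕ} (hj : 0 < j) :
    Real.log (X * Real.exp (-c) / j) = Real.log (X / j) - c := by
  have hj' : (0 : ℝ) < j := by exact_mod_cast hj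
  rw [mul_div_right_comm, Real.log_mul (div_pos hX hj').ne' (Real.exp_ne_zero _), Real.log_exp,
    sub_eq_add_neg]

lemma sum_moebius_div_mul_max_log_sub {X Y s : ℝ} (q : ℕ) (hY : 0 < Y) (hX : 0 < X)
    (hs : 0 ≤ s) :
    ∑ j ∈ Finset.Ioc 0 ⌊X⌋₊ with j.Coprime q, (μ j : ℝ) / j * max (Real.log (X / j) / Y - s) 0 =
      1 / Y * logMoebiusSum q (X * Real.exp (-(s * Y))) := by
  set X' := X * Real.exp (-(s * Y)) with hX'
  have hX'pos : 0 < X' := by positivity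
  have hX'X : X' ≤ X := mul_le_of_le_one_right hX.le (Real.exp_le_one_iff.2 (by nlinarith))
  have hsub : (Finset.Ioc 0 ⌊X'⌋₊).filter (·.Coprime q) ⊆
      (Finset.Ioc 0 ⌊X⌋₊).filter (·.Coprime q) :=
    Finset.filter_subset_filter _ (Finset.Ioc_subset_Ioc_right (Nat.floor_le_floor hX'X))
  rw [logMoebiusSum, Finset.mul_sum, ← Finset.sum_subset hsub]
  · refine Finset.sum_congr rfl fun j hj => ?_
    obtain ⟨hj0, hjX⟩ := Finset.mem_Ioc.1 (Finset.mem_filter.1 hj).1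
    have hj' : (0 : ℝ) < j := by exact_mod_cast hj0
    have hlog : 0 ≤ Real.log (X' / j) :=
      Real.log_nonneg ((one_le_div hj').2 ((Nat.le_floor_iff hX'pos.le).1 hjX))
    rw [hX', log_mul_exp_neg_div_natCast hX _ hj0] at hlog ⊢
    rw [max_eq_left (by rw [sub_nonneg, le_div_iff₀ hY]; linarith)]
    field_simp
  · intro j hj hj'
    obtain ⟨hjX, hjq⟩ := Finset.mem_filter.1 hj
    have hj0 : 0 < j := (Finset.mem_Ioc.1 hjX).1
    have hX'j : X' < j := by
      by_contra! hle
      exact hj' (Finset.mem_filter.2 ⟨Finset.mem_Ioc.2 ⟨hj0, Nat.le_floor hle⟩, hjq⟩)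
    have hlog : Real.log (X' / j) ≤ 0 :=
      Real.log_nonpos (by positivity) (div_le_one_of_le₀ hX'j.le (by positivity))
    rw [hX', log_mul_exp_neg_div_natCast hX _ hj0] at hlog
    rw [max_eq_right (by rw [sub_nonpos, div_le_iff₀ hY]; linarith), mul_zero]

/-- The smooth weights of the mollifiers considered: `C²` functions vanishing at `0`, where `A`
controls the size of the first two derivatives. -/
structure IsMollifierWeight (g : ℝ → ℂ) (A : ℝ) : Prop where
  contDiff : ContDiff ℝ 2 g
  map_zero : g 0 = 0
  norm_deriv_zero_le : ‖deriv g 0‖ ≤ A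
  norm_deriv_deriv_le : ∀ v ∈ Set.Icc (0 : ℝ) 1, ‖deriv (deriv g) v‖ ≤ A

lemma exists_isMollifierWeight {g : ℝ → ℂ} (hg : ContDiff ℝ 2 g) (hg0 : g 0 = 0) :
    ∃ A, IsMollifierWeight g A := by
  obtain ⟨B, hB⟩ := isCompact_Icc.exists_bound_of_continuousOn
    (continuous_deriv_deriv_of_contDiff_two hg).continuousOn
  exact ⟨max ‖deriv g 0‖ B, hg, hg0, le_max_left _ _,
    fun v hv => (hB v hv).trans (le_max_right _ _)⟩

namespace IsMollifierWeight

variable {g : ℝ → ℂ} {A : ℝ}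

lemma nonneg (hg : IsMollifierWeight g A) : 0 ≤ A :=
  (norm_nonneg _).trans hg.norm_deriv_zero_le

lemma sum_moebius_div_smul_eq (hg : IsMollifierWeight g A) {X Y : ℝ} (hY : 0 < Y) (hX : 1 ≤ X)
    (hXY : Real.log X ≤ Y) (q : ℕ) :
    ∑ j ∈ Finset.Ioc 0 ⌊X⌋₊ with j.Coprime q, ((μ j : ℝ) / j) • g (Real.log (X / j) / Y) =
      (1 / Y * logMoebiusSum q X) • deriv g 0 +
        ∫ s in (0 : ℝ)..1,
          (1 / Y * logMoebiusSum q (X * Real.exp (-(s * Y)))) • deriv (deriv g) s := by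
  have hcont := continuous_deriv_deriv_of_contDiff_two hg.contDiff
  have hterm : ∀ j ∈ (Finset.Ioc 0 ⌊X⌋₊).filter (·.Coprime q),
      ((μ j : ℝ) / j) • g (Real.log (X / j) / Y) =
      ((μ j : ℝ) / j * max (Real.log (X / j) / Y - 0) 0) • deriv g 0 +
      ∫ s in (0 : ℝ)..1,
        ((μ j : ℝ) / j * max (Real.log (X / j) / Y - s) 0) • deriv (deriv g) s := by
    intro j hj
    obtain ⟨hj0, hjX⟩ := Finset.mem_Ioc.1 (Finset.mem_filter.1 hj).1
    have hj1 : (1 : ℝ) ≤ j := by exact_mod_cast hj0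
    have hjX' : (j : ℝ) ≤ X := (Nat.le_floor_iff (by linarith)).1 hjX
    have ht₀ : 0 ≤ Real.log (X / j) / Y :=
      div_nonneg (Real.log_nonneg ((one_le_div (by linarith)).2 hjX')) hY.le
    have ht₁ : Real.log (X / j) / Y ≤ 1 := (div_le_one hY).2 <|
      (Real.log_le_log (by positivity) (div_le_self (by linarith) hj1)).trans hXY
    rw [taylor_integral_remainder_of_map_zero hg.contDiff hg.map_zero ht₀ ht₁, sub_zero,
      max_eq_left ht₀, smul_add, smul_smul, ← intervalIntegral.integral_smul]
    simp only [smul_smul]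
  rw [Finset.sum_congr rfl hterm, Finset.sum_add_distrib, ← Finset.sum_smul,
    sum_moebius_div_mul_max_log_sub q hY (by linarith) le_rfl,
    ← intervalIntegral.integral_finsetSum
      fun _ _ => Continuous.intervalIntegrable (by fun_prop) _ _]
  congr 1
  · simp
  · refine intervalIntegral.integral_congr fun s hs => ?_
    rw [Set.uIcc_of_le zero_le_one] at hs
    rw [← Finset.sum_smul, sum_moebius_div_mul_max_log_sub q hY (by linarith) hs.1]

lemma norm_sum_moebius_div_smul_le (hg : IsMollifierWeight g A) {X Y : ℝ} (hY : 0 < Y)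
    (hX : 1 ≤ X) (hXY : Real.log X ≤ Y) {q : ℕ} (hq : q ≠ 0) :
    ‖∑ j ∈ Finset.Ioc 0 ⌊X⌋₊ with j.Coprime q, ((μ j : ℝ) / j) • g (Real.log (X / j) / Y)‖ ≤
      10 * A * totientRatio q / Y := by
  have hR : ∀ x, ‖1 / Y * logMoebiusSum q x‖ ≤ 5 * totientRatio q / Y := by
    intro x
    rw [norm_mul, Real.norm_eq_abs, Real.norm_eq_abs, abs_of_pos (by positivity), one_div,
      inv_mul_eq_div]
    gcongr
    exact abs_logMoebiusSum_le hq x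
  have hR0 : 0 ≤ 5 * totientRatio q / Y := (norm_nonneg _).trans (hR 0)
  have hlinear : ‖(1 / Y * logMoebiusSum q X) • deriv g 0‖ ≤ 5 * totientRatio q / Y * A := by
    rw [norm_smul]
    exact mul_le_mul (hR X) hg.norm_deriv_zero_le (norm_nonneg _) hR0
  have hremainder : ‖∫ s in (0 : ℝ)..1,
      (1 / Y * logMoebiusSum q (X * Real.exp (-(s * Y)))) • deriv (deriv g) s‖ ≤
      5 * totientRatio q / Y * A := by
    refine (intervalIntegral.norm_integral_le_of_norm_le_const
      (C := 5 * totientRatio q / Y * A) fun s hs => ?_).trans (by simp)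
    rw [Set.uIoc_of_le zero_le_one] at hs
    rw [norm_smul]
    exact mul_le_mul (hR _) (hg.norm_deriv_deriv_le s ⟨hs.1.le, hs.2⟩) (norm_nonneg _) hR0
  rw [hg.sum_moebius_div_smul_eq hY hX hXY]
  calc _ ≤ 5 * totientRatio q / Y * A + 5 * totientRatio q / Y * A :=
        (norm_add_le _ _).trans (add_le_add hlinear hremainder)
    _ = _ := by ring

end IsMollifierWeight

end SmoothMoebiusSums

/-! ### Averages of the totient ratio -/

section TotientRatioAverages

/-- The arithmetic function `n ↦ n ^ (-1 / 2)`, used to majorize powers of `totientRatio`. -/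
def invSqrtArith : ArithmeticFunction ℝ := ⟨fun n => (√n)⁻¹, by simp⟩

lemma invSqrtArith_apply (n : ℕ) : invSqrtArith n = (√n)⁻¹ := rfl

lemma isMultiplicative_invSqrtArith : invSqrtArith.IsMultiplicative := by
  rw [ArithmeticFunction.IsMultiplicative.iff_ne_zero]
  refine ⟨by simp [invSqrtArith_apply], fun {m n} _ _ _ => ?_⟩
  simp [invSqrtArith_apply, mul_comm]

lemma inv_one_sub_one_div_prime_pow_three_le {p : ℕ} (hp : p.Prime) :
    ((1 - 1 / (p : ℝ))⁻¹) ^ 3 ≤ (if p < 16 then 8 else 1) * (1 + (√p)⁻¹) := by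
  have hpos := one_sub_one_div_prime_pos hp
  set x := (√p)⁻¹ with hx
  have hx0 : 0 ≤ x := by positivity
  split_ifs with hp16
  · have hhalf : 1 / (p : ℝ) ≤ 1 / 2 := by
      gcongr
      exact_mod_cast hp.two_le
    have hinv : (1 - 1 / (p : ℝ))⁻¹ ≤ 2 := by
      rw [inv_le_comm₀ hpos two_pos]
      linarith
    calc ((1 - 1 / (p : ℝ))⁻¹) ^ 3 ≤ 2 ^ 3 := by gcongr
      _ ≤ 8 * (1 + x) := by linarith
  · have hx_sq : 1 / (p : ℝ) = x ^ 2 := by rw [hx, inv_pow, Real.sq_sqrt p.cast_nonneg, one_div]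
    have hx_le : x ≤ 1 / 4 := by
      rw [hx, one_div]
      refine inv_anti₀ (by norm_num) (Real.le_sqrt_of_sq_le ?_)
      exact_mod_cast (by omega : 4 ^ 2 ≤ p)
    rw [hx_sq] at hpos ⊢
    rw [inv_pow, inv_le_iff_one_le_mul₀ (by positivity)]
    have hbernoulli : 1 - 3 * x ^ 2 ≤ (1 - x ^ 2) ^ 3 := by nlinarith [pow_nonneg hx0 4]
    have hgain : 1 ≤ (1 + x) * (1 - 3 * x ^ 2) := by nlinarith
    nlinarith

lemma prod_ite_lt_sixteen_le (s : Finset ℕ) :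
    ∏ p ∈ s, (if p < 16 then (8 : ℝ) else 1) ≤ 8 ^ 16 := by
  rw [Finset.prod_ite, Finset.prod_const, Finset.prod_const_one, mul_one]
  refine pow_le_pow_right₀ (by norm_num) ?_
  calc (s.filter (· < 16)).card ≤ (Finset.range 16).card :=
        Finset.card_le_card fun p => by simp
    _ = 16 := Finset.card_range 16

lemma totientRatio_pow_three_le {q : ℕ} (hq : Squarefree q) :
    totientRatio q ^ 3 ≤ 8 ^ 16 * ∑ d ∈ q.divisors, invSqrtArith d := by
  rw [← isMultiplicative_invSqrtArith.prodPrimeFactors_one_add_of_squarefree hq, totientRatio,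
    ← Finset.prod_pow]
  calc ∏ p ∈ q.primeFactors, ((1 - 1 / (p : ℝ))⁻¹) ^ 3
      ≤ ∏ p ∈ q.primeFactors, ((if p < 16 then 8 else 1) * (1 + (√p)⁻¹)) := by
        refine Finset.prod_le_prod (fun p hp => ?_) fun p hp =>
          inv_one_sub_one_div_prime_pow_three_le (Nat.prime_of_mem_primeFactors hp)
        have := one_sub_one_div_prime_pos (Nat.prime_of_mem_primeFactors hp)
        positivity
    _ = (∏ p ∈ q.primeFactors, (if p < 16 then 8 else 1)) *
          ∏ p ∈ q.primeFactors, (1 + (√p)⁻¹) := Finset.prod_mul_distrib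
    _ ≤ 8 ^ 16 * ∏ p ∈ q.primeFactors, (1 + invSqrtArith p) := by
        gcongr
        · exact prod_ite_lt_sixteen_le _
        · exact le_rfl

lemma sum_divisors_cast_le {q : ℕ} (hq : Squarefree q) :
    ∑ d ∈ q.divisors, (d : ℝ) ≤ q * totientRatio q := by
  have hflip : ∑ d ∈ q.divisors, (d : ℝ) = q * ∑ d ∈ q.divisors, invArith d := by
    rw [← Nat.sum_div_divisors, Finset.mul_sum]
    refine Finset.sum_congr rfl fun d hd => ?_
    rw [Nat.cast_div (Nat.dvd_of_mem_divisors hd)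
      (Nat.cast_ne_zero.2 (Nat.pos_of_mem_divisors hd).ne'), invArith_apply, div_eq_mul_inv]
  rw [hflip, ← isMultiplicative_invArith.prodPrimeFactors_one_add_of_squarefree hq, totientRatio]
  gcongr with p hp
  · exact fun p _ => by rw [invArith_apply]; positivity
  · have hpos := one_sub_one_div_prime_pos (Nat.prime_of_mem_primeFactors hp)
    rw [invArith_apply, ← one_div, le_inv_comm₀ (by positivity) hpos, inv_eq_one_div,
      le_div_iff₀ (by positivity)]
    nlinarith [sq_nonneg (1 / (p : ℝ))]

lemma summable_inv_mul_inv_sqrt : Summable fun d : ℕ => (d : ℝ)⁻¹ * (√d)⁻¹ := by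
  refine (Real.summable_nat_rpow_inv.2 (by norm_num : (1 : ℝ) < 1 + 1 / 2)).congr fun d => ?_
  rw [Real.rpow_add_of_nonneg d.cast_nonneg zero_le_one (by norm_num), Real.rpow_one,
    ← Real.sqrt_eq_rpow, mul_inv]

lemma sum_Ioc_inv_le_one_add_log (N : ℕ) :
    ∑ m ∈ Finset.Ioc 0 N, (m : ℝ)⁻¹ ≤ 1 + Real.log N := by
  have hharmonic := harmonic_le_one_add_log N
  rw [harmonic_eq_sum_Icc] at hharmonic
  push_cast at hharmonic
  exact hharmonic

/-- The implied constant in the bound `∑ totientRatio q ^ 3 / q ≪ 1 + log N`. -/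
def totientRatioConst : ℝ := 8 ^ 16 * ∑' d : ℕ, (d : ℝ)⁻¹ * (√d)⁻¹

lemma totientRatioConst_nonneg : 0 ≤ totientRatioConst :=
  mul_nonneg (by norm_num) (tsum_nonneg fun d => by positivity)

lemma sum_divisors_invSqrtArith_div (q : ℕ) :
    (∑ d ∈ q.divisors, invSqrtArith d) / q =
      (ArithmeticFunction.pmul invArith invSqrtArith * invArith) q := by
  rw [ArithmeticFunction.mul_apply, Finset.sum_div,
    ← Nat.sum_divisorsAntidiagonal (f := fun i _ => invSqrtArith i / (q : ℝ))]
  refine Finset.sum_congr rfl fun x hx => ?_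
  rw [← (Nat.mem_divisorsAntidiagonal.1 hx).1, ArithmeticFunction.pmul_apply, invArith_apply,
    invArith_apply, Nat.cast_mul, div_eq_mul_inv, mul_inv]
  ring

lemma sum_totientRatio_pow_three_div_le (N : ℕ) :
    ∑ q ∈ Finset.Ioc 0 N with Squarefree q, totientRatio q ^ 3 / q ≤
      totientRatioConst * (1 + Real.log N) := by
  have : 0 ≤ Real.log N := Real.log_natCast_nonneg N
  calc ∑ q ∈ Finset.Ioc 0 N with Squarefree q, totientRatio q ^ 3 / q
      ≤ ∑ q ∈ Finset.Ioc 0 N with Squarefree q,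
          8 ^ 16 * ((∑ d ∈ q.divisors, invSqrtArith d) / q) := by
        refine Finset.sum_le_sum fun q hq => ?_
        rw [← mul_div_assoc]
        gcongr
        exact totientRatio_pow_three_le (Finset.mem_filter.1 hq).2
    _ ≤ ∑ q ∈ Finset.Ioc 0 N, 8 ^ 16 * ((∑ d ∈ q.divisors, invSqrtArith d) / q) := by
        refine Finset.sum_le_sum_of_subset_of_nonneg (Finset.filter_subset _ _) fun q _ _ => ?_
        have : ∀ d, 0 ≤ invSqrtArith d := fun d => by rw [invSqrtArith_apply]; positivity
        have := Finset.sum_nonneg fun d (_ : d ∈ q.divisors) => this d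
        positivity
    _ = 8 ^ 16 * ∑ d ∈ Finset.Ioc 0 N, (d : ℝ)⁻¹ * (√d)⁻¹ *
          ∑ m ∈ Finset.Ioc 0 (N / d), (m : ℝ)⁻¹ := by
        rw [← Finset.mul_sum]
        rw [Finset.sum_congr rfl fun q _ => sum_divisors_invSqrtArith_div q,
          ArithmeticFunction.sum_Ioc_mul_eq_sum_sum]
        rfl
    _ ≤ 8 ^ 16 * ∑ d ∈ Finset.Ioc 0 N, (d : ℝ)⁻¹ * (√d)⁻¹ * (1 + Real.log N) := by
        gcongr with d
        refine (Finset.sum_le_sum_of_subset_of_nonneg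
          (Finset.Ioc_subset_Ioc_right (Nat.div_le_self N d)) fun m _ _ => by positivity).trans
          (sum_Ioc_inv_le_one_add_log N)
    _ ≤ totientRatioConst * (1 + Real.log N) := by
        rw [← Finset.sum_mul, ← mul_assoc, totientRatioConst]
        gcongr
        exact summable_inv_mul_inv_sqrt.sum_le_tsum _ fun d _ => by positivity

end TotientRatioAverages

/-! ### Quadratic forms in the mollifier coefficients -/

section GcdForms

open scoped ArithmeticFunction.Moebius

variable {R : Type*} [CommRing R]

/-- The Dirichlet convolution of `μ` with `E`, so that `∑ d ∣ n, moebiusTransform E d = E n`. -/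
def moebiusTransform (E : ℕ → R) (q : ℕ) : R :=
  ∑ x ∈ q.divisorsAntidiagonal, (μ x.1 : R) * E x.2

lemma sum_divisors_moebiusTransform (E : ℕ → R) {n : ℕ} (hn : 0 < n) :
    ∑ d ∈ n.divisors, moebiusTransform E d = E n :=
  ArithmeticFunction.sum_eq_iff_sum_mul_moebius_eq.2 (fun _ _ => rfl) n hn

lemma divisors_gcd_eq_filter {N h k : ℕ} (hh : h ∈ Finset.Ioc 0 N) :
    (h.gcd k).divisors = {q ∈ Finset.Ioc 0 N | q ∣ h ∧ q ∣ k} := by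
  obtain ⟨hh0, hhN⟩ := Finset.mem_Ioc.1 hh
  ext q
  simp only [Nat.mem_divisors, Finset.mem_filter, Finset.mem_Ioc, Nat.dvd_gcd_iff]
  constructor
  · rintro ⟨hq, -⟩
    exact ⟨⟨Nat.pos_of_dvd_of_pos hq.1 hh0, (Nat.le_of_dvd hh0 hq.1).trans hhN⟩, hq⟩
  · rintro ⟨-, hq⟩
    exact ⟨hq, (Nat.gcd_pos_of_pos_left _ hh0).ne'⟩

lemma sum_sum_mul_gcd_eq (b c E : ℕ → R) (N : ℕ) :
    ∑ h ∈ Finset.Ioc 0 N, ∑ k ∈ Finset.Ioc 0 N, b h * c k * E (h.gcd k) =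
      ∑ q ∈ Finset.Ioc 0 N, moebiusTransform E q *
        ((∑ h ∈ Finset.Ioc 0 N with q ∣ h, b h) * ∑ k ∈ Finset.Ioc 0 N with q ∣ k, c k) := by
  have hterm : ∀ h ∈ Finset.Ioc 0 N, ∀ k ∈ Finset.Ioc 0 N, b h * c k * E (h.gcd k) =
      ∑ q ∈ Finset.Ioc 0 N,
        moebiusTransform E q * ((if q ∣ h then b h else 0) * if q ∣ k then c k else 0) := by
    intro h hh k _
    rw [← sum_divisors_moebiusTransform E
      (Nat.gcd_pos_of_pos_left k (Finset.mem_Ioc.1 hh).1), divisors_gcd_eq_filter hh,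
      Finset.sum_filter, Finset.mul_sum]
    refine Finset.sum_congr rfl fun q _ => ?_
    by_cases hqh : q ∣ h <;> by_cases hqk : q ∣ k <;> simp [hqh, hqk, mul_comm]
  rw [Finset.sum_congr rfl fun h hh => Finset.sum_congr rfl fun k hk => hterm h hh k hk,
    Finset.sum_congr rfl fun h _ => Finset.sum_comm, Finset.sum_comm]
  refine Finset.sum_congr rfl fun q _ => ?_
  rw [Finset.sum_filter, Finset.sum_filter, Finset.sum_mul_sum, Finset.mul_sum]
  exact Finset.sum_congr rfl fun h _ => (Finset.mul_sum _ _ _).symm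

lemma norm_moebiusTransform_le {E : ℕ → ℂ} {B : ℝ} (hB : 0 ≤ B) {q : ℕ} (hq : Squarefree q)
    (hE : ∀ d ∈ q.divisors, ‖E d‖ ≤ B * d) :
    ‖moebiusTransform E q‖ ≤ B * (q * totientRatio q) := by
  calc ‖moebiusTransform E q‖ ≤ ∑ x ∈ q.divisorsAntidiagonal, B * (x.2 : ℝ) := by
        refine (norm_sum_le _ _).trans (Finset.sum_le_sum fun x hx => ?_)
        rw [norm_mul, Complex.norm_intCast]
        exact (mul_le_of_le_one_left (norm_nonneg _) (abs_moebius_cast_le_one _)).trans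
          (hE _ (Nat.snd_mem_divisors_of_mem_antidiagonal hx))
    _ = B * ∑ d ∈ q.divisors, (d : ℝ) := by
        rw [← Finset.mul_sum, Nat.sum_divisorsAntidiagonal' (f := fun _ i => (i : ℝ))]
    _ ≤ B * (q * totientRatio q) := by
        gcongr
        exact sum_divisors_cast_le hq

end GcdForms

section MollifierCoefficients

open scoped ArithmeticFunction.Moebius

/-- The coefficients `μ(k) g(log (y / k) / log y)` of a mollifier of length `y` with smooth
weight `g`. -/
def mollifierCoeff (g : ℝ → ℂ) (y : ℝ) (k : ℕ) : ℂ :=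
  (μ k : ℂ) * g (Real.log (y / k) / Real.log y)

lemma mollifierCoeff_of_not_squarefree (g : ℝ → ℂ) (y : ℝ) {k : ℕ} (hk : ¬ Squarefree k) :
    mollifierCoeff g y k = 0 := by
  simp [mollifierCoeff, ArithmeticFunction.moebius_eq_zero_of_not_squarefree hk]

lemma sum_mollifierCoeff_div_of_not_squarefree (g : ℝ → ℂ) (y : ℝ) (N : ℕ) {q : ℕ}
    (hq : ¬ Squarefree q) :
    ∑ k ∈ Finset.Ioc 0 N with q ∣ k, mollifierCoeff g y k / k = 0 := by
  refine Finset.sum_eq_zero fun k hk => ?_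
  rw [mollifierCoeff_of_not_squarefree g y
    fun hsq => hq (hsq.squarefree_of_dvd (Finset.mem_filter.1 hk).2), zero_div]

lemma mollifierCoeff_mul_div (g : ℝ → ℂ) (y : ℝ) {q j : ℕ} (hj : 0 < j) :
    mollifierCoeff g y (q * j) / (q * j : ℕ) = (μ q : ℂ) / q *
      if j.Coprime q then ((μ j : ℝ) / j) • g (Real.log (y / q / j) / Real.log y) else 0 := by
  split_ifs with hjq
  · have hj' : (j : ℂ) ≠ 0 := Nat.cast_ne_zero.2 hj.ne'
    rw [mollifierCoeff, ArithmeticFunction.isMultiplicative_moebius.map_mul_of_coprime hjq.symm,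
      Complex.real_smul, div_div y]
    push_cast
    field_simp [hj']
  · rw [mollifierCoeff_of_not_squarefree, zero_div, mul_zero]
    exact fun hsq => hjq (Nat.coprime_of_squarefree_mul hsq).symm

lemma sum_mollifierCoeff_div_eq (g : ℝ → ℂ) (y : ℝ) {q : ℕ} (hq : 0 < q) :
    ∑ k ∈ Finset.Ioc 0 ⌊y⌋₊ with q ∣ k, mollifierCoeff g y k / k =
      (μ q : ℂ) / q * ∑ j ∈ Finset.Ioc 0 ⌊y / q⌋₊ with j.Coprime q,
        ((μ j : ℝ) / j) • g (Real.log (y / q / j) / Real.log y) := by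
  rw [sum_Ioc_filter_dvd hq, Nat.floor_div_natCast, Finset.mul_sum, Finset.sum_filter]
  refine Finset.sum_congr rfl fun j hj => ?_
  rw [mollifierCoeff_mul_div g y (Finset.mem_Ioc.1 hj).1, mul_ite, mul_zero]

variable {g : ℝ → ℂ} {A : ℝ}

lemma norm_sum_mollifierCoeff_div_le (hg : IsMollifierWeight g A) {y : ℝ} (hy : 1 < y) {q : ℕ}
    (hq : 0 < q) :
    ‖∑ k ∈ Finset.Ioc 0 ⌊y⌋₊ with q ∣ k, mollifierCoeff g y k / k‖ ≤
      10 * A * totientRatio q / (q * Real.log y) := by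
  have hY : 0 < Real.log y := Real.log_pos hy
  have hA := hg.nonneg
  have hratio := one_le_totientRatio q
  have hq1 : (1 : ℝ) ≤ q := by exact_mod_cast hq
  rw [sum_mollifierCoeff_div_eq g y hq, norm_mul]
  rcases lt_or_ge y q with hlt | hle
  · have hfloor : ⌊y / q⌋₊ = 0 := Nat.floor_eq_zero.2 ((div_lt_one (by linarith)).2 hlt)
    rw [hfloor, Finset.Ioc_self, Finset.filter_empty, Finset.sum_empty, norm_zero, mul_zero]
    positivity
  have hmoebius : ‖(μ q : ℂ) / q‖ ≤ 1 / q := by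
    rw [norm_div, Complex.norm_natCast, Complex.norm_intCast]
    gcongr
    exact abs_moebius_cast_le_one q
  have hsum := hg.norm_sum_moebius_div_smul_le hY ((one_le_div (by linarith)).2 hle)
    (Real.log_le_log (by positivity) (div_le_self (by linarith) hq1)) hq.ne'
  calc _ ≤ (1 / q : ℝ) * (10 * A * totientRatio q / Real.log y) :=
        mul_le_mul hmoebius hsum (norm_nonneg _) (by positivity)
    _ = 10 * A * totientRatio q / (q * Real.log y) := by field_simp

lemma norm_moebiusTransform_mul_sq_le (hg : IsMollifierWeight g A) {y : ℝ} (hy : 1 < y)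
    {E : ℕ → ℂ} {B : ℝ} (hB : 0 ≤ B) (hE : ∀ d ∈ Finset.Ioc 0 ⌊y⌋₊, ‖E d‖ ≤ B * d) {q : ℕ}
    (hq : q ∈ Finset.Ioc 0 ⌊y⌋₊) (hsq : Squarefree q) :
    ‖moebiusTransform E q‖ *
        ‖∑ k ∈ Finset.Ioc 0 ⌊y⌋₊ with q ∣ k, mollifierCoeff g y k / k‖ ^ 2 ≤
      100 * A ^ 2 * B / Real.log y ^ 2 * (totientRatio q ^ 3 / q) := by
  obtain ⟨hq0, hqN⟩ := Finset.mem_Ioc.1 hq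
  have : (0 : ℝ) < q := by exact_mod_cast hq0
  have hY : 0 < Real.log y := Real.log_pos hy
  have hratio := one_le_totientRatio q
  have htransform : ‖moebiusTransform E q‖ ≤ B * (q * totientRatio q) := by
    refine norm_moebiusTransform_le hB hsq fun d hd => hE d (Finset.mem_Ioc.2 ?_)
    exact ⟨Nat.pos_of_mem_divisors hd, (Nat.divisor_le hd).trans hqN⟩
  calc _ ≤ (B * (q * totientRatio q)) * (10 * A * totientRatio q / (q * Real.log y)) ^ 2 := by
        gcongr
        exact norm_sum_mollifierCoeff_div_le hg hy hq0
    _ = _ := by field_simp; ring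

-- The factor `1 / log y` is the saving that makes the mollified mean square bounded.
lemma norm_sum_sum_mollifierCoeff_mul_gcd_le (hg : IsMollifierWeight g A) {y : ℝ}
    (hy : Real.exp 1 ≤ y) {E : ℕ → ℂ} {B : ℝ} (hB : 0 ≤ B)
    (hE : ∀ d ∈ Finset.Ioc 0 ⌊y⌋₊, ‖E d‖ ≤ B * d) :
    ‖∑ h ∈ Finset.Ioc 0 ⌊y⌋₊, ∑ k ∈ Finset.Ioc 0 ⌊y⌋₊,
      mollifierCoeff g y h / h * starRingEnd ℂ (mollifierCoeff g y k / k) * E (h.gcd k)‖ ≤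
      200 * totientRatioConst * A ^ 2 * B / Real.log y := by
  have hy1 : 1 < y := lt_of_lt_of_le (Real.one_lt_exp_iff.2 one_pos) hy
  have hY : 1 ≤ Real.log y := (Real.le_log_iff_exp_le (by linarith)).2 hy
  have hlogN : Real.log ⌊y⌋₊ ≤ Real.log y :=
    Real.log_le_log (by exact_mod_cast (Nat.one_le_floor_iff y).2 hy1.le)
      (Nat.floor_le (by linarith))
  have hconst := totientRatioConst_nonneg
  rw [sum_sum_mul_gcd_eq]
  calc _ ≤ ∑ q ∈ Finset.Ioc 0 ⌊y⌋₊, if Squarefree q then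
          100 * A ^ 2 * B / Real.log y ^ 2 * (totientRatio q ^ 3 / q) else 0 := by
        refine (norm_sum_le _ _).trans (Finset.sum_le_sum fun q hq => ?_)
        rw [← map_sum, norm_mul, norm_mul, RCLike.norm_conj, ← sq]
        split_ifs with hsq
        · exact norm_moebiusTransform_mul_sq_le hg hy1 hB hE hq hsq
        · simp [sum_mollifierCoeff_div_of_not_squarefree g y _ hsq]
    _ ≤ 100 * A ^ 2 * B / Real.log y ^ 2 * (totientRatioConst * (1 + Real.log ⌊y⌋₊)) := by
        rw [← Finset.sum_filter, ← Finset.mul_sum]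
        gcongr
        exact sum_totientRatio_pow_three_div_le _
    _ ≤ 100 * A ^ 2 * B / Real.log y ^ 2 * (totientRatioConst * (2 * Real.log y)) := by
        gcongr
        linarith
    _ = _ := by field_simp; ring

end MollifierCoefficients

/-! ### Divisor sums of the mollifier coefficients: Rankin's method -/

section Rankin

lemma tendsto_one_add_one_div_nhdsGT_one :
    Tendsto (fun Y : ℝ => 1 + 1 / Y) atTop (nhdsWithin 1 (Set.Ioi 1)) := by
  refine tendsto_nhdsWithin_of_tendsto_nhds_of_eventually_within _ ?_ ?_
  · simpa using (tendsto_inv_atTop_zero (𝕜 := ℝ)).const_add 1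
  · filter_upwards [eventually_gt_atTop 0] with Y hY
    simpa using hY

lemma eventually_tsum_one_div_rpow_le :
    ∀ᶠ Y : ℝ in atTop, ∑' n : ℕ, 1 / (n : ℝ) ^ (1 + 1 / Y) ≤ 2 * Y := by
  have hlim := tendsto_sub_mul_tsum_nat_rpow.comp tendsto_one_add_one_div_nhdsGT_one
  filter_upwards [hlim.eventually_lt_const one_lt_two, eventually_gt_atTop 0] with Y hY hY0
  simp only [Function.comp_apply, add_sub_cancel_left] at hY
  rw [one_div, inv_mul_lt_iff₀ hY0] at hY
  simp only [one_div] at hY ⊢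
  linarith

lemma hasSum_ite_dvd_one_div_rpow {s : ℝ} (hs : 1 < s) {Q : ℕ} (hQ : 0 < Q) :
    HasSum (fun m : ℕ => if Q ∣ m then 1 / (m : ℝ) ^ s else 0)
      (1 / (Q : ℝ) ^ s * ∑' n : ℕ, 1 / (n : ℝ) ^ s) := by
  have hinj : Function.Injective (Q * ·) := fun a b h =>
    Nat.eq_of_mul_eq_mul_left hQ h
  rw [← hinj.hasSum_iff]
  · refine ((Real.summable_one_div_nat_rpow.2 hs).hasSum.mul_left (1 / (Q : ℝ) ^ s)).congr_fun
      fun n => ?_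
    rw [Function.comp_apply, if_pos (dvd_mul_right Q n), Nat.cast_mul,
      Real.mul_rpow Q.cast_nonneg n.cast_nonneg, one_div_mul_one_div]
  · rintro m hm
    exact if_neg fun ⟨n, hn⟩ => hm ⟨n, hn.symm⟩

lemma one_div_lcm_rpow {h k : ℕ} (hh : 0 < h) (hk : 0 < k) (s : ℝ) :
    1 / (h.lcm k : ℝ) ^ s = 1 / (h : ℝ) ^ s * (1 / (k : ℝ) ^ s) * (h.gcd k : ℝ) ^ s := by
  have hgcd : (0 : ℝ) < h.gcd k := by exact_mod_cast Nat.gcd_pos_of_pos_left k hh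
  have hlcm : (0 : ℝ) < h.lcm k := by exact_mod_cast Nat.lcm_pos hh hk
  have hmul : (h.gcd k : ℝ) ^ s * (h.lcm k : ℝ) ^ s = (h : ℝ) ^ s * (k : ℝ) ^ s := by
    rw [← Real.mul_rpow hgcd.le hlcm.le, ← Real.mul_rpow h.cast_nonneg k.cast_nonneg]
    exact_mod_cast congrArg (fun n : ℕ => (n : ℝ) ^ s) (Nat.gcd_mul_lcm h k)
  rw [one_div_mul_one_div, ← hmul]
  have := Real.rpow_pos_of_pos hgcd s
  field_simp

lemma norm_sq_divisorSum_div_eq (b : ℕ → ℂ) (N m : ℕ) (s : ℝ) :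
    ((‖∑ k ∈ Finset.Ioc 0 N with k ∣ m, b k‖ ^ 2 / (m : ℝ) ^ s : ℝ) : ℂ) =
      ∑ h ∈ Finset.Ioc 0 N, ∑ k ∈ Finset.Ioc 0 N, b h * starRingEnd ℂ (b k) *
        ((if h.lcm k ∣ m then 1 / (m : ℝ) ^ s else 0 : ℝ) : ℂ) := by
  rw [Complex.ofReal_div, Complex.ofReal_pow, ← Complex.mul_conj', map_sum, Finset.sum_filter,
    Finset.sum_filter, Finset.sum_mul_sum, Finset.sum_div]
  refine Finset.sum_congr rfl fun h _ => ?_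
  rw [Finset.sum_div]
  refine Finset.sum_congr rfl fun k _ => ?_
  by_cases hh : h ∣ m <;> by_cases hk : k ∣ m <;> simp [hh, hk, Nat.lcm_dvd_iff, div_eq_mul_inv]

lemma hasSum_norm_sq_divisorSum_div_rpow (b : ℕ → ℂ) (N : ℕ) {s : ℝ} (hs : 1 < s) :
    HasSum (fun m : ℕ => ((‖∑ k ∈ Finset.Ioc 0 N with k ∣ m, b k‖ ^ 2 / (m : ℝ) ^ s : ℝ) : ℂ))
      (((∑' n : ℕ, 1 / (n : ℝ) ^ s : ℝ) : ℂ) * ∑ h ∈ Finset.Ioc 0 N, ∑ k ∈ Finset.Ioc 0 N,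
        b h / ((h : ℝ) ^ s : ℝ) * starRingEnd ℂ (b k / ((k : ℝ) ^ s : ℝ)) *
          ((h.gcd k : ℝ) ^ s : ℝ)) := by
  simp only [norm_sq_divisorSum_div_eq, Finset.mul_sum]
  refine hasSum_sum fun h hh => hasSum_sum fun k hk => ?_
  have hh0 := (Finset.mem_Ioc.1 hh).1
  have hk0 := (Finset.mem_Ioc.1 hk).1
  have hsum := Complex.hasSum_ofReal.2 (hasSum_ite_dvd_one_div_rpow hs (Nat.lcm_pos hh0 hk0))
  have hval : ((∑' n : ℕ, 1 / (n : ℝ) ^ s : ℝ) : ℂ) * (b h / ((h : ℝ) ^ s : ℝ) *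
      starRingEnd ℂ (b k / ((k : ℝ) ^ s : ℝ)) * ((h.gcd k : ℝ) ^ s : ℝ)) =
        b h * starRingEnd ℂ (b k) *
          ((1 / (h.lcm k : ℝ) ^ s * ∑' n : ℕ, 1 / (n : ℝ) ^ s : ℝ) : ℂ) := by
    rw [one_div_lcm_rpow hh0 hk0, map_div₀, Complex.conj_ofReal]
    push_cast
    ring
  rw [hval]
  exact hsum.mul_left _

lemma sum_norm_sq_divisorSum_div_rpow_le (b : ℕ → ℂ) (N : ℕ) {s : ℝ} (hs : 1 < s) (M : ℕ) :
    ∑ m ∈ Finset.Ioc 0 M, ‖∑ k ∈ Finset.Ioc 0 N with k ∣ m, b k‖ ^ 2 / (m : ℝ) ^ s ≤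
      (∑' n : ℕ, 1 / (n : ℝ) ^ s) * ‖∑ h ∈ Finset.Ioc 0 N, ∑ k ∈ Finset.Ioc 0 N,
        b h / ((h : ℝ) ^ s : ℝ) * starRingEnd ℂ (b k / ((k : ℝ) ^ s : ℝ)) *
          ((h.gcd k : ℝ) ^ s : ℝ)‖ := by
  have hzeta : 0 ≤ ∑' n : ℕ, 1 / (n : ℝ) ^ s := tsum_nonneg fun n => by positivity
  have hre := Complex.hasSum_re (hasSum_norm_sq_divisorSum_div_rpow b N hs)
  simp only [Complex.ofReal_re] at hre
  refine (sum_le_hasSum _ (fun m _ => by positivity) hre).trans ((Complex.re_le_norm _).trans ?_)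
  rw [norm_mul, Complex.norm_real, Real.norm_of_nonneg hzeta]

/-- The coefficients `∑_{k ∣ m, k ≤ y} μ(k) g(log (y / k) / log y)` of the Dirichlet series of
`ζ` times the mollifier. -/
def mollifierDivisorSum (g : ℝ → ℂ) (y : ℝ) (m : ℕ) : ℂ :=
  ∑ k ∈ Finset.Ioc 0 ⌊y⌋₊ with k ∣ m, mollifierCoeff g y k

lemma IsMollifierWeight.exists_mul_exp {g : ℝ → ℂ} {A : ℝ} (hg : IsMollifierWeight g A) :
    ∃ A', IsMollifierWeight (fun v => g v * Complex.exp (v - 1)) A' := by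
  refine exists_isMollifierWeight (hg.contDiff.mul ?_) (by simp [hg.map_zero])
  exact (Complex.ofRealCLM.contDiff.sub contDiff_const).cexp

lemma rpow_one_div_log_eq_exp {y x : ℝ} (hx : 0 < x) :
    x ^ (1 / Real.log y) = Real.exp (Real.log x / Real.log y) := by
  rw [Real.rpow_def_of_pos hx, mul_one_div]

lemma mollifierCoeff_div_rpow (g : ℝ → ℂ) {y : ℝ} (hy : 1 < y) {k : ℕ} (hk : 0 < k) :
    mollifierCoeff g y k / ((k : ℝ) ^ (1 + 1 / Real.log y) : ℝ) =
      mollifierCoeff (fun v => g v * Complex.exp (v - 1)) y k / k := by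
  have hk' : (0 : ℝ) < k := by exact_mod_cast hk
  have hY : Real.log y ≠ 0 := (Real.log_pos hy).ne'
  have hexp : Complex.exp ((Real.log (y / k) / Real.log y : ℝ) - 1) =
      (((k : ℝ) ^ (1 / Real.log y) : ℝ) : ℂ)⁻¹ := by
    rw [rpow_one_div_log_eq_exp hk', Complex.ofReal_exp, ← Complex.exp_neg,
      Real.log_div (by linarith) hk'.ne', sub_div, div_self hY]
    push_cast
    ring_nf
  rw [mollifierCoeff, mollifierCoeff, hexp, Real.rpow_add hk', Real.rpow_one]
  push_cast
  field_simp

lemma div_le_exp_mul_div_rpow {a m M y Λ : ℝ} (hy : 1 < y) (hm : 0 < m) (hmM : m ≤ M)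
    (hM : Real.log M ≤ Λ * Real.log y) (ha : 0 ≤ a) :
    a / m ≤ Real.exp Λ * (a / m ^ (1 + 1 / Real.log y)) := by
  have hY : 0 < Real.log y := Real.log_pos hy
  have hpow : m ^ (1 / Real.log y) ≤ Real.exp Λ := by
    rw [rpow_one_div_log_eq_exp hm, Real.exp_le_exp, div_le_iff₀ hY]
    exact (Real.log_le_log hm hmM).trans hM
  rw [Real.rpow_add hm, Real.rpow_one, div_mul_eq_div_div, ← mul_div_assoc,
    le_div_iff₀ (by positivity), mul_comm]
  gcongr

lemma norm_rpow_one_add_one_div_log_le {y : ℝ} (hy : 1 < y) {d : ℕ}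
    (hd : d ∈ Finset.Ioc 0 ⌊y⌋₊) :
    ‖(((d : ℝ) ^ (1 + 1 / Real.log y) : ℝ) : ℂ)‖ ≤ Real.exp 1 * d := by
  obtain ⟨hd0, hdy⟩ := Finset.mem_Ioc.1 hd
  have hd' : (0 : ℝ) < d := by exact_mod_cast hd0
  rw [Complex.norm_real, Real.norm_of_nonneg (by positivity), Real.rpow_add hd', Real.rpow_one,
    mul_comm, rpow_one_div_log_eq_exp hd']
  gcongr
  rw [div_le_one (Real.log_pos hy)]
  exact Real.log_le_log hd' ((Nat.le_floor_iff (by linarith)).1 hdy)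

-- Rankin's trick: a sum over `m ≤ y ^ Λ` is majorized by a Dirichlet series at `1 + 1 / log y`.
lemma exists_sum_norm_sq_mollifierDivisorSum_div_le {g : ℝ → ℂ} {A : ℝ}
    (hg : IsMollifierWeight g A) (Λ : ℝ) :
    ∃ C, 0 ≤ C ∧ ∀ᶠ y : ℝ in atTop, ∀ M : ℕ, Real.log M ≤ Λ * Real.log y →
      ∑ m ∈ Finset.Ioc 0 M, ‖mollifierDivisorSum g y m‖ ^ 2 / (m : ℝ) ≤ C := by
  obtain ⟨A', hg'⟩ := hg.exists_mul_exp
  have hconst := totientRatioConst_nonneg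
  refine ⟨Real.exp Λ * (2 * (200 * totientRatioConst * A' ^ 2 * Real.exp 1)), by positivity, ?_⟩
  filter_upwards [Real.tendsto_log_atTop.eventually eventually_tsum_one_div_rpow_le,
    eventually_ge_atTop (Real.exp 1)] with y hzeta hy M hM
  have hy1 : 1 < y := (Real.one_lt_exp_iff.2 one_pos).trans_le hy
  have hY : 0 < Real.log y := Real.log_pos hy1
  have hform := norm_sum_sum_mollifierCoeff_mul_gcd_le hg' hy (Real.exp_pos 1).le
    fun d hd => norm_rpow_one_add_one_div_log_le hy1 hd
  have hrankin := sum_norm_sq_divisorSum_div_rpow_le (mollifierCoeff g y) ⌊y⌋₊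
    (lt_add_of_pos_right 1 (one_div_pos.2 hY)) M
  rw [Finset.sum_congr rfl fun h hh => Finset.sum_congr rfl fun k hk => by
    rw [mollifierCoeff_div_rpow g hy1 (Finset.mem_Ioc.1 hh).1,
      mollifierCoeff_div_rpow g hy1 (Finset.mem_Ioc.1 hk).1]] at hrankin
  calc _ ≤ Real.exp Λ * ∑ m ∈ Finset.Ioc 0 M,
        ‖mollifierDivisorSum g y m‖ ^ 2 / (m : ℝ) ^ (1 + 1 / Real.log y) := by
        rw [Finset.mul_sum]
        refine Finset.sum_le_sum fun m hm => ?_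
        obtain ⟨hm0, hmM⟩ := Finset.mem_Ioc.1 hm
        exact div_le_exp_mul_div_rpow hy1 (by exact_mod_cast hm0) (by exact_mod_cast hmM) hM
          (by positivity)
    _ ≤ Real.exp Λ * ((2 * Real.log y) *
          (200 * totientRatioConst * A' ^ 2 * Real.exp 1 / Real.log y)) := by
        gcongr
        exact hrankin.trans (mul_le_mul hzeta hform (norm_nonneg _) (by positivity))
    _ = _ := by field_simp

end Rankin

/-! ### Gaussian averages of periodic functions -/

section GaussianAverage

open HurwitzZeta

lemma abs_cosKernel_sub_one_le (a : ℝ) {t : ℝ} (ht : 1 ≤ t) :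
    |cosKernel a t - 1| ≤ 3 * Real.exp (-π * t) := by
  set q := Real.exp (-π * t) with hq
  have hq_le : q ≤ 1 / 4 := by
    have hexp : Real.exp (-π * t) ≤ Real.exp (-3) :=
      Real.exp_le_exp.2 (by nlinarith [Real.pi_gt_three])
    have hexp_three : Real.exp (-3) ≤ 1 / 4 := by
      rw [Real.exp_neg, one_div]
      gcongr
      linarith [Real.add_one_le_exp (3 : ℝ)]
    exact hexp.trans hexp_three
  have hq_pos : 0 < q := Real.exp_pos _
  have hterm : ∀ n : ℕ, ‖2 * Real.cos (2 * π * a * (n + 1)) *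
      Real.exp (-π * (n + 1) ^ 2 * t)‖ ≤ 2 * q * q ^ n := by
    intro n
    have hexp : Real.exp (-π * (n + 1) ^ 2 * t) ≤ q ^ (n + 1) := by
      rw [hq, ← Real.exp_nat_mul, Real.exp_le_exp]
      push_cast
      have : 0 ≤ π * t * (n * (n + 1)) := by positivity
      linarith
    rw [norm_mul, norm_mul, Real.norm_two, Real.norm_of_nonneg (Real.exp_pos _).le, mul_assoc 2 q,
      ← pow_succ', mul_assoc]
    gcongr
    exact (mul_le_of_le_one_left (Real.exp_pos _).le (Real.abs_cos_le_one _)).trans hexp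
  have hgeom := (hasSum_geometric_of_lt_one hq_pos.le (by linarith)).mul_left (2 * q)
  rw [← (hasSum_nat_cosKernel₀ a (zero_lt_one.trans_le ht)).tsum_eq]
  refine (tsum_of_norm_bounded hgeom hterm).trans ?_
  rw [← div_eq_mul_inv, div_le_iff₀ (by linarith)]
  nlinarith

lemma hasSum_exp_neg_pi_mul_sq {V : ℝ} (hV : 0 < V) (x : ℝ) :
    HasSum (fun n : ℤ => Real.exp (-π * ((x + n) / V) ^ 2)) (V * cosKernel x (V ^ 2)) := by
  have h := hasSum_int_evenKernel x (t := 1 / V ^ 2) (by positivity)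
  rw [evenKernel_functional_equation, ← Real.sqrt_eq_rpow, one_div_one_div, one_div (V ^ 2),
    Real.sqrt_inv, Real.sqrt_sq hV.le, one_div, inv_inv] at h
  refine h.congr_fun fun n => ?_
  rw [div_pow, add_comm x]
  ring_nf

lemma integrable_exp_neg_pi_mul_sq {V : ℝ} (hV : 0 < V) :
    Integrable fun x : ℝ => Real.exp (-π * (x / V) ^ 2) := by
  refine (integrable_exp_neg_mul_sq (b := π / V ^ 2) (by positivity)).congr
    (.of_forall fun x => ?_)
  simp only
  congr 1
  field_simp

lemma integral_gaussian_mul_periodic {V : ℝ} (hV : 0 < V) {p : ℝ → ℝ} (hp : Measurable p)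
    (hp_le : ∀ x, |p x| ≤ 1) (hp_per : Function.Periodic p 1) :
    ∫ x, Real.exp (-π * (x / V) ^ 2) * p x =
      ∫ x in (0 : ℝ)..1, V * cosKernel x (V ^ 2) * p x := by
  have hp_int : ∀ (n : ℤ) x, p (x + n) = p x := fun n x => by simpa using hp_per.int_mul n x
  have hw := integrable_exp_neg_pi_mul_sq hV
  have hbdd {f : ℝ → ℝ} {ν : Measure ℝ} (hf : Integrable f ν) : Integrable (fun x => f x * p x) ν :=
    hf.mul_bdd (c := 1) hp.aestronglyMeasurable (.of_forall hp_le)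
  have hsum := (hbdd hw).hasSum_intervalIntegral_comp_add_int
  have hsum_weight := hw.hasSum_intervalIntegral_comp_add_int
  simp only [hp_int] at hsum
  simp_rw [intervalIntegral.integral_of_le zero_le_one] at hsum hsum_weight ⊢
  have hw_n : ∀ n : ℤ, Integrable (fun x : ℝ => Real.exp (-π * ((x + n) / V) ^ 2))
      (volume.restrict (Set.Ioc 0 1)) := fun n => (hw.comp_add_right (n : ℝ)).integrableOn
  have hnorm : Summable fun n : ℤ =>
      ∫ x in Set.Ioc (0 : ℝ) 1, ‖Real.exp (-π * ((x + n) / V) ^ 2) * p x‖ := by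
    refine .of_nonneg_of_le (fun n => integral_nonneg fun x => norm_nonneg _) (fun n => ?_)
      hsum_weight.summable
    refine integral_mono (hbdd (hw_n n)).norm (hw_n n) fun x => ?_
    rw [norm_mul, Real.norm_of_nonneg (Real.exp_pos _).le]
    exact mul_le_of_le_one_right (Real.exp_pos _).le (hp_le x)
  rw [hsum.unique (hasSum_integral_of_summable_integral_norm (fun n => hbdd (hw_n n)) hnorm)]
  congr with x
  rw [tsum_mul_right, (hasSum_exp_neg_pi_mul_sq hV x).tsum_eq]

lemma abs_integral_gaussian_mul_periodic_one_sub_le {V : ℝ} (hV : 1 ≤ V) {p : ℝ → ℝ}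
    (hp : Measurable p) (hp_le : ∀ x, |p x| ≤ 1) (hp_per : Function.Periodic p 1) :
    |(∫ x, Real.exp (-π * (x / V) ^ 2) * p x) - V * ∫ x in (0 : ℝ)..1, p x| ≤
      V * (3 * Real.exp (-π * V ^ 2)) := by
  have hV0 : 0 < V := by linarith
  have hkernel (x : ℝ) : |V * cosKernel x (V ^ 2) - V| ≤ V * (3 * Real.exp (-π * V ^ 2)) := by
    rw [← mul_sub_one, abs_mul, abs_of_pos hV0]
    exact mul_le_mul_of_nonneg_left (abs_cosKernel_sub_one_le x (one_le_pow₀ hV)) hV0.le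
  have hdiff (x : ℝ) :
      ‖V * cosKernel x (V ^ 2) * p x - V * p x‖ ≤ V * (3 * Real.exp (-π * V ^ 2)) := by
    rw [← sub_mul, norm_mul]
    exact (mul_le_of_le_one_right (abs_nonneg _) (hp_le x)).trans (hkernel x)
  have hp_int : IntervalIntegrable p volume 0 1 :=
    (intervalIntegrable_const (c := (1 : ℝ))).mono_fun hp.aestronglyMeasurable
      (.of_forall fun x => by simpa using hp_le x)
  have hdiff_meas : Measurable fun x : ℝ => V * cosKernel x (V ^ 2) * p x - V * p x := by
    have : (fun x : ℝ => V * cosKernel x (V ^ 2)) =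
        fun x : ℝ => ∑' n : ℤ, Real.exp (-π * ((x + n) / V) ^ 2) :=
      funext fun x => (hasSum_exp_neg_pi_mul_sq hV0 x).tsum_eq.symm
    have hmeas : Measurable fun x : ℝ => V * cosKernel x (V ^ 2) := by
      rw [this]
      exact .tsum fun n => by fun_prop
    exact (hmeas.mul hp).sub (hp.const_mul V)
  have hdiff_int : IntervalIntegrable (fun x => V * cosKernel x (V ^ 2) * p x - V * p x)
      volume 0 1 :=
    (intervalIntegrable_const (c := V * (3 * Real.exp (-π * V ^ 2)))).mono_fun
      hdiff_meas.aestronglyMeasurable (.of_forall fun x => (hdiff x).trans (le_abs_self _))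
  have hsplit : ∫ x in (0 : ℝ)..1, V * cosKernel x (V ^ 2) * p x =
      (∫ x in (0 : ℝ)..1, (V * cosKernel x (V ^ 2) * p x - V * p x)) +
        V * ∫ x in (0 : ℝ)..1, p x := by
    rw [← intervalIntegral.integral_const_mul,
      ← intervalIntegral.integral_add hdiff_int (hp_int.const_mul V)]
    simp only [sub_add_cancel]
  rw [integral_gaussian_mul_periodic hV0 hp hp_le hp_per, hsplit, add_sub_cancel_right]
  simpa using intervalIntegral.norm_integral_le_of_norm_le_const (a := 0) (b := 1)
    fun x _ => hdiff x

lemma abs_integral_gaussian_mul_periodic_sub_le {U Q : ℝ} (hQ : 0 < Q) (hU : Q ≤ U) {p : ℝ → ℝ}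
    (hp : Measurable p) (hp_le : ∀ x, |p x| ≤ 1) (hp_per : Function.Periodic p Q) :
    |(∫ x, Real.exp (-π * (x / U) ^ 2) * p x) - U / Q * ∫ x in (0 : ℝ)..Q, p x| ≤
      U * (3 * Real.exp (-π * (U / Q) ^ 2)) := by
  have h := abs_integral_gaussian_mul_periodic_one_sub_le ((one_le_div hQ).2 hU)
    (p := fun x => p (Q * x)) (by fun_prop) (fun x => hp_le _)
    (fun x => by simpa [mul_add] using hp_per (Q * x))
  have hscale := Measure.integral_comp_mul_left (fun x => Real.exp (-π * (x / U) ^ 2) * p x) Q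
  have hscale_period := intervalIntegral.integral_comp_mul_left (a := 0) (b := 1) p hQ.ne'
  simp only [mul_zero, mul_one, smul_eq_mul] at hscale hscale_period
  simp_rw [fun x : ℝ => show x / (U / Q) = Q * x / U by field_simp] at h
  rw [hscale, hscale_period, abs_of_pos (inv_pos.2 hQ), mul_left_comm, ← mul_sub, abs_mul,
    abs_of_pos (inv_pos.2 hQ), inv_mul_le_iff₀ hQ] at h
  refine h.trans (le_of_eq ?_)
  field_simp

end GaussianAverage

/-! ### Correlations of increments of the fractional part -/

section FractIncrement

lemma fract_add_natCast_div {n : ℕ} (hn : 0 < n) (x : ℝ) :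
    Int.fract ((x + n) / n) = Int.fract (x / n) := by
  rw [add_div, div_self (by positivity), Int.fract_add_one]

lemma periodic_sum_range_fract_add_div {n : ℕ} (hn : 0 < n) :
    Function.Periodic (fun x : ℝ => ∑ i ∈ Finset.range n, Int.fract ((x + i) / n)) 1 := by
  intro x
  have hshift := (Finset.sum_range_succ (fun i : ℕ => Int.fract ((x + i) / (n : ℝ))) n).symm.trans
    (Finset.sum_range_succ' (fun i : ℕ => Int.fract ((x + i) / (n : ℝ))) n)
  rw [Nat.cast_zero, add_zero, fract_add_natCast_div hn] at hshift
  simp only [add_right_cancel hshift, Nat.cast_add, Nat.cast_one, add_assoc, add_comm (1 : ℝ)]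

lemma sum_range_fract_add_div {n : ℕ} (hn : 0 < n) (x : ℝ) :
    ∑ i ∈ Finset.range n, Int.fract ((x + i) / n) = Int.fract x + ((n : ℝ) - 1) / 2 := by
  have hn0 : (0 : ℝ) < n := by positivity
  have hreduce := (periodic_sum_range_fract_add_div hn).sub_int_mul_eq (x := x) ⌊x⌋
  rw [mul_one, Int.self_sub_floor] at hreduce
  have hterm : ∀ i ∈ Finset.range n,
      Int.fract ((Int.fract x + i) / n) = Int.fract x / n + i * (1 / n) := by
    intro i hi
    have hi' : (i : ℝ) + 1 ≤ n := by exact_mod_cast Finset.mem_range.1 hi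
    have := Int.fract_nonneg x
    rw [Int.fract_eq_self.2 ⟨by positivity, by rw [div_lt_one hn0]; linarith [Int.fract_lt_one x]⟩]
    ring
  have hgauss : (∑ i ∈ Finset.range n, (i : ℝ)) = n * (n - 1) / 2 := by
    have := congrArg (Nat.cast : ℕ → ℝ) (Finset.sum_range_id_mul_two n)
    push_cast [Nat.cast_sub hn] at this
    linarith
  rw [← hreduce, Finset.sum_congr rfl hterm, Finset.sum_add_distrib, ← Finset.sum_mul, hgauss,
    Finset.sum_const, Finset.card_range, nsmul_eq_mul]
  field_simp

lemma sum_range_mul_of_periodic {F : ℕ → ℝ} {n : ℕ} (hF : Function.Periodic F n) (g : ℕ) :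
    ∑ i ∈ Finset.range (g * n), F i = g * ∑ i ∈ Finset.range n, F i := by
  induction g with
  | zero => simp
  | succ g ih =>
    have hshift (i : ℕ) : F (g * n + i) = F i := by
      simpa [add_comm] using hF.nat_mul g i
    rw [add_mul, one_mul, Finset.sum_range_add, ih]
    simp only [hshift]
    push_cast
    ring

lemma sum_range_comp_mul_of_periodic {F : ℕ → ℝ} {n : ℕ} (hn : 0 < n) (hF : Function.Periodic F n)
    {k : ℕ} (hk : n.Coprime k) :
    ∑ i ∈ Finset.range n, F (k * i) = ∑ i ∈ Finset.range n, F i := by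
  have hmaps : Set.MapsTo (fun i => k * i % n) (Finset.range n) (Finset.range n) :=
    fun i _ => Finset.mem_coe.2 (Finset.mem_range.2 (Nat.mod_lt _ hn))
  have hinj : Set.InjOn (fun i => k * i % n) (Finset.range n) := fun i hi j hj hij =>
    (Nat.ModEq.cancel_left_of_coprime hk hij).eq_of_lt_of_lt (Finset.mem_range.1 hi)
      (Finset.mem_range.1 hj)
  exact Finset.sum_nbij _ hmaps hinj (Finset.surjOn_of_injOn_of_card_le _ hmaps hinj le_rfl)
    fun i _ => (hF.map_mod_nat _).symm

/-- The increment over a step `H` of the `k`-periodic sawtooth `u ↦ {u / k}`. -/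
def fractIncrement (H : ℝ) (k : ℕ) (u : ℝ) : ℝ :=
  Int.fract ((u + H) / k) - Int.fract (u / k)

@[fun_prop]
lemma measurable_fractIncrement (H : ℝ) (k : ℕ) : Measurable (fractIncrement H k) := by
  unfold fractIncrement
  fun_prop

lemma abs_fractIncrement_le_one (H : ℝ) (k : ℕ) (u : ℝ) : |fractIncrement H k u| ≤ 1 := by
  rw [fractIncrement, abs_le]
  constructor <;>
  linarith [Int.fract_nonneg ((u + H) / k), Int.fract_nonneg (u / k),
    Int.fract_lt_one ((u + H) / k), Int.fract_lt_one (u / k)]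

lemma periodic_fractIncrement (H : ℝ) {k : ℕ} (hk : 0 < k) :
    Function.Periodic (fractIncrement H k) k := fun u => by
  rw [fractIncrement, fractIncrement, fract_add_natCast_div hk, add_right_comm,
    fract_add_natCast_div hk]

lemma sum_range_fractIncrement_mul (H : ℝ) {g h : ℕ} (hg : 0 < g) (hh : 0 < h) (u : ℝ) :
    ∑ i ∈ Finset.range h, fractIncrement H (g * h) (u + g * i) = fractIncrement H g u := by
  have hdiv (x : ℝ) (i : ℕ) : (x + g * i) / ((g * h : ℕ) : ℝ) = (x / g + i) / h := by
    push_cast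
    field_simp
  simp_rw [fractIncrement, Finset.sum_sub_distrib, add_right_comm u _ H, hdiv,
    sum_range_fract_add_div hh]
  ring

lemma sum_range_fractIncrement (H : ℝ) {h k : ℕ} (hh : 0 < h) (u : ℝ) :
    ∑ i ∈ Finset.range h, fractIncrement H h (u + k * i) =
      h.gcd k * fractIncrement H (h.gcd k) u := by
  obtain ⟨g, h', k', hg, hcop, rfl, rfl⟩ := Nat.exists_coprime' (Nat.gcd_pos_of_pos_left k hh)
  have hpos : 0 < h' := Nat.pos_of_mul_pos_right hh
  rw [Nat.gcd_mul_right, hcop.gcd_eq_one, one_mul]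
  have hper : Function.Periodic (fun j : ℕ => fractIncrement H (h' * g) (u + g * j)) h' := by
    intro j
    have := periodic_fractIncrement H hh (u + g * j)
    push_cast at this ⊢
    rw [← this]
    ring_nf
  have hper' : Function.Periodic (fun j : ℕ => fractIncrement H (h' * g) (u + g * (k' * j : ℕ)))
      h' := by
    intro j
    simpa [mul_add, mul_comm, mul_assoc] using hper.nat_mul k' (k' * j)
  have hterm (i : ℕ) : fractIncrement H (h' * g) (u + (k' * g : ℕ) * i) =
      fractIncrement H (h' * g) (u + g * (k' * i : ℕ)) := by
    push_cast
    ring_nf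
  calc ∑ i ∈ Finset.range (h' * g), fractIncrement H (h' * g) (u + (k' * g : ℕ) * i)
      = ∑ i ∈ Finset.range (g * h'), fractIncrement H (h' * g) (u + g * (k' * i : ℕ)) := by
        rw [mul_comm h' g]
        exact Finset.sum_congr rfl fun i _ => by rw [mul_comm g h', hterm]
    _ = g * ∑ i ∈ Finset.range h', fractIncrement H (h' * g) (u + g * i) := by
        rw [sum_range_mul_of_periodic hper', sum_range_comp_mul_of_periodic hpos hper hcop]
    _ = g * fractIncrement H g u := by
        rw [mul_comm h' g, sum_range_fractIncrement_mul H hg hpos]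

lemma intervalIntegrable_of_abs_le_one {f : ℝ → ℝ} (hf : Measurable f) (hf_le : ∀ x, |f x| ≤ 1)
    (a b : ℝ) : IntervalIntegrable f volume a b :=
  (intervalIntegrable_const (c := (1 : ℝ))).mono_fun hf.aestronglyMeasurable
    (.of_forall fun x => by simpa using hf_le x)

lemma intervalIntegral_mul_periodic (h : ℕ) {k : ℝ} {p q : ℝ → ℝ} (hp : Measurable p)
    (hq : Measurable q) (hp_le : ∀ x, |p x| ≤ 1) (hq_le : ∀ x, |q x| ≤ 1)
    (hp_per : Function.Periodic p k) :
    ∫ u in (0 : ℝ)..h * k, q u * p u =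
      ∫ u in (0 : ℝ)..k, (∑ i ∈ Finset.range h, q (u + k * i)) * p u := by
  have hint (c a b : ℝ) : IntervalIntegrable (fun u => q (u + c) * p u) volume a b :=
    intervalIntegrable_of_abs_le_one (by fun_prop)
      (fun x => by rw [abs_mul]; exact mul_le_one₀ (hq_le _) (abs_nonneg _) (hp_le _)) a b
  have hsplit := intervalIntegral.sum_integral_adjacent_intervals (f := fun u => q u * p u)
    (μ := volume) (a := fun i : ℕ => (i : ℝ) * k) (n := h) fun i _ => by simpa using hint 0 _ _
  simp only [Nat.cast_zero, zero_mul] at hsplit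
  simp_rw [← hsplit, Finset.sum_mul]
  rw [intervalIntegral.integral_finsetSum fun i _ => hint _ _ _]
  refine Finset.sum_congr rfl fun i _ => ?_
  have hshift := intervalIntegral.integral_comp_add_right (a := 0) (b := k)
    (fun u => q u * p u) (k * i)
  have hper (x : ℝ) : p (x + k * i) = p x := by simpa [mul_comm] using hp_per.nat_mul i x
  simp_rw [hper] at hshift
  rw [hshift]
  congr 1 <;> push_cast <;> ring

lemma integral_fractIncrement_mul_fractIncrement (H : ℝ) {h k : ℕ} (hh : 0 < h) (hk : 0 < k) :
    ∫ u in (0 : ℝ)..h * k, fractIncrement H h u * fractIncrement H k u =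
      h.gcd k * ∫ u in (0 : ℝ)..h.gcd k, fractIncrement H (h.gcd k) u ^ 2 := by
  have hg : 0 < h.gcd k := Nat.gcd_pos_of_pos_left _ hh
  obtain ⟨k', hk'⟩ := Nat.gcd_dvd_right h k
  have hk'_pos : 0 < k' := Nat.pos_of_mul_pos_left (hk' ▸ hk)
  rw [intervalIntegral_mul_periodic h (measurable_fractIncrement H k)
    (measurable_fractIncrement H h) (abs_fractIncrement_le_one H k)
    (abs_fractIncrement_le_one H h) (periodic_fractIncrement H hk)]
  simp_rw [sum_range_fractIncrement H hh, mul_assoc]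
  rw [intervalIntegral.integral_const_mul]
  congr 1
  set g := h.gcd k
  have hunfold := intervalIntegral_mul_periodic k' (measurable_fractIncrement H g)
    (measurable_fractIncrement H k) (abs_fractIncrement_le_one H g)
    (abs_fractIncrement_le_one H k) (periodic_fractIncrement H hg)
  have hcast : (k' : ℝ) * g = k := by rw [mul_comm]; exact_mod_cast hk'.symm
  simp_rw [hcast, hk', sum_range_fractIncrement_mul H hg hk'_pos, ← hk', ← sq] at hunfold
  rw [← hunfold]
  simp_rw [mul_comm]

lemma integral_fractIncrement_sq_le {H : ℝ} (hH : 0 < H) {g : ℕ} (hg : 0 < g) :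
    ∫ u in (0 : ℝ)..g, fractIncrement H g u ^ 2 ≤ 2 * H := by
  have hg0 : (0 : ℝ) < g := by positivity
  have hle (u : ℝ) : fractIncrement H g u ^ 2 ≤ 1 :=
    (sq_le_one_iff_abs_le_one _).2 (abs_fractIncrement_le_one H g u)
  have hint := intervalIntegrable_of_abs_le_one (f := fun u => fractIncrement H g u ^ 2)
    (by fun_prop) fun u => by rw [abs_of_nonneg (sq_nonneg _)]; exact hle u
  have htrivial {a b : ℝ} (hab : a ≤ b) : ∫ u in a..b, fractIncrement H g u ^ 2 ≤ b - a := by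
    simpa using intervalIntegral.integral_mono_on hab (hint a b)
      (intervalIntegrable_const (c := (1 : ℝ))) fun x _ => hle x
  rcases le_or_gt (g : ℝ) H with hgH | hHg
  · linarith [htrivial hg0.le]
  have hvalue : ∀ u ∈ Set.Ioo 0 (g - H), fractIncrement H g u ^ 2 ≤ (H / g) ^ 2 := by
    rintro u ⟨hu0, hu⟩
    rw [fractIncrement, Int.fract_eq_self.2 ⟨by positivity, (div_lt_one hg0).2 (by linarith)⟩,
      Int.fract_eq_self.2 ⟨by positivity, (div_lt_one hg0).2 (by linarith)⟩, add_div,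
      add_sub_cancel_left]
  have hbulk : ∫ u in (0 : ℝ)..g - H, fractIncrement H g u ^ 2 ≤ (g - H) * (H / g) ^ 2 := by
    simpa using intervalIntegral.integral_mono_on_of_le_Ioo (by linarith) (hint _ _)
      intervalIntegrable_const hvalue
  have hbulk_le : (g - H) * (H / g) ^ 2 ≤ H := by
    have hratio : H / g ≤ 1 := (div_le_one hg0).2 hHg.le
    have hmul : H / g * g = H := by field_simp
    nlinarith [mul_nonneg (div_pos hH hg0).le (div_pos hH hg0).le]
  rw [← intervalIntegral.integral_add_adjacent_intervals (hint 0 (g - H)) (hint (g - H) g)]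
  linarith [htrivial (sub_le_self (g : ℝ) hH.le)]

end FractIncrement

/-! ### Mean square of the increments of the mollified sawtooth -/

section MollifiedFract

lemma ofReal_mul_norm_sq_sum_mul_ofReal (b : ℕ → ℂ) (s : Finset ℕ) (w : ℝ) (r : ℕ → ℝ) :
    ((w * ‖∑ k ∈ s, b k * (r k : ℂ)‖ ^ 2 : ℝ) : ℂ) =
      ∑ h ∈ s, ∑ k ∈ s, b h * starRingEnd ℂ (b k) * ((w * (r h * r k) : ℝ) : ℂ) := by
  push_cast
  rw [← Complex.mul_conj', map_sum, Finset.sum_mul_sum, Finset.mul_sum]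
  refine Finset.sum_congr rfl fun h _ => ?_
  rw [Finset.mul_sum]
  refine Finset.sum_congr rfl fun k _ => ?_
  rw [map_mul, Complex.conj_ofReal]
  ring

section QuadraticForm

variable {α : Type*} [MeasurableSpace α] {ν : Measure α} {w : α → ℝ} {r : ℕ → α → ℝ}

lemma integrable_mul_norm_sq_sum (b : ℕ → ℂ) (s : Finset ℕ)
    (hr : ∀ h k, Integrable (fun u => w u * (r h u * r k u)) ν) :
    Integrable (fun u => w u * ‖∑ k ∈ s, b k * (r k u : ℂ)‖ ^ 2) ν := by
  have hcomplex : Integrable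
      (fun u => ((w u * ‖∑ k ∈ s, b k * (r k u : ℂ)‖ ^ 2 : ℝ) : ℂ)) ν := by
    simp_rw [ofReal_mul_norm_sq_sum_mul_ofReal b s _ fun k => r k _]
    exact integrable_finsetSum _ fun h _ => integrable_finsetSum _ fun k _ =>
      (hr h k).ofReal.const_mul _
  simpa only [RCLike.re_eq_complex_re, Complex.ofReal_re] using hcomplex.re

lemma integral_mul_norm_sq_sum (b : ℕ → ℂ) (s : Finset ℕ)
    (hr : ∀ h k, Integrable (fun u => w u * (r h u * r k u)) ν) :
    ((∫ u, w u * ‖∑ k ∈ s, b k * (r k u : ℂ)‖ ^ 2 ∂ν : ℝ) : ℂ) =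
      ∑ h ∈ s, ∑ k ∈ s,
        b h * starRingEnd ℂ (b k) * ((∫ u, w u * (r h u * r k u) ∂ν : ℝ) : ℂ) := by
  have hterm (h k : ℕ) : Integrable
      (fun u => b h * starRingEnd ℂ (b k) * ((w u * (r h u * r k u) : ℝ) : ℂ)) ν :=
    (hr h k).ofReal.const_mul _
  rw [← integral_complex_ofReal]
  simp_rw [ofReal_mul_norm_sq_sum_mul_ofReal b s _ fun k => r k _]
  rw [integral_finsetSum _ fun h _ => integrable_finsetSum _ fun k _ => hterm h k]
  refine Finset.sum_congr rfl fun h _ => ?_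
  rw [integral_finsetSum _ fun k _ => hterm h k]
  refine Finset.sum_congr rfl fun k _ => ?_
  rw [integral_const_mul, integral_complex_ofReal]

end QuadraticForm

lemma abs_fractIncrement_mul_fractIncrement_le_one (H : ℝ) (h k : ℕ) (u : ℝ) :
    |fractIncrement H h u * fractIncrement H k u| ≤ 1 := by
  rw [abs_mul]
  exact mul_le_one₀ (abs_fractIncrement_le_one H h u) (abs_nonneg _)
    (abs_fractIncrement_le_one H k u)

lemma integrable_gaussian_mul_fractIncrement {U : ℝ} (hU : 0 < U) (H : ℝ) (h k : ℕ) :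
    Integrable fun u => Real.exp (-π * (u / U) ^ 2) *
      (fractIncrement H h u * fractIncrement H k u) :=
  (integrable_exp_neg_pi_mul_sq hU).mul_bdd (c := 1)
    (((measurable_fractIncrement H h).mul (measurable_fractIncrement H k)).aestronglyMeasurable)
    (.of_forall (abs_fractIncrement_mul_fractIncrement_le_one H h k))

lemma abs_integral_gaussian_mul_fractIncrement_sub_le {Q U : ℝ} (hU : Q ≤ U) (H : ℝ) {h k : ℕ}
    (hh : 0 < h) (hk : 0 < k) (hhk : (h * k : ℝ) ≤ Q) :
    |(∫ u, Real.exp (-π * (u / U) ^ 2) * (fractIncrement H h u * fractIncrement H k u)) -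
      U / (h * k) * (h.gcd k * ∫ u in (0 : ℝ)..h.gcd k, fractIncrement H (h.gcd k) u ^ 2)| ≤
      U * (3 * Real.exp (-π * (U / Q))) := by
  have hhk_pos : (0 : ℝ) < h * k := by positivity
  have hQ : 0 < Q := hhk_pos.trans_le hhk
  have hU0 : 0 < U := hQ.trans_le hU
  have hper : Function.Periodic (fun u => fractIncrement H h u * fractIncrement H k u)
      (h * k : ℝ) := by
    have hper_h := (periodic_fractIncrement H hh).nat_mul k
    rw [mul_comm] at hper_h
    exact hper_h.mul ((periodic_fractIncrement H hk).nat_mul h)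
  have hbound := abs_integral_gaussian_mul_periodic_sub_le hhk_pos (hhk.trans hU)
    ((measurable_fractIncrement H h).mul (measurable_fractIncrement H k))
    (abs_fractIncrement_mul_fractIncrement_le_one H h k) hper
  rw [← integral_fractIncrement_mul_fractIncrement H hh hk]
  refine hbound.trans ?_
  have hratio : U / Q ≤ (U / (h * k)) ^ 2 := calc
    U / Q ≤ U / (h * k) := by gcongr
    _ ≤ (U / (h * k)) ^ 2 := le_self_pow₀ ((one_le_div hhk_pos).2 (hhk.trans hU)) two_ne_zero
  gcongr 3
  exact mul_le_mul_of_nonpos_left hratio (neg_nonpos.2 Real.pi_pos.le)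

/-- The combination `∑_{k ≤ y} b_k {u / k}` of sawtooth functions with the mollifier coefficients;
its Mellin transform is, up to an elementary factor, `ζ` times the mollifier. -/
def mollifiedFract (g : ℝ → ℂ) (y u : ℝ) : ℂ :=
  ∑ k ∈ Finset.Ioc 0 ⌊y⌋₊, mollifierCoeff g y k * (Int.fract (u / k) : ℝ)

@[fun_prop]
lemma measurable_mollifiedFract (g : ℝ → ℂ) (y : ℝ) : Measurable (mollifiedFract g y) := by
  unfold mollifiedFract
  fun_prop

lemma mollifiedFract_add_sub (g : ℝ → ℂ) (y u H : ℝ) :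
    mollifiedFract g y (u + H) - mollifiedFract g y u =
      ∑ k ∈ Finset.Ioc 0 ⌊y⌋₊, mollifierCoeff g y k * (fractIncrement H k u : ℂ) := by
  simp only [mollifiedFract, fractIncrement, ← Finset.sum_sub_distrib, Complex.ofReal_sub, mul_sub]

variable {g : ℝ → ℂ} {A : ℝ}

lemma IsMollifierWeight.norm_le (hg : IsMollifierWeight g A) {v : ℝ}
    (hv : v ∈ Set.Icc (0 : ℝ) 1) : ‖g v‖ ≤ 2 * A := by
  have hremainder :
      ‖∫ s in (0 : ℝ)..1, max (v - s) 0 • deriv (deriv g) s‖ ≤ A * |(1 : ℝ) - 0| := by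
    refine intervalIntegral.norm_integral_le_of_norm_le_const fun s hs => ?_
    rw [Set.uIoc_of_le zero_le_one] at hs
    rw [norm_smul, Real.norm_of_nonneg (le_max_right _ _)]
    refine (mul_le_of_le_one_left (norm_nonneg _) (max_le ?_ zero_le_one)).trans
      (hg.norm_deriv_deriv_le s ⟨hs.1.le, hs.2⟩)
    linarith [hv.2, hs.1]
  have hlinear : ‖v • deriv g 0‖ ≤ A := by
    rw [norm_smul, Real.norm_of_nonneg hv.1]
    exact (mul_le_of_le_one_left (norm_nonneg _) hv.2).trans hg.norm_deriv_zero_le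
  rw [taylor_integral_remainder_of_map_zero hg.contDiff hg.map_zero hv.1 hv.2]
  refine (norm_add_le _ _).trans ?_
  rw [sub_zero, abs_one, mul_one] at hremainder
  linarith

lemma norm_mollifierCoeff_le (hg : IsMollifierWeight g A) {y : ℝ} (hy : 1 < y) {k : ℕ}
    (hk : k ∈ Finset.Ioc 0 ⌊y⌋₊) : ‖mollifierCoeff g y k‖ ≤ 2 * A := by
  obtain ⟨hk0, hky⟩ := Finset.mem_Ioc.1 hk
  have hk1 : (1 : ℝ) ≤ k := by exact_mod_cast hk0
  have hky' : (k : ℝ) ≤ y := (Nat.le_floor_iff (by linarith)).1 hky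
  have hlog : 0 < Real.log y := Real.log_pos hy
  have hv : Real.log (y / k) / Real.log y ∈ Set.Icc (0 : ℝ) 1 :=
    ⟨div_nonneg (Real.log_nonneg ((one_le_div (by linarith)).2 hky')) hlog.le,
      (div_le_one hlog).2 (Real.log_le_log (by positivity) (div_le_self (by linarith) hk1))⟩
  rw [mollifierCoeff, norm_mul, Complex.norm_intCast]
  exact (mul_le_of_le_one_left (norm_nonneg _) (abs_moebius_cast_le_one k)).trans (hg.norm_le hv)

lemma norm_sum_sum_mollifierCoeff_mul_le (hg : IsMollifierWeight g A) {y : ℝ} (hy : 1 < y)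
    {e : ℕ → ℕ → ℂ} {δ : ℝ} (hδ : 0 ≤ δ)
    (he : ∀ h ∈ Finset.Ioc 0 ⌊y⌋₊, ∀ k ∈ Finset.Ioc 0 ⌊y⌋₊, ‖e h k‖ ≤ δ) :
    ‖∑ h ∈ Finset.Ioc 0 ⌊y⌋₊, ∑ k ∈ Finset.Ioc 0 ⌊y⌋₊,
      mollifierCoeff g y h * starRingEnd ℂ (mollifierCoeff g y k) * e h k‖ ≤
      4 * A ^ 2 * y ^ 2 * δ := by
  have hA := hg.nonneg
  calc _ ≤ ∑ _h ∈ Finset.Ioc 0 ⌊y⌋₊, ∑ _k ∈ Finset.Ioc 0 ⌊y⌋₊, 2 * A * (2 * A) * δ := by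
        refine (norm_sum_le _ _).trans (Finset.sum_le_sum fun h hh => ?_)
        refine (norm_sum_le _ _).trans (Finset.sum_le_sum fun k hk => ?_)
        rw [norm_mul, norm_mul, RCLike.norm_conj]
        gcongr
        exacts [norm_mollifierCoeff_le hg hy hh, norm_mollifierCoeff_le hg hy hk, he h hh k hk]
    _ = 4 * A ^ 2 * (⌊y⌋₊ : ℝ) ^ 2 * δ := by
        simp only [Finset.sum_const, Nat.card_Ioc, tsub_zero, nsmul_eq_mul]
        ring
    _ ≤ 4 * A ^ 2 * y ^ 2 * δ := by
        gcongr
        exact Nat.floor_le (by linarith)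

lemma integral_gaussian_mul_norm_sq_sum_fractIncrement_le (hg : IsMollifierWeight g A) {y : ℝ}
    (hy : Real.exp 1 ≤ y) {U : ℝ} (hU : y ^ 2 ≤ U) {H : ℝ} (hH : 0 < H) :
    ∫ u, Real.exp (-π * (u / U) ^ 2) *
      ‖∑ k ∈ Finset.Ioc 0 ⌊y⌋₊, mollifierCoeff g y k * (fractIncrement H k u : ℂ)‖ ^ 2 ≤
      U * (400 * totientRatioConst * A ^ 2 * H / Real.log y +
        12 * A ^ 2 * y ^ 2 * Real.exp (-π * (U / y ^ 2))) := by
  have hy1 : 1 < y := lt_of_lt_of_le (Real.one_lt_exp_iff.2 one_pos) hy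
  have hU0 : 0 < U := (by positivity : 0 < y ^ 2).trans_le hU
  set E : ℕ → ℝ := fun d => d * ∫ u in (0 : ℝ)..d, fractIncrement H d u ^ 2
  set e : ℕ → ℕ → ℝ := fun h k => (∫ u, Real.exp (-π * (u / U) ^ 2) *
    (fractIncrement H h u * fractIncrement H k u)) - U / (h * k) * E (h.gcd k) with he
  have hE_le : ∀ d ∈ Finset.Ioc 0 ⌊y⌋₊, ‖(E d : ℂ)‖ ≤ 2 * H * d := by
    intro d hd
    have hnonneg : 0 ≤ ∫ u in (0 : ℝ)..d, fractIncrement H d u ^ 2 :=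
      intervalIntegral.integral_nonneg (by positivity) fun u _ => sq_nonneg _
    rw [Complex.norm_real, Real.norm_of_nonneg (mul_nonneg (by positivity) hnonneg), mul_comm]
    gcongr
    exact integral_fractIncrement_sq_le hH (Finset.mem_Ioc.1 hd).1
  have he_le : ∀ h ∈ Finset.Ioc 0 ⌊y⌋₊, ∀ k ∈ Finset.Ioc 0 ⌊y⌋₊,
      ‖(e h k : ℂ)‖ ≤ U * (3 * Real.exp (-π * (U / y ^ 2))) := by
    intro h hh k hk
    rw [Finset.mem_Ioc, Nat.le_floor_iff (by linarith)] at hh hk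
    rw [Complex.norm_real]
    refine abs_integral_gaussian_mul_fractIncrement_sub_le hU H hh.1 hk.1 ?_
    nlinarith [hh.2, hk.2, Nat.cast_nonneg (α := ℝ) h, Nat.cast_nonneg (α := ℝ) k]
  have hmain := norm_sum_sum_mollifierCoeff_mul_gcd_le hg hy (by positivity) hE_le
  have herror := norm_sum_sum_mollifierCoeff_mul_le hg hy1 (by positivity) he_le
  have hsplit := integral_mul_norm_sq_sum (mollifierCoeff g y) (Finset.Ioc 0 ⌊y⌋₊)
    (integrable_gaussian_mul_fractIncrement hU0 H)
  have hterm (h k : ℕ) : mollifierCoeff g y h * starRingEnd ℂ (mollifierCoeff g y k) *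
      ((∫ u, Real.exp (-π * (u / U) ^ 2) *
        (fractIncrement H h u * fractIncrement H k u) : ℝ) : ℂ) =
      U * (mollifierCoeff g y h / h * starRingEnd ℂ (mollifierCoeff g y k / k) * E (h.gcd k)) +
      mollifierCoeff g y h * starRingEnd ℂ (mollifierCoeff g y k) * e h k := by
    simp only [he, map_div₀, map_natCast]
    push_cast
    ring
  simp_rw [hterm, Finset.sum_add_distrib, ← Finset.mul_sum] at hsplit
  refine (le_abs_self _).trans ?_
  rw [← Real.norm_eq_abs, ← Complex.norm_real, hsplit]
  refine (norm_add_le _ _).trans ?_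
  rw [norm_mul, Complex.norm_real, Real.norm_of_nonneg hU0.le]
  calc _ ≤ U * (200 * totientRatioConst * A ^ 2 * (2 * H) / Real.log y) +
        4 * A ^ 2 * y ^ 2 * (U * (3 * Real.exp (-π * (U / y ^ 2)))) := by gcongr
    _ = _ := by ring

lemma integral_norm_sq_mollifiedFract_increment_le (hg : IsMollifierWeight g A) {y : ℝ}
    (hy : Real.exp 1 ≤ y) {U : ℝ} (hU : y ^ 2 ≤ U) {H : ℝ} (hH : 0 < H) :
    ∫ u in Set.Ioc U (2 * U), ‖mollifiedFract g y (u + H) - mollifiedFract g y u‖ ^ 2 ≤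
      Real.exp (4 * π) * (U * (400 * totientRatioConst * A ^ 2 * H / Real.log y +
        12 * A ^ 2 * y ^ 2 * Real.exp (-π * (U / y ^ 2)))) := by
  have hy0 : 0 < y := (Real.exp_pos 1).trans_le hy
  have hU0 : 0 < U := (by positivity : 0 < y ^ 2).trans_le hU
  have hint := (integrable_mul_norm_sq_sum (mollifierCoeff g y) (Finset.Ioc 0 ⌊y⌋₊)
    (integrable_gaussian_mul_fractIncrement hU0 H)).const_mul (Real.exp (4 * π))
  simp_rw [mollifiedFract_add_sub]
  refine le_trans ?_ (mul_le_mul_of_nonneg_left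
    (integral_gaussian_mul_norm_sq_sum_fractIncrement_le hg hy hU hH) (Real.exp_pos _).le)
  rw [← integral_const_mul]
  refine le_trans ?_ (setIntegral_le_integral (s := Set.Ioc U (2 * U)) hint
    (.of_forall fun u => by positivity))
  refine integral_mono_of_nonneg (.of_forall fun u => sq_nonneg _) hint.integrableOn
    ((ae_restrict_iff' measurableSet_Ioc).2 (.of_forall fun u hu => ?_))
  have hweight : 1 ≤ Real.exp (4 * π) * Real.exp (-π * (u / U) ^ 2) := by
    have hratio : u / U ≤ 2 := (div_le_iff₀ hU0).2 hu.2
    have hratio_nonneg : 0 ≤ u / U := div_nonneg (hU0.le.trans hu.1.le) hU0.le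
    rw [← Real.exp_add]
    exact Real.one_le_exp (by nlinarith [Real.pi_pos, pow_le_pow_left₀ hratio_nonneg hratio 2])
  dsimp only
  rw [← mul_assoc]
  exact le_mul_of_one_le_left (sq_nonneg _) hweight

end MollifiedFract

/-! ### Plancherel's theorem for Fourier and Mellin transforms -/

section Plancherel

open scoped FourierTransform SchwartzMap

section Fourier

variable {V E : Type*} [NormedAddCommGroup V] [InnerProductSpace ℝ V] [FiniteDimensional ℝ V]
  [MeasurableSpace V] [BorelSpace V] [NormedAddCommGroup E] [InnerProductSpace ℂ E]
  [CompleteSpace E]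

lemma fourier_ae_eq_fourier_toLp {f : V → E} (hf₁ : Integrable f) (hf₂ : MemLp f 2 volume) :
    (𝓕 f : V → E) =ᵐ[volume] ((𝓕 hf₂.toLp : Lp E 2 (volume : Measure V)) : V → E) := by
  have hcont : Continuous (𝓕 f : V → E) :=
    VectorFourier.fourierIntegral_continuous Real.continuous_fourierChar
      (by exact continuous_inner) hf₁
  refine ae_eq_of_integral_contDiff_smul_eq hcont.locallyIntegrable
    ((Lp.memLp (𝓕 hf₂.toLp)).locallyIntegrable (by norm_num)) fun ψ hψ hψsupp => ?_
  have hsupp : HasCompactSupport (Complex.ofRealCLM ∘ ψ) := hψsupp.comp_left rfl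
  let φ : 𝓢(V, ℂ) := hsupp.toSchwartzMap (Complex.ofRealCLM.contDiff.comp hψ)
  have hφ (F : V → E) : ∫ x, ψ x • F x = ∫ x, φ x • F x := rfl
  have hdistribution : ∫ x, (𝓕 φ) x • (hf₂.toLp : V → E) x =
      ∫ x, φ x • ((𝓕 hf₂.toLp : Lp E 2 (volume : Measure V)) : V → E) x := by
    have happly := congrArg (fun S => S φ) (Lp.fourier_toTemperedDistribution_eq hf₂.toLp)
    simpa only [TemperedDistribution.fourier_apply, Lp.toTemperedDistribution_apply] using happly
  have hrepr : ∫ x, (𝓕 φ) x • (hf₂.toLp : V → E) x = ∫ x, (𝓕 φ) x • f x :=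
    integral_congr_ae (hf₂.coeFn_toLp.mono fun x hx => congrArg ((𝓕 φ) x • ·) hx)
  have hswap := VectorFourier.integral_fourierIntegral_smul_eq_flip (μ := volume) (ν := volume)
    (L := innerₗ V) (f := φ) (g := f) Real.continuous_fourierChar (by exact continuous_inner)
    φ.integrable hf₁
  rw [flip_innerₗ] at hswap
  rw [hφ, hφ, ← hdistribution, hrepr, SchwartzMap.fourier_coe]
  exact hswap.symm

lemma eLpNorm_two_fourier_eq {f : V → E} (hf₁ : Integrable f) (hf₂ : MemLp f 2 volume) :
    eLpNorm (𝓕 f : V → E) 2 volume = eLpNorm f 2 volume := by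
  have hnorm := Lp.norm_fourier_eq hf₂.toLp
  rw [Lp.norm_def, Lp.norm_def,
    ENNReal.toReal_eq_toReal_iff' (Lp.eLpNorm_ne_top _) (Lp.eLpNorm_ne_top _)] at hnorm
  rw [eLpNorm_congr_ae (fourier_ae_eq_fourier_toLp hf₁ hf₂), hnorm,
    eLpNorm_congr_ae hf₂.coeFn_toLp]

end Fourier

lemma lintegral_Ioi_zero_eq_lintegral_exp_neg (φ : ℝ → ENNReal) :
    ∫⁻ u in Set.Ioi (0 : ℝ), φ u =
      ∫⁻ v : ℝ, ENNReal.ofReal (Real.exp (-v)) * φ (Real.exp (-v)) := by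
  have himage : (fun v : ℝ => Real.exp (-v)) '' Set.univ = Set.Ioi 0 := by
    rw [Set.image_univ, ← Real.range_exp]
    exact neg_surjective.range_comp Real.exp
  have hderiv (v : ℝ) : HasDerivAt (fun v : ℝ => Real.exp (-v)) (-Real.exp (-v)) v := by
    simpa using (hasDerivAt_neg v).exp
  rw [← himage, lintegral_image_eq_lintegral_abs_deriv_mul MeasurableSet.univ
    (fun v _ => (hderiv v).hasDerivWithinAt) (Real.exp_injective.comp neg_injective).injOn,
    Measure.restrict_univ]
  simp only [abs_neg, Real.abs_exp]

lemma lintegral_comp_div (φ : ℝ → ENNReal) {c : ℝ} (hc : 0 < c) :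
    ∫⁻ t : ℝ, φ (t / c) = ENNReal.ofReal c * ∫⁻ t : ℝ, φ t := by
  have hmap := lintegral_map_equiv φ (MeasurableEquiv.mulRight₀ c⁻¹ (inv_ne_zero hc.ne'))
    (μ := volume)
  rw [MeasurableEquiv.coe_mulRight₀, Real.map_volume_mul_right (inv_ne_zero hc.ne'),
    lintegral_smul_measure, inv_inv, abs_of_pos hc] at hmap
  exact hmap.symm

variable {E : Type*} [NormedAddCommGroup E]

lemma eLpNorm_two_sq_eq_lintegral {X : Type*} [MeasurableSpace X] {ν : Measure X} (G : X → E) :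
    eLpNorm G 2 ν ^ 2 = ∫⁻ x, ‖G x‖ₑ ^ 2 ∂ν := by
  simpa using eLpNorm_nnreal_pow_eq_lintegral (μ := ν) (f := G) (p := 2) two_ne_zero

section NormedSpace

variable [NormedSpace ℂ E] (F : ℝ → E) (τ : ℝ)

lemma lintegral_enorm_sq_exp_smul_comp_exp_neg :
    ∫⁻ v : ℝ, ‖Real.exp (-τ * v) • F (Real.exp (-v))‖ₑ ^ 2 =
      ∫⁻ u in Set.Ioi (0 : ℝ), ‖F u‖ₑ ^ 2 * ENNReal.ofReal (u ^ (2 * τ - 1)) := by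
  rw [lintegral_Ioi_zero_eq_lintegral_exp_neg]
  refine lintegral_congr fun v => ?_
  have hweight : ENNReal.ofReal (Real.exp (-τ * v)) ^ 2 =
      ENNReal.ofReal (Real.exp (-v)) * ENNReal.ofReal (Real.exp (-v) ^ (2 * τ - 1)) := by
    rw [← ENNReal.ofReal_pow (Real.exp_pos _).le, ← ENNReal.ofReal_mul (Real.exp_pos _).le,
      ← Real.exp_nat_mul, ← Real.exp_mul, ← Real.exp_add]
    congr 2
    push_cast
    ring
  rw [enorm_smul, mul_pow, Real.enorm_eq_ofReal (Real.exp_pos _).le, hweight]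
  ring

variable {F τ}

lemma integrable_exp_smul_comp_exp_neg_of_mellinConvergent (hF : StronglyMeasurable F)
    (hconv : MellinConvergent F (τ : ℂ)) :
    Integrable fun v : ℝ => Real.exp (-τ * v) • F (Real.exp (-v)) := by
  have hmeas : StronglyMeasurable fun v : ℝ => Real.exp (-τ * v) • F (Real.exp (-v)) :=
    (by fun_prop : Continuous fun v : ℝ => Real.exp (-τ * v)).stronglyMeasurable.smul
      (hF.comp_measurable (by fun_prop))
  refine ⟨hmeas.aestronglyMeasurable, ?_⟩
  have hfinite := hconv.2
  rw [HasFiniteIntegral, lintegral_Ioi_zero_eq_lintegral_exp_neg] at hfinite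
  refine (lintegral_congr fun v => ?_).trans_lt hfinite
  have hweight : ‖Real.exp (-τ * v)‖ₑ =
      ENNReal.ofReal (Real.exp (-v)) * ‖((Real.exp (-v) : ℝ) : ℂ) ^ ((τ : ℂ) - 1)‖ₑ := by
    rw [Real.enorm_eq_ofReal (Real.exp_pos _).le, ← ofReal_norm,
      Complex.norm_cpow_eq_rpow_re_of_pos (Real.exp_pos _),
      ← ENNReal.ofReal_mul (Real.exp_pos _).le, ← Real.exp_mul, ← Real.exp_add]
    simp only [Complex.sub_re, Complex.ofReal_re, Complex.one_re]
    ring_nf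
  rw [enorm_smul, enorm_smul, ← mul_assoc, hweight]

end NormedSpace

variable [InnerProductSpace ℂ E] [CompleteSpace E] {F : ℝ → E} {τ : ℝ}

lemma lintegral_enorm_sq_mellin_le (hF : StronglyMeasurable F)
    (hconv : MellinConvergent F (τ : ℂ)) :
    ∫⁻ t : ℝ, ‖mellin F (τ + t * Complex.I)‖ₑ ^ 2 ≤ ENNReal.ofReal (2 * π) *
      ∫⁻ u in Set.Ioi (0 : ℝ), ‖F u‖ₑ ^ 2 * ENNReal.ofReal (u ^ (2 * τ - 1)) := by
  set G : ℝ → E := fun v => Real.exp (-τ * v) • F (Real.exp (-v)) with hG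
  have hG_integrable : Integrable G := integrable_exp_smul_comp_exp_neg_of_mellinConvergent hF hconv
  have hmellin (t : ℝ) : mellin F (τ + t * Complex.I) = (𝓕 G : ℝ → E) (t / (2 * π)) := by
    simp [mellin_eq_fourier, hG]
  simp_rw [hmellin]
  rw [lintegral_comp_div (fun t => ‖(𝓕 G : ℝ → E) t‖ₑ ^ 2) Real.two_pi_pos,
    ← lintegral_enorm_sq_exp_smul_comp_exp_neg, ← eLpNorm_two_sq_eq_lintegral,
    ← eLpNorm_two_sq_eq_lintegral]
  rcases eq_or_ne (eLpNorm G 2 volume) ⊤ with htop | htop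
  · rw [htop, ENNReal.top_pow two_ne_zero, ENNReal.mul_top (by simp [Real.pi_pos])]
    exact le_top
  · rw [eLpNorm_two_fourier_eq hG_integrable
      ⟨hG_integrable.aestronglyMeasurable, htop.lt_top⟩]

end Plancherel

/-! ### The zeta function as a Mellin transform of the fractional part -/

section ZetaMellin

lemma norm_ofReal_fract_le_one (u : ℝ) : ‖((Int.fract u : ℝ) : ℂ)‖ ≤ 1 := by
  rw [Complex.norm_real, Real.norm_of_nonneg (Int.fract_nonneg u)]
  exact (Int.fract_lt_one u).le

lemma measurable_ofReal_fract : Measurable fun u : ℝ => ((Int.fract u : ℝ) : ℂ) :=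
  Complex.measurable_ofReal.comp measurable_fract

lemma locallyIntegrableOn_of_norm_le_one {F : ℝ → ℂ} (hF : Measurable F) (hF1 : ∀ x, ‖F x‖ ≤ 1)
    (s : Set ℝ) : LocallyIntegrableOn F s :=
  ((locallyIntegrable_const (1 : ℝ)).mono hF.aestronglyMeasurable
    (.of_forall fun x => by simpa using hF1 x)).locallyIntegrableOn s

lemma isBigO_rpow_neg_zero_of_norm_le_one {F : ℝ → ℂ} (hF1 : ∀ x, ‖F x‖ ≤ 1) (l : Filter ℝ) :
    F =O[l] fun u : ℝ => u ^ (-(0 : ℝ)) :=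
  .of_bound 1 (.of_forall fun u => by simpa using hF1 u)

lemma mellinConvergent_fract_neg {s : ℂ} (hs₀ : 0 < s.re) (hs₁ : s.re < 1) :
    MellinConvergent (fun u : ℝ => ((Int.fract u : ℝ) : ℂ)) (-s) := by
  refine mellinConvergent_of_isBigO_rpow (a := 0) (b := -1)
    (locallyIntegrableOn_of_norm_le_one measurable_ofReal_fract norm_ofReal_fract_le_one _)
    (isBigO_rpow_neg_zero_of_norm_le_one norm_ofReal_fract_le_one _) (by simpa using hs₀)
    (.of_bound 1 ?_) (by simpa using hs₁)
  filter_upwards [Ioo_mem_nhdsGT (zero_lt_one (α := ℝ))] with u hu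
  simp [Int.fract_eq_self.2 ⟨hu.1.le, hu.2⟩]

/-- The fractional part cut off to `(1, ∞)`. Unlike that of the fractional part itself, its Mellin
transform converges on a whole half-plane, which is what analytic continuation from the region of
absolute convergence of `ζ` needs. -/
def fractTail (u : ℝ) : ℂ :=
  Set.indicator (Set.Ioi 1) (fun u : ℝ => ((Int.fract u : ℝ) : ℂ)) u

lemma norm_fractTail_le_one (u : ℝ) : ‖fractTail u‖ ≤ 1 :=
  (norm_indicator_le_norm_self _ _).trans (norm_ofReal_fract_le_one u)

lemma measurable_fractTail : Measurable fractTail :=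
  measurable_ofReal_fract.indicator measurableSet_Ioi

lemma fractTail_isBigO_rpow_nhdsGT_zero (b : ℝ) :
    fractTail =O[nhdsWithin 0 (Set.Ioi 0)] fun u : ℝ => u ^ (-b) := by
  refine .of_bound 1 ?_
  filter_upwards [Ioo_mem_nhdsGT (zero_lt_one (α := ℝ))] with u hu
  simp [fractTail, Set.indicator_of_notMem (Set.notMem_Ioi.2 hu.2.le)]

lemma mellinConvergent_fractTail {z : ℂ} (hz : z.re < 0) : MellinConvergent fractTail z :=
  mellinConvergent_of_isBigO_rpow (a := 0) (b := z.re - 1)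
    (locallyIntegrableOn_of_norm_le_one measurable_fractTail norm_fractTail_le_one _)
    (isBigO_rpow_neg_zero_of_norm_le_one norm_fractTail_le_one _) hz
    (fractTail_isBigO_rpow_nhdsGT_zero _) (by linarith)

lemma differentiableAt_mellin_fractTail {z : ℂ} (hz : z.re < 0) :
    DifferentiableAt ℂ (mellin fractTail) z :=
  mellin_differentiableAt_of_isBigO_rpow (a := 0) (b := z.re - 1)
    (locallyIntegrableOn_of_norm_le_one measurable_fractTail norm_fractTail_le_one _)
    (isBigO_rpow_neg_zero_of_norm_le_one norm_fractTail_le_one _) hz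
    (fractTail_isBigO_rpow_nhdsGT_zero _) (by linarith)

lemma cpow_smul_fractTail (s : ℂ) (t : ℝ) :
    (t : ℂ) ^ (-s - 1) • fractTail t = Set.indicator (Set.Ioi 1)
      (fun t : ℝ => ((Int.fract t : ℝ) : ℂ) * (t : ℂ) ^ (-(s + 1))) t := by
  rw [fractTail, smul_eq_mul, neg_add', mul_comm]
  exact (Set.indicator_mul_left (Set.Ioi 1) (fun t : ℝ => ((Int.fract t : ℝ) : ℂ))
    fun t : ℝ => (t : ℂ) ^ (-s - 1)).symm

lemma mellin_fractTail_neg (s : ℂ) : mellin fractTail (-s) =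
    ∫ t in Set.Ioi (1 : ℝ), ((Int.fract t : ℝ) : ℂ) * (t : ℂ) ^ (-(s + 1)) := by
  simp_rw [mellin, cpow_smul_fractTail]
  rw [setIntegral_indicator measurableSet_Ioi, Set.Ioi_inter_Ioi, sup_of_le_right zero_le_one]

lemma integrableOn_fract_mul_cpow {s : ℂ} (hs : 0 < s.re) :
    IntegrableOn (fun t : ℝ => ((Int.fract t : ℝ) : ℂ) * (t : ℂ) ^ (-(s + 1))) (Set.Ioi 1) := by
  have hconv : MellinConvergent fractTail (-s) := mellinConvergent_fractTail (by simpa using hs)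
  refine (hconv.mono_set (Set.Ioi_subset_Ioi zero_le_one)).congr_fun (fun t ht => ?_)
    measurableSet_Ioi
  dsimp only
  rw [cpow_smul_fractTail, Set.indicator_of_mem ht]

lemma riemannZeta_eq_mul_integral_floor {s : ℂ} (hs : 1 < s.re) :
    riemannZeta s = s * ∫ t in Set.Ioi (1 : ℝ), (⌊t⌋₊ : ℂ) * (t : ℂ) ^ (-(s + 1)) := by
  have hbound : (fun n : ℕ => ∑ k ∈ Finset.Icc 1 n, ‖(1 : ℕ → ℂ) k‖) =O[atTop]
      fun n => (n : ℝ) ^ (1 : ℝ) := by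
    simpa using Asymptotics.isBigO_refl (fun n : ℕ => (n : ℝ)) atTop
  have hLSeries := LSeries_eq_mul_integral' 1 zero_le_one hs hbound
  simpa [LSeries_one_eq_riemannZeta hs] using hLSeries

lemma riemannZeta_eq_sub_mul_mellin_fractTail_of_one_lt_re {s : ℂ} (hs : 1 < s.re) :
    riemannZeta s = s / (s - 1) - s * mellin fractTail (-s) := by
  have hs0 : 0 < s.re := one_pos.trans hs
  have hfloor : ∀ t ∈ Set.Ioi (1 : ℝ), (⌊t⌋₊ : ℂ) * (t : ℂ) ^ (-(s + 1)) =
      (t : ℂ) ^ (-s) - ((Int.fract t : ℝ) : ℂ) * (t : ℂ) ^ (-(s + 1)) := by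
    intro t ht
    have ht0 : 0 < t := one_pos.trans ht
    have hfract : (⌊t⌋₊ : ℂ) = t - ((Int.fract t : ℝ) : ℂ) := by
      rw [Int.fract, ← natCast_floor_eq_intCast_floor ht0.le]
      push_cast
      ring
    have hpow : (t : ℂ) ^ (-s) = t * (t : ℂ) ^ (-(s + 1)) := by
      rw [show -s = 1 + -(s + 1) by ring, Complex.cpow_add _ _ (by exact_mod_cast ht0.ne'),
        Complex.cpow_one]
    rw [hfract, hpow]
    ring
  have hs_neg : (-s).re < -1 := by simpa using hs
  rw [riemannZeta_eq_mul_integral_floor hs, mellin_fractTail_neg,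
    setIntegral_congr_fun measurableSet_Ioi hfloor,
    integral_sub (integrableOn_Ioi_cpow_of_lt hs_neg one_pos) (integrableOn_fract_mul_cpow hs0),
    integral_Ioi_cpow_of_lt hs_neg one_pos, mul_sub, Complex.ofReal_one, Complex.one_cpow,
    ← neg_sub s 1 |>.trans (by ring : 1 - s = -s + 1), neg_div_neg_eq, mul_one_div]

lemma differentiable_update_sub_one_mul_riemannZeta :
    Differentiable ℂ (Function.update (fun s => (s - 1) * riemannZeta s) 1 1) := by
  have hne {s : ℂ} (hs : s ≠ 1) :
      DifferentiableAt ℂ (Function.update (fun s => (s - 1) * riemannZeta s) 1 1) s := by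
    refine DifferentiableAt.congr_of_eventuallyEq
      ((differentiableAt_id.sub_const 1).mul (differentiableAt_riemannZeta hs)) ?_
    filter_upwards [isOpen_ne.mem_nhds hs] with z hz using Function.update_of_ne hz _ _
  intro s
  rcases eq_or_ne s 1 with rfl | hs
  · exact (Complex.analyticAt_of_differentiable_on_punctured_nhds_of_continuousAt
      (eventually_nhdsWithin_of_forall fun z hz => hne hz)
      (continuousAt_update_same.2 riemannZeta_residue_one)).differentiableAt
  · exact hne hs

-- Multiplying by `s - 1` turns both sides into holomorphic functions on the half-plane, so the
-- identity theorem applies on a convex set.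
lemma riemannZeta_eq_sub_mul_mellin_fractTail {s : ℂ} (hs : 0 < s.re) (hs1 : s ≠ 1) :
    riemannZeta s = s / (s - 1) - s * mellin fractTail (-s) := by
  set U : Set ℂ := {z | 0 < z.re}
  have hU : IsOpen U := isOpen_lt continuous_const Complex.continuous_re
  have hright : AnalyticOnNhd ℂ (fun z => z - (z - 1) * (z * mellin fractTail (-z))) U := by
    refine DifferentiableOn.analyticOnNhd (fun z hz => ?_) hU
    have hmellin : DifferentiableAt ℂ (fun z => mellin fractTail (-z)) z :=
      (differentiableAt_mellin_fractTail (by simpa [U] using hz)).comp z differentiableAt_id.neg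
    exact (differentiableAt_id.sub ((differentiableAt_id.sub_const 1).mul
      (differentiableAt_id.mul hmellin))).differentiableWithinAt
  have hnear : Function.update (fun z => (z - 1) * riemannZeta z) 1 1 =ᶠ[nhds 2]
      fun z => z - (z - 1) * (z * mellin fractTail (-z)) := by
    have hre : {z : ℂ | 1 < z.re} ∈ nhds 2 :=
      (isOpen_lt continuous_const Complex.continuous_re).mem_nhds (by simp)
    filter_upwards [hre] with z hz
    have hz1 : z ≠ 1 := by rintro rfl; simp at hz
    rw [Function.update_of_ne hz1, riemannZeta_eq_sub_mul_mellin_fractTail_of_one_lt_re hz, mul_sub,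
      mul_div_cancel₀ _ (sub_ne_zero.2 hz1)]
  have heq : Function.update (fun z => (z - 1) * riemannZeta z) 1 1 s =
      s - (s - 1) * (s * mellin fractTail (-s)) :=
    (differentiable_update_sub_one_mul_riemannZeta.differentiableOn.analyticOnNhd
      hU).eqOn_of_preconnected_of_eventuallyEq hright (convex_halfSpace_re_gt 0).isPreconnected
      (by simp [U] : (2 : ℂ) ∈ U) hnear hs
  rw [Function.update_of_ne hs1] at heq
  have hs1' : s - 1 ≠ 0 := sub_ne_zero.2 hs1
  field_simp
  linear_combination heq

lemma mellin_fract_neg {s : ℂ} (hs₀ : 0 < s.re) (hs₁ : s.re < 1) :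
    mellin (fun u : ℝ => ((Int.fract u : ℝ) : ℂ)) (-s) = -riemannZeta s / s := by
  have hs1 : s ≠ 1 := by rintro rfl; simp at hs₁
  have hs0 : s ≠ 0 := by rintro rfl; simp at hs₀
  have hhead := hasMellin_cpow_Ioc 1 (s := -s) (by simpa using hs₁)
  have hsplit := hasMellin_add hhead.1 (mellinConvergent_fractTail (z := -s) (by simpa using hs₀))
  have hfract : mellin (fun u : ℝ => ((Int.fract u : ℝ) : ℂ)) (-s) =
      mellin (fun t => (Set.Ioc (0 : ℝ) 1).indicator (fun t : ℝ => (t : ℂ) ^ (1 : ℂ)) t +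
        fractTail t) (-s) := by
    refine setIntegral_congr_ae measurableSet_Ioi ?_
    filter_upwards [Measure.ae_ne volume (1 : ℝ)] with t ht ht0
    congr 1
    rcases lt_or_gt_of_ne ht with hlt | hgt
    · simp [fractTail, hlt.le, Set.mem_Ioi.1 ht0, Int.fract_eq_self.2 ⟨le_of_lt ht0, hlt⟩]
    · simp [fractTail, hgt, hgt.not_ge]
  rw [hfract, hsplit.2, hhead.2, riemannZeta_eq_sub_mul_mellin_fractTail hs₀ hs1]
  have hs1' : s - 1 ≠ 0 := sub_ne_zero.2 hs1
  have hs1'' : -s + 1 ≠ 0 := by rwa [neg_add_eq_sub, ← neg_ne_zero, neg_sub]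
  field_simp
  ring

lemma hasMellin_sum {ι : Type*} {F : ι → ℝ → ℂ} {s : ℂ} (S : Finset ι)
    (hF : ∀ k ∈ S, MellinConvergent (F k) s) :
    HasMellin (fun u => ∑ k ∈ S, F k u) s (∑ k ∈ S, mellin (F k) s) := by
  simp only [HasMellin, MellinConvergent, mellin, Finset.smul_sum]
  exact ⟨integrable_finsetSum S hF, integral_finsetSum S hF⟩

end ZetaMellin

section MollifiedZetaMellin

/-- The mollifier `∑_{k ≤ y} μ(k) g(log (y / k) / log y) k^{-s}` with smooth weight `g`. -/
def weightedMollifier (g : ℝ → ℂ) (y : ℝ) (s : ℂ) : ℂ :=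
  ∑ k ∈ Finset.Ioc 0 ⌊y⌋₊, mollifierCoeff g y k * (k : ℂ) ^ (-s)

/-- The difference of `mollifiedFract g y` at `(1 + x) u` and at `u`. Subtracting the dilated
function multiplies the Mellin transform by `(1 + x)^s - 1`, which for `x ≍ 1 / T` is of constant
size at height `T`. -/
def dilationIncrement (g : ℝ → ℂ) (y x u : ℝ) : ℂ :=
  mollifiedFract g y ((1 + x) * u) - mollifiedFract g y u

/-- The square of the weighted `L²` norm of the dilation increment on `S`, for the weight
`u^{-2σ-1}` of the Mellin transform on the line of real part `σ`. -/
def dilationEnergy (g : ℝ → ℂ) (y σ x : ℝ) (S : Set ℝ) : ENNReal :=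
  ∫⁻ u in S, ‖dilationIncrement g y x u‖ₑ ^ 2 * ENNReal.ofReal (u ^ (-2 * σ - 1))

variable (g : ℝ → ℂ) (y : ℝ)

lemma measurable_dilationIncrement (x : ℝ) : Measurable (dilationIncrement g y x) := by
  unfold dilationIncrement
  fun_prop

variable {s : ℂ}

lemma hasMellin_fract_div_natCast (hs₀ : 0 < s.re) (hs₁ : s.re < 1) {k : ℕ} (hk : 0 < k) :
    HasMellin (fun u : ℝ => ((Int.fract (u / k) : ℝ) : ℂ)) (-s)
      (-riemannZeta s / s * (k : ℂ) ^ (-s)) := by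
  have hk' : (0 : ℝ) < (k : ℝ)⁻¹ := by positivity
  simp_rw [div_eq_inv_mul]
  refine ⟨(MellinConvergent.comp_mul_left (f := fun v : ℝ => ((Int.fract v : ℝ) : ℂ)) hk').2
    (mellinConvergent_fract_neg hs₀ hs₁), ?_⟩
  rw [mellin_comp_mul_left (fun v : ℝ => ((Int.fract v : ℝ) : ℂ)) _ hk',
    mellin_fract_neg hs₀ hs₁, smul_eq_mul, neg_neg, Complex.ofReal_inv, Complex.ofReal_natCast,
    Complex.inv_cpow _ _ (by rw [Complex.natCast_arg]; exact Real.pi_pos.ne), Complex.cpow_neg]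
  ring

lemma hasMellin_mollifiedFract (hs₀ : 0 < s.re) (hs₁ : s.re < 1) :
    HasMellin (mollifiedFract g y) (-s) (-riemannZeta s / s * weightedMollifier g y s) := by
  have hterm : ∀ k ∈ Finset.Ioc 0 ⌊y⌋₊, HasMellin
      (fun u : ℝ => mollifierCoeff g y k • ((Int.fract (u / k) : ℝ) : ℂ)) (-s)
      (mollifierCoeff g y k • (-riemannZeta s / s * (k : ℂ) ^ (-s))) := fun k hk => by
    have hfract := hasMellin_fract_div_natCast hs₀ hs₁ (Finset.mem_Ioc.1 hk).1
    rw [← hfract.2]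
    exact hasMellin_const_smul hfract.1 _
  obtain ⟨hconv, hvalue⟩ := hasMellin_sum _ fun k hk => (hterm k hk).1
  refine ⟨hconv, hvalue.trans ?_⟩
  rw [weightedMollifier, Finset.mul_sum]
  refine Finset.sum_congr rfl fun k hk => ?_
  rw [(hterm k hk).2, smul_eq_mul]
  ring

lemma hasMellin_dilationIncrement (hs₀ : 0 < s.re) (hs₁ : s.re < 1) {x : ℝ} (hx : 0 < 1 + x) :
    HasMellin (dilationIncrement g y x) (-s)
      ((((1 + x : ℝ) : ℂ) ^ s - 1) * (-riemannZeta s / s * weightedMollifier g y s)) := by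
  obtain ⟨hconv, hvalue⟩ := hasMellin_mollifiedFract g y hs₀ hs₁
  obtain ⟨hconv', hvalue'⟩ := hasMellin_sub ((MellinConvergent.comp_mul_left hx).2 hconv) hconv
  refine ⟨hconv', hvalue'.trans ?_⟩
  rw [mellin_comp_mul_left _ _ hx, hvalue, neg_neg, smul_eq_mul]
  ring

variable {σ x : ℝ}

lemma lintegral_enorm_sq_mul_riemannZeta_mul_weightedMollifier_le (hσ₀ : 0 < σ) (hσ₁ : σ < 1)
    (hx : 0 < 1 + x) :
    ∫⁻ t : ℝ, ‖(((1 + x : ℝ) : ℂ) ^ (σ + t * Complex.I) - 1) *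
      (-riemannZeta (σ + t * Complex.I) / (σ + t * Complex.I) *
        weightedMollifier g y (σ + t * Complex.I))‖ₑ ^ 2 ≤
    ENNReal.ofReal (2 * π) * dilationEnergy g y σ x (Set.Ioi 0) := by
  have hmellin (t : ℝ) := hasMellin_dilationIncrement g y (s := σ + t * Complex.I)
    (by simpa using hσ₀) (by simpa using hσ₁) hx
  have hconv : MellinConvergent (dilationIncrement g y x) ((-σ : ℝ) : ℂ) := by
    simpa using (hmellin 0).1
  have hplancherel := lintegral_enorm_sq_mellin_le
    (measurable_dilationIncrement g y x).stronglyMeasurable hconv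
  rw [← lintegral_neg_eq_self, mul_neg, ← neg_mul] at hplancherel
  refine (lintegral_congr fun t => ?_).trans_le hplancherel
  rw [← (hmellin t).2]
  congr 3
  push_cast
  ring

end MollifiedZetaMellin

section DilationFactor

lemma one_div_sixteen_le_sin {θ : ℝ} (hθ₀ : 1 / 8 ≤ θ) (hθ₁ : θ ≤ 5 / 2) :
    1 / 16 ≤ Real.sin θ := by
  have hpi : (3.14 : ℝ) < π := Real.pi_gt_d2
  have hfirst {z : ℝ} (hz₀ : 1 / 8 ≤ z) (hz₁ : z ≤ π / 2) : 1 / 16 ≤ Real.sin z := by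
    refine le_trans ?_ (Real.mul_le_sin (by linarith) hz₁)
    rw [div_mul_eq_mul_div, le_div_iff₀ Real.pi_pos]
    linarith [Real.pi_lt_d2]
  rcases le_or_gt θ (π / 2) with h | h
  · exact hfirst hθ₀ h
  · rw [← Real.sin_pi_sub]
    exact hfirst (by linarith) (by linarith)

lemma half_le_log_one_add {x : ℝ} (hx₀ : 0 ≤ x) (hx₁ : x ≤ 1) : x / 2 ≤ Real.log (1 + x) := by
  have hx : 0 < 1 + x := by linarith
  refine le_trans ?_ (Real.one_sub_inv_le_log_of_pos hx)
  rw [← sub_nonneg, show 1 - (1 + x)⁻¹ - x / 2 = x * (1 - x) / (2 * (1 + x)) by field_simp; ring]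
  exact div_nonneg (mul_nonneg hx₀ (by linarith)) (by linarith)

lemma ofReal_cpow_sub_one_im {a : ℝ} (ha : 0 < a) (σ t : ℝ) :
    ((a : ℂ) ^ (σ + t * Complex.I) - 1).im =
      Real.exp (σ * Real.log a) * Real.sin (t * Real.log a) := by
  rw [Complex.cpow_def_of_ne_zero (by exact_mod_cast ha.ne'), ← Complex.ofReal_log ha.le,
    Complex.sub_im, Complex.exp_im]
  simp [mul_comm]

variable {T σ t x : ℝ}

lemma one_div_sixteen_le_norm_cpow_sub_one (hT : 1 ≤ T) (hσ : 0 ≤ σ) (hx₀ : 1 / (2 * T) ≤ x)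
    (hx₁ : x ≤ 1 / T) (ht₀ : T / 2 ≤ t) (ht₁ : t ≤ 5 * T / 2) :
    1 / 16 ≤ ‖((1 + x : ℝ) : ℂ) ^ (σ + t * Complex.I) - 1‖ := by
  have hx : 0 < x := lt_of_lt_of_le (by positivity) hx₀
  have hxT₁ : x * T ≤ 1 := by rwa [le_div_iff₀ (by linarith)] at hx₁
  have hxT₀ : 1 ≤ x * (2 * T) := by rwa [div_le_iff₀ (by linarith)] at hx₀
  have hlog₁ : Real.log (1 + x) ≤ x := by
    linarith [Real.log_le_sub_one_of_pos (by linarith : 0 < 1 + x)]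
  have hlog₀ : x / 2 ≤ Real.log (1 + x) := half_le_log_one_add hx.le (by nlinarith)
  have hsin : 1 / 16 ≤ Real.sin (t * Real.log (1 + x)) :=
    one_div_sixteen_le_sin (by nlinarith) (by nlinarith)
  have hexp : 1 ≤ Real.exp (σ * Real.log (1 + x)) :=
    Real.one_le_exp (mul_nonneg hσ (by linarith))
  refine le_trans ?_ ((le_abs_self _).trans (Complex.abs_im_le_norm _))
  rw [ofReal_cpow_sub_one_im (by linarith)]
  nlinarith

variable (g : ℝ → ℂ) (y : ℝ)

lemma enorm_sq_riemannZeta_mul_weightedMollifier_le (hT : 2 ≤ T) (hσ₀ : 0 ≤ σ) (hσ₁ : σ ≤ 1)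
    (hx₀ : 1 / (2 * T) ≤ x) (hx₁ : x ≤ 1 / T) (ht : t ∈ Set.Icc (T / 2) (5 * T / 2)) :
    ‖riemannZeta (σ + t * Complex.I) * weightedMollifier g y (σ + t * Complex.I)‖ₑ ^ 2 ≤
      ENNReal.ofReal (2304 * T ^ 2) * ‖(((1 + x : ℝ) : ℂ) ^ (σ + t * Complex.I) - 1) *
        (-riemannZeta (σ + t * Complex.I) / (σ + t * Complex.I) *
          weightedMollifier g y (σ + t * Complex.I))‖ₑ ^ 2 := by
  have hfactor := one_div_sixteen_le_norm_cpow_sub_one (by linarith) hσ₀ hx₀ hx₁ ht.1 ht.2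
  have ht0 : 0 < t := by linarith [ht.1]
  set s : ℂ := σ + t * Complex.I with hs
  have hs_pos : 0 < ‖s‖ :=
    norm_pos_iff.2 fun h => ht0.ne' (by simpa [hs] using congrArg Complex.im h)
  have hs_le : ‖s‖ ≤ 3 * T := calc
    ‖s‖ ≤ |s.re| + |s.im| := Complex.norm_le_abs_re_add_abs_im s
    _ = σ + t := by simp [hs, abs_of_nonneg hσ₀, abs_of_pos ht0]
    _ ≤ 3 * T := by linarith [ht.2]
  simp only [← ofReal_norm]
  rw [← ENNReal.ofReal_pow (norm_nonneg _), ← ENNReal.ofReal_pow (norm_nonneg _),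
    ← ENNReal.ofReal_mul (by positivity), show 2304 * T ^ 2 = (48 * T) ^ 2 by ring, ← mul_pow]
  refine ENNReal.ofReal_le_ofReal (pow_le_pow_left₀ (norm_nonneg _) ?_ 2)
  calc ‖riemannZeta s * weightedMollifier g y s‖
      ≤ 48 * T * ‖((1 + x : ℝ) : ℂ) ^ s - 1‖ / ‖s‖ * ‖riemannZeta s * weightedMollifier g y s‖ := by
        refine le_mul_of_one_le_left (norm_nonneg _) ((one_le_div hs_pos).2 ?_)
        nlinarith
    _ = 48 * T * ‖(((1 + x : ℝ) : ℂ) ^ s - 1) *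
          (-riemannZeta s / s * weightedMollifier g y s)‖ := by
        simp only [norm_mul, norm_div, norm_neg]
        ring

lemma setLIntegral_enorm_sq_riemannZeta_mul_weightedMollifier_le (hT : 2 ≤ T) (hσ₀ : 0 < σ)
    (hσ₁ : σ < 1) (hx₀ : 1 / (2 * T) ≤ x) (hx₁ : x ≤ 1 / T) :
    ∫⁻ t in Set.Icc (T / 2) (5 * T / 2),
      ‖riemannZeta (σ + t * Complex.I) * weightedMollifier g y (σ + t * Complex.I)‖ₑ ^ 2 ≤
    ENNReal.ofReal (20000 * T ^ 2) * dilationEnergy g y σ x (Set.Ioi 0) := by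
  have hx : 0 < x := lt_of_lt_of_le (by positivity) hx₀
  set J := dilationEnergy g y σ x (Set.Ioi 0)
  calc _ ≤ ∫⁻ t in Set.Icc (T / 2) (5 * T / 2), ENNReal.ofReal (2304 * T ^ 2) *
          ‖(((1 + x : ℝ) : ℂ) ^ (σ + t * Complex.I) - 1) *
            (-riemannZeta (σ + t * Complex.I) / (σ + t * Complex.I) *
              weightedMollifier g y (σ + t * Complex.I))‖ₑ ^ 2 :=
        setLIntegral_mono_ae' measurableSet_Icc (.of_forall fun t ht =>
          enorm_sq_riemannZeta_mul_weightedMollifier_le g y hT hσ₀.le hσ₁.le hx₀ hx₁ ht)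
    _ ≤ ENNReal.ofReal (2304 * T ^ 2) * (ENNReal.ofReal (2 * π) * J) := by
        rw [lintegral_const_mul' _ _ ENNReal.ofReal_ne_top]
        gcongr
        exact (setLIntegral_le_lintegral _ _).trans
          (lintegral_enorm_sq_mul_riemannZeta_mul_weightedMollifier_le g y hσ₀ hσ₁ (by linarith))
    _ ≤ ENNReal.ofReal (20000 * T ^ 2) * J := by
        rw [← mul_assoc, ← ENNReal.ofReal_mul (by positivity)]
        refine mul_le_mul_left (ENNReal.ofReal_le_ofReal ?_) J
        nlinarith [sq_nonneg T, Real.pi_lt_d2]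

end DilationFactor

/-! ### The dilation energy on the initial range and on the tail -/

section DilationEnergyInitial

lemma rpow_one_sub_two_mul_le_exp {v L K σ : ℝ} (hv : 1 ≤ v) (hL : 0 < L)
    (hvL : Real.log v ≤ 4 * L) (hσ : |σ - 1 / 2| ≤ K / L) :
    v ^ (1 - 2 * σ) ≤ Real.exp (8 * K) := by
  have hlog : 0 ≤ Real.log v := Real.log_nonneg hv
  have hexponent : 1 - 2 * σ ≤ 2 * (K / L) := by linarith [(abs_le.1 hσ).1]
  have hKL : 0 ≤ K / L := (abs_nonneg _).trans hσ
  rw [Real.rpow_def_of_pos (by linarith)]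
  refine Real.exp_le_exp.2 ?_
  calc Real.log v * (1 - 2 * σ) ≤ Real.log v * (2 * (K / L)) := by gcongr
    _ ≤ 4 * L * (2 * (K / L)) := by gcongr
    _ = 8 * K := by field_simp; ring

lemma fractIncrement_eq {u H : ℝ} (hu : 0 ≤ u) (hH : 0 ≤ H) (k : ℕ) :
    fractIncrement H k u = H / k - (((⌊u + H⌋₊ / k : ℕ) : ℝ) - ((⌊u⌋₊ / k : ℕ) : ℝ)) := by
  have hfract {v : ℝ} (hv : 0 ≤ v) : Int.fract (v / k) = v / k - ((⌊v⌋₊ / k : ℕ) : ℝ) := by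
    rw [Int.fract, ← natCast_floor_eq_intCast_floor (by positivity), Nat.floor_div_natCast]
  rw [fractIncrement, hfract hu, hfract (add_nonneg hu hH)]
  ring

lemma sum_mollifierCoeff_mul_natDiv_sub (g : ℝ → ℂ) (y : ℝ) {m n : ℕ} (hmn : m ≤ n)
    (hnm : n ≤ m + 1) :
    ∑ k ∈ Finset.Ioc 0 ⌊y⌋₊, mollifierCoeff g y k * (((n / k : ℕ) : ℂ) - ((m / k : ℕ) : ℂ)) =
      if m < n then mollifierDivisorSum g y n else 0 := by
  split_ifs with h
  · obtain rfl : n = m + 1 := by omega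
    rw [mollifierDivisorSum, Finset.sum_filter]
    refine Finset.sum_congr rfl fun k _ => ?_
    rw [Nat.succ_div]
    split_ifs <;> simp
  · obtain rfl : n = m := by omega
    simp

lemma mollifiedFract_add_sub_of_le_one (g : ℝ → ℂ) (y : ℝ) {u H : ℝ} (hu : 0 ≤ u) (hH₀ : 0 ≤ H)
    (hH₁ : H ≤ 1) :
    mollifiedFract g y (u + H) - mollifiedFract g y u =
      (∑ k ∈ Finset.Ioc 0 ⌊y⌋₊, mollifierCoeff g y k / k) * H -
        if ⌊u⌋₊ < ⌊u + H⌋₊ then mollifierDivisorSum g y ⌊u + H⌋₊ else 0 := by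
  have hfloor : ⌊u + H⌋₊ ≤ ⌊u⌋₊ + 1 := by
    rw [← Nat.floor_add_one hu]
    exact Nat.floor_mono (by linarith)
  rw [← sum_mollifierCoeff_mul_natDiv_sub g y (Nat.floor_mono (by linarith)) hfloor,
    mollifiedFract_add_sub, Finset.sum_mul, ← Finset.sum_sub_distrib]
  refine Finset.sum_congr rfl fun k _ => ?_
  rw [fractIncrement_eq hu hH₀]
  push_cast
  ring

variable (g : ℝ → ℂ) (y : ℝ) {σ x u T K : ℝ}

lemma enorm_sq_dilationIncrement_le {M : ℕ} (hu : 0 < u) (hx : 0 < x) (hux : x * u ≤ 1)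
    (hM : (1 + x) * u ≤ M) :
    ‖dilationIncrement g y x u‖ₑ ^ 2 ≤
      ENNReal.ofReal (2 * (‖∑ k ∈ Finset.Ioc 0 ⌊y⌋₊, mollifierCoeff g y k / k‖ * x) ^ 2 * u ^ 2) +
        ∑ m ∈ Finset.Ioc 0 M, (Set.Ico (m / (1 + x)) m).indicator
          (fun _ => ENNReal.ofReal (2 * ‖mollifierDivisorSum g y m‖ ^ 2)) u := by
  set β := ∑ k ∈ Finset.Ioc 0 ⌊y⌋₊, mollifierCoeff g y k / k
  have hxu : 0 < x * u := by positivity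
  have hsq (a b : ℂ) : ‖a - b‖ ^ 2 ≤ 2 * ‖a‖ ^ 2 + 2 * ‖b‖ ^ 2 := calc
    ‖a - b‖ ^ 2 ≤ (‖a‖ + ‖b‖) ^ 2 := pow_le_pow_left₀ (norm_nonneg _) (norm_sub_le a b) 2
    _ ≤ 2 * ‖a‖ ^ 2 + 2 * ‖b‖ ^ 2 := by linarith [add_sq_le (a := ‖a‖) (b := ‖b‖)]
  have hlinear : 2 * ‖β * ((x * u : ℝ) : ℂ)‖ ^ 2 = 2 * (‖β‖ * x) ^ 2 * u ^ 2 := by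
    rw [norm_mul, Complex.norm_of_nonneg hxu.le]
    ring
  rw [dilationIncrement, show (1 + x) * u = u + x * u by ring,
    mollifiedFract_add_sub_of_le_one g y hu.le hxu.le hux, ← ofReal_norm,
    ← ENNReal.ofReal_pow (norm_nonneg _)]
  refine (ENNReal.ofReal_le_ofReal (hsq _ _)).trans ?_
  rw [ENNReal.ofReal_add (by positivity) (by positivity), hlinear]
  gcongr
  split_ifs with hjump
  · set m := ⌊u + x * u⌋₊
    have hm : (m : ℝ) ≤ u + x * u := Nat.floor_le (by linarith)
    have hmem : m ∈ Finset.Ioc 0 M :=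
      Finset.mem_Ioc.2 ⟨by omega, by exact_mod_cast (by linarith : (m : ℝ) ≤ M)⟩
    have hu_mem : u ∈ Set.Ico ((m : ℝ) / (1 + x)) m :=
      ⟨(div_le_iff₀ (by linarith)).2 (by linarith), (Nat.floor_lt hu.le).1 hjump⟩
    refine le_trans ?_ (Finset.single_le_sum (fun _ _ => zero_le) hmem)
    rw [Set.indicator_of_mem hu_mem]
  · simp

lemma dilationEnergy_Ioc_zero_le_add_sum {M : ℕ} (hx : 0 < x) (hxT : x * T ≤ 1)
    (hM : (1 + x) * T ≤ M) :
    dilationEnergy g y σ x (Set.Ioc 0 T) ≤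
      ENNReal.ofReal (2 * (‖∑ k ∈ Finset.Ioc 0 ⌊y⌋₊, mollifierCoeff g y k / k‖ * x) ^ 2) *
        (∫⁻ u in Set.Ioc 0 T, ENNReal.ofReal (u ^ (1 - 2 * σ))) +
      ∑ m ∈ Finset.Ioc 0 M, ENNReal.ofReal (2 * ‖mollifierDivisorSum g y m‖ ^ 2) *
        ∫⁻ u in Set.Ico (m / (1 + x)) m, ENNReal.ofReal (u ^ (-2 * σ - 1)) := by
  set b := ‖∑ k ∈ Finset.Ioc 0 ⌊y⌋₊, mollifierCoeff g y k / k‖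
  set c : ℕ → ENNReal := fun m => ENNReal.ofReal (2 * ‖mollifierDivisorSum g y m‖ ^ 2) with hc
  have hbound : ∀ u ∈ Set.Ioc 0 T,
      ‖dilationIncrement g y x u‖ₑ ^ 2 * ENNReal.ofReal (u ^ (-2 * σ - 1)) ≤
        ENNReal.ofReal (2 * (b * x) ^ 2) * ENNReal.ofReal (u ^ (1 - 2 * σ)) +
          ∑ m ∈ Finset.Ioc 0 M, (Set.Ico (m / (1 + x)) m).indicator
            (fun u => c m * ENNReal.ofReal (u ^ (-2 * σ - 1))) u := fun u hu => by
    have hsquare : u ^ 2 * u ^ (-2 * σ - 1) = u ^ (1 - 2 * σ) := by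
      rw [← Real.rpow_two, ← Real.rpow_add hu.1]
      ring_nf
    refine (mul_le_mul_left
      (enorm_sq_dilationIncrement_le g y (M := M) hu.1 hx ?_ ?_) _).trans_eq ?_
    · exact (mul_le_mul_of_nonneg_left hu.2 hx.le).trans hxT
    · exact (mul_le_mul_of_nonneg_left hu.2 (by linarith)).trans hM
    · rw [add_mul, Finset.sum_mul, ENNReal.ofReal_mul (by positivity), mul_assoc,
        ← ENNReal.ofReal_mul (by positivity), hsquare]
      simp only [b, hc, Set.indicator_mul_left]
  refine (setLIntegral_mono_ae' measurableSet_Ioc (.of_forall hbound)).trans ?_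
  rw [lintegral_add_left (by fun_prop), lintegral_const_mul _ (by fun_prop), lintegral_finsetSum _
    fun m _ => Measurable.indicator (by fun_prop) measurableSet_Ico]
  gcongr with m _
  refine (setLIntegral_le_lintegral _ _).trans_eq ?_
  rw [lintegral_indicator measurableSet_Ico, lintegral_const_mul _ (by fun_prop)]

lemma lintegral_Ioc_zero_rpow_one_sub_two_mul_le (hT : 1 < T) (hσ : σ ≤ 3 / 4)
    (hσK : |σ - 1 / 2| ≤ K / Real.log T) :
    ∫⁻ u in Set.Ioc 0 T, ENNReal.ofReal (u ^ (1 - 2 * σ)) ≤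
      ENNReal.ofReal (2 * Real.exp (8 * K) * T) := by
  have hT₀ : 0 < T := by linarith
  have hL : 0 < Real.log T := Real.log_pos hT
  have hint : IntegrableOn (fun u : ℝ => u ^ (1 - 2 * σ)) (Set.Ioc 0 T) :=
    (intervalIntegrable_iff_integrableOn_Ioc_of_le hT₀.le).1
      (intervalIntegral.intervalIntegrable_rpow' (by linarith))
  rw [← ofReal_integral_eq_lintegral_ofReal hint ((ae_restrict_iff' measurableSet_Ioc).2
    (.of_forall fun u hu => Real.rpow_nonneg hu.1.le _)), ← intervalIntegral.integral_of_le hT₀.le,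
    integral_rpow (Or.inl (by linarith)), Real.zero_rpow (by linarith), sub_zero,
    Real.rpow_add_one hT₀.ne']
  refine ENNReal.ofReal_le_ofReal ((div_le_iff₀ (by linarith)).2 ?_)
  have hweight := rpow_one_sub_two_mul_le_exp hT.le hL (by linarith) hσK
  calc T ^ (1 - 2 * σ) * T ≤ Real.exp (8 * K) * T := by gcongr
    _ ≤ Real.exp (8 * K) * T * (2 * (1 - 2 * σ + 1)) :=
        le_mul_of_one_le_right (by positivity) (by linarith)
    _ = 2 * Real.exp (8 * K) * T * (1 - 2 * σ + 1) := by ring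

lemma rpow_neg_two_mul_sub_one_le {m : ℝ} (hm : 1 ≤ m) (hmu : m / 2 ≤ u)
    (hmT : Real.log m ≤ 4 * Real.log T) (hT : 1 < T) (hσ₀ : 1 / 4 ≤ σ) (hσ₁ : σ ≤ 3 / 4)
    (hσK : |σ - 1 / 2| ≤ K / Real.log T) :
    u ^ (-2 * σ - 1) ≤ 8 * Real.exp (8 * K) / m ^ 2 := by
  have hweight := rpow_one_sub_two_mul_le_exp hm (Real.log_pos hT) hmT hσK
  have htwo : (2 : ℝ) ^ (2 * σ + 1) ≤ 8 := calc
    (2 : ℝ) ^ (2 * σ + 1) ≤ 2 ^ (3 : ℝ) :=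
      Real.rpow_le_rpow_of_exponent_le one_le_two (by linarith)
    _ = 8 := by norm_num
  calc u ^ (-2 * σ - 1) ≤ (m / 2) ^ (-2 * σ - 1) :=
        Real.rpow_le_rpow_of_nonpos (by linarith) hmu (by linarith)
    _ = 2 ^ (2 * σ + 1) * m ^ (1 - 2 * σ) / m ^ 2 := by
        rw [Real.div_rpow (by linarith) zero_le_two, mul_div_assoc, ← Real.rpow_two,
          ← Real.rpow_sub (by linarith), show -2 * σ - 1 = -(2 * σ + 1) by ring,
          Real.rpow_neg zero_le_two, div_inv_eq_mul, mul_comm]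
        ring_nf
    _ ≤ 8 * Real.exp (8 * K) / m ^ 2 := by gcongr

lemma lintegral_Ico_rpow_neg_two_mul_sub_one_le {m : ℝ} (hm : 1 ≤ m)
    (hmT : Real.log m ≤ 4 * Real.log T) (hT : 1 < T) (hx₀ : 0 < x) (hx₁ : x ≤ 1)
    (hσ₀ : 1 / 4 ≤ σ) (hσ₁ : σ ≤ 3 / 4) (hσK : |σ - 1 / 2| ≤ K / Real.log T) :
    ∫⁻ u in Set.Ico (m / (1 + x)) m, ENNReal.ofReal (u ^ (-2 * σ - 1)) ≤
      ENNReal.ofReal (8 * Real.exp (8 * K) * x / m) := by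
  have hhalf : m / 2 ≤ m / (1 + x) :=
    div_le_div_of_nonneg_left (by linarith) (by linarith) (by linarith)
  have hlength : m - m / (1 + x) ≤ m * x := by
    have hsub : m - m / (1 + x) = m * x / (1 + x) := by field_simp; ring
    rw [hsub]
    exact div_le_self (by positivity) (by linarith)
  calc _ ≤ ∫⁻ _ in Set.Ico (m / (1 + x)) m, ENNReal.ofReal (8 * Real.exp (8 * K) / m ^ 2) :=
        setLIntegral_mono_ae' measurableSet_Ico (.of_forall fun u hu => ENNReal.ofReal_le_ofReal
          (rpow_neg_two_mul_sub_one_le hm (hhalf.trans hu.1) hmT hT hσ₀ hσ₁ hσK))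
    _ = ENNReal.ofReal (8 * Real.exp (8 * K) / m ^ 2 * (m - m / (1 + x))) := by
        rw [setLIntegral_const, Real.volume_Ico, ← ENNReal.ofReal_mul (by positivity)]
    _ ≤ ENNReal.ofReal (8 * Real.exp (8 * K) / m ^ 2 * (m * x)) :=
        ENNReal.ofReal_le_ofReal (mul_le_mul_of_nonneg_left hlength (by positivity))
    _ = ENNReal.ofReal (8 * Real.exp (8 * K) * x / m) := by
        congr 1
        field_simp

lemma log_le_two_mul_log {m : ℕ} (hT : 3 ≤ T) (hm : m ∈ Finset.Ioc 0 ⌊2 * T⌋₊) :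
    Real.log m ≤ 2 * Real.log T := by
  obtain ⟨hm₀, hm₁⟩ := Finset.mem_Ioc.1 hm
  have hm₂ : (m : ℝ) ≤ 2 * T := (Nat.le_floor_iff (by linarith)).1 hm₁
  rw [← Real.log_rpow (by linarith), Real.rpow_two]
  exact Real.log_le_log (by exact_mod_cast hm₀) (by nlinarith)

lemma dilationEnergy_Ioc_zero_le {B C : ℝ} (hT : 3 ≤ T) (hx₀ : 0 < x) (hx₁ : x ≤ 1 / T)
    (hσ₀ : 1 / 4 ≤ σ) (hσ₁ : σ ≤ 3 / 4) (hσK : |σ - 1 / 2| ≤ K / Real.log T)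
    (hB : ‖∑ k ∈ Finset.Ioc 0 ⌊y⌋₊, mollifierCoeff g y k / k‖ ≤ B)
    (hC : ∑ m ∈ Finset.Ioc 0 ⌊2 * T⌋₊, ‖mollifierDivisorSum g y m‖ ^ 2 / m ≤ C) :
    dilationEnergy g y σ x (Set.Ioc 0 T) ≤
      ENNReal.ofReal ((4 * B ^ 2 + 16 * C) * Real.exp (8 * K) / T) := by
  have hT₀ : 0 < T := by linarith
  have hxT : x * T ≤ 1 := by rwa [le_div_iff₀ hT₀] at hx₁
  refine (dilationEnergy_Ioc_zero_le_add_sum g y (M := ⌊2 * T⌋₊) hx₀ hxT ?_).trans ?_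
  · nlinarith [Nat.lt_floor_add_one (2 * T)]
  calc _ ≤ ENNReal.ofReal (2 * (B * x) ^ 2) * ENNReal.ofReal (2 * Real.exp (8 * K) * T) +
        ∑ m ∈ Finset.Ioc 0 ⌊2 * T⌋₊, ENNReal.ofReal (2 * ‖mollifierDivisorSum g y m‖ ^ 2) *
          ENNReal.ofReal (8 * Real.exp (8 * K) * x / m) := by
        refine add_le_add (mul_le_mul' (ENNReal.ofReal_le_ofReal (by gcongr))
          (lintegral_Ioc_zero_rpow_one_sub_two_mul_le (by linarith) hσ₁ hσK))
          (Finset.sum_le_sum fun m hm => mul_le_mul_right ?_ _)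
        exact lintegral_Ico_rpow_neg_two_mul_sub_one_le
          (by exact_mod_cast (Finset.mem_Ioc.1 hm).1)
          (by linarith [log_le_two_mul_log hT hm, Real.log_pos (by linarith : 1 < T)])
          (by linarith) hx₀
          (hx₁.trans ((div_le_one hT₀).2 (by linarith))) hσ₀ hσ₁ hσK
    _ = ENNReal.ofReal (x * Real.exp (8 * K) * (4 * B ^ 2 * (x * T) + 16 *
          ∑ m ∈ Finset.Ioc 0 ⌊2 * T⌋₊, ‖mollifierDivisorSum g y m‖ ^ 2 / m)) := by
        have hmul (a b : ℝ) : ENNReal.ofReal (2 * a ^ 2) * ENNReal.ofReal b =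
            ENNReal.ofReal (2 * a ^ 2 * b) := (ENNReal.ofReal_mul (by positivity)).symm
        simp_rw [hmul]
        rw [← ENNReal.ofReal_sum_of_nonneg fun m _ => by positivity,
          ← ENNReal.ofReal_add (by positivity) (Finset.sum_nonneg fun m _ => by positivity),
          mul_add, Finset.mul_sum, Finset.mul_sum]
        congr 2
        · ring
        · exact Finset.sum_congr rfl fun m _ => by ring
    _ ≤ ENNReal.ofReal (1 / T * Real.exp (8 * K) * (4 * B ^ 2 * 1 + 16 * C)) :=
        ENNReal.ofReal_le_ofReal (by gcongr)
    _ = _ := by ring_nf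

end DilationEnergyInitial

section DilationEnergyTail

variable {g : ℝ → ℂ} {A y σ x T : ℝ}

lemma norm_mollifiedFract_le (hg : IsMollifierWeight g A) (hy : 1 < y) (u : ℝ) :
    ‖mollifiedFract g y u‖ ≤ 2 * A * y := by
  have hA := hg.nonneg
  calc ‖mollifiedFract g y u‖
      ≤ ∑ k ∈ Finset.Ioc 0 ⌊y⌋₊, ‖mollifierCoeff g y k * ((Int.fract (u / k) : ℝ) : ℂ)‖ :=
        norm_sum_le _ _
    _ ≤ ∑ _k ∈ Finset.Ioc 0 ⌊y⌋₊, 2 * A * 1 := by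
        refine Finset.sum_le_sum fun k hk => ?_
        rw [norm_mul]
        exact mul_le_mul (norm_mollifierCoeff_le hg hy hk) (norm_ofReal_fract_le_one _)
          (norm_nonneg _) (by positivity)
    _ = 2 * A * ⌊y⌋₊ := by simp [mul_comm]
    _ ≤ 2 * A * y := by gcongr; exact Nat.floor_le (by linarith)

lemma norm_sq_mollifiedFract_sub_le (hg : IsMollifierWeight g A) (hy : 1 < y) (u v : ℝ) :
    ‖mollifiedFract g y u - mollifiedFract g y v‖ ^ 2 ≤ 16 * A ^ 2 * y ^ 2 := calc
  _ ≤ (2 * A * y + 2 * A * y) ^ 2 := pow_le_pow_left₀ (norm_nonneg _) ((norm_sub_le _ _).trans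
      (add_le_add (norm_mollifiedFract_le hg hy u) (norm_mollifiedFract_le hg hy v))) 2
  _ = 16 * A ^ 2 * y ^ 2 := by ring

lemma integral_Ioi_pow_four_rpow_le (hT : 1 ≤ T) (hσ : 1 / 4 ≤ σ) :
    ∫ u in Set.Ioi (T ^ 4), u ^ (-2 * σ - 1) ≤ 2 / T ^ 2 := by
  have hT₄ : 0 < T ^ 4 := by positivity
  have hpow : (T ^ 4) ^ (-(2 * σ)) ≤ 1 / T ^ 2 := calc
    (T ^ 4) ^ (-(2 * σ)) ≤ (T ^ 4) ^ (-(1 / 2) : ℝ) :=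
      Real.rpow_le_rpow_of_exponent_le (one_le_pow₀ hT) (by linarith)
    _ = 1 / T ^ 2 := by
      rw [Real.rpow_neg hT₄.le, ← Real.sqrt_eq_rpow, show T ^ 4 = (T ^ 2) ^ 2 by ring,
        Real.sqrt_sq (by positivity), one_div]
  rw [integral_Ioi_rpow_of_lt (by linarith) hT₄, show -2 * σ - 1 + 1 = -(2 * σ) by ring,
    neg_div_neg_eq, div_le_iff₀ (by linarith)]
  calc (T ^ 4) ^ (-(2 * σ)) ≤ 1 / T ^ 2 * 1 := by rwa [mul_one]
    _ ≤ 1 / T ^ 2 * (2 * (2 * σ)) := by gcongr; linarith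
    _ = 2 / T ^ 2 * (2 * σ) := by ring

lemma dilationEnergy_Ioi_le (hg : IsMollifierWeight g A) (hT : 1 ≤ T) (hy : 1 < y)
    (hyT : y ^ 2 ≤ T) (hσ : 1 / 4 ≤ σ) :
    dilationEnergy g y σ x (Set.Ioi (T ^ 4)) ≤ ENNReal.ofReal (32 * A ^ 2 / T) := by
  have hT₄ : 0 < T ^ 4 := by positivity
  calc dilationEnergy g y σ x (Set.Ioi (T ^ 4))
      ≤ ∫⁻ u in Set.Ioi (T ^ 4), ENNReal.ofReal (16 * A ^ 2 * y ^ 2 * u ^ (-2 * σ - 1)) := by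
        refine setLIntegral_mono_ae' measurableSet_Ioi (.of_forall fun u hu => ?_)
        rw [← ofReal_norm, ← ENNReal.ofReal_pow (norm_nonneg _),
          ← ENNReal.ofReal_mul (by positivity)]
        exact ENNReal.ofReal_le_ofReal (mul_le_mul_of_nonneg_right
          (norm_sq_mollifiedFract_sub_le hg hy _ _) (Real.rpow_nonneg (hT₄.trans hu).le _))
    _ = ENNReal.ofReal (16 * A ^ 2 * y ^ 2 * ∫ u in Set.Ioi (T ^ 4), u ^ (-2 * σ - 1)) := by
        rw [← integral_const_mul, ofReal_integral_eq_lintegral_ofReal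
          ((integrableOn_Ioi_rpow_of_lt (by linarith) hT₄).const_mul _)
          ((ae_restrict_iff' measurableSet_Ioi).2 (.of_forall fun u hu => mul_nonneg
            (by positivity) (Real.rpow_nonneg (hT₄.trans hu).le _)))]
    _ ≤ ENNReal.ofReal (16 * A ^ 2 * T * (2 / T ^ 2)) := by
        refine ENNReal.ofReal_le_ofReal (mul_le_mul (by gcongr)
          (integral_Ioi_pow_four_rpow_le hT hσ) ?_ (by positivity))
        exact setIntegral_nonneg measurableSet_Ioi fun u hu => Real.rpow_nonneg (hT₄.trans hu).le _
    _ = ENNReal.ofReal (32 * A ^ 2 / T) := by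
        congr 1
        field_simp
        ring

end DilationEnergyTail

/-! ### The dilation energy on dyadic blocks, averaged over the dilation -/

section DilationEnergyDyadic

lemma lintegral_enorm_sq_mollifiedFract_increment_le {g : ℝ → ℂ} {A y U H : ℝ}
    (hg : IsMollifierWeight g A) (hy : Real.exp 1 ≤ y) (hU : y ^ 2 ≤ U) (hH : 0 < H) :
    ∫⁻ u in Set.Ioc U (2 * U), ‖mollifiedFract g y (u + H) - mollifiedFract g y u‖ₑ ^ 2 ≤
      ENNReal.ofReal (Real.exp (4 * π) * (U * (400 * totientRatioConst * A ^ 2 * H / Real.log y +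
        12 * A ^ 2 * y ^ 2 * Real.exp (-π * (U / y ^ 2))))) := by
  have hy₁ : 1 < y := (Real.one_lt_exp_iff.2 one_pos).trans_le hy
  have hint : IntegrableOn (fun u => ‖mollifiedFract g y (u + H) - mollifiedFract g y u‖ ^ 2)
      (Set.Ioc U (2 * U)) := by
    refine Measure.integrableOn_of_bounded (M := 16 * A ^ 2 * y ^ 2) (by simp)
      (by fun_prop) (.of_forall fun u => ?_)
    rw [Real.norm_of_nonneg (sq_nonneg _)]
    exact norm_sq_mollifiedFract_sub_le hg hy₁ _ _
  refine le_of_eq_of_le ?_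
    (ENNReal.ofReal_le_ofReal (integral_norm_sq_mollifiedFract_increment_le hg hy hU hH))
  rw [ofReal_integral_eq_lintegral_ofReal hint (.of_forall fun u => sq_nonneg _)]
  refine lintegral_congr fun u => ?_
  rw [← ofReal_norm, ← ENNReal.ofReal_pow (norm_nonneg _)]

variable (g : ℝ → ℂ) (y : ℝ) {σ T U u : ℝ}

lemma measurable_enorm_sq_dilationIncrement_mul (σ : ℝ) : Measurable fun p : ℝ × ℝ =>
    ‖dilationIncrement g y p.1 p.2‖ₑ ^ 2 * ENNReal.ofReal (p.2 ^ (-2 * σ - 1)) := by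
  unfold dilationIncrement
  fun_prop

lemma lintegral_enorm_sq_dilationIncrement_le (hT : 0 < T) (hU : 0 < U)
    (hu : u ∈ Set.Ioc U (2 * U)) :
    ∫⁻ x in Set.Icc (1 / (2 * T)) (1 / T), ‖dilationIncrement g y x u‖ₑ ^ 2 ≤
      ENNReal.ofReal (1 / U) * ∫⁻ H in Set.Icc (U / (2 * T)) (2 * U / T),
        ‖mollifiedFract g y (u + H) - mollifiedFract g y u‖ₑ ^ 2 := by
  have hu₀ : 0 < u := hU.trans hu.1
  set φ : ℝ → ENNReal := (Set.Icc (U / (2 * T)) (2 * U / T)).indicator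
    fun H => ‖mollifiedFract g y (u + H) - mollifiedFract g y u‖ₑ ^ 2 with hφ
  have hmem {x : ℝ} (hx : x ∈ Set.Icc (1 / (2 * T)) (1 / T)) :
      x * u ∈ Set.Icc (U / (2 * T)) (2 * U / T) := by
    have hx₀ : 0 ≤ x := le_trans (by positivity) hx.1
    constructor
    · calc U / (2 * T) = 1 / (2 * T) * U := by ring
        _ ≤ x * u := mul_le_mul hx.1 hu.1.le hU.le hx₀
    · calc x * u ≤ 1 / T * (2 * U) := mul_le_mul hx.2 hu.2 hu₀.le (by positivity)
        _ = 2 * U / T := by ring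
  calc _ ≤ ∫⁻ x, φ (x / (1 / u)) := by
        rw [← lintegral_indicator measurableSet_Icc]
        refine lintegral_mono (Set.indicator_le fun x hx => ?_)
        rw [div_div_eq_mul_div, div_one, hφ, Set.indicator_of_mem (hmem hx), dilationIncrement,
          one_add_mul, add_comm]
    _ = ENNReal.ofReal (1 / u) * ∫⁻ H in Set.Icc (U / (2 * T)) (2 * U / T),
          ‖mollifiedFract g y (u + H) - mollifiedFract g y u‖ₑ ^ 2 := by
        rw [lintegral_comp_div φ (by positivity), lintegral_indicator measurableSet_Icc]
    _ ≤ _ := mul_le_mul_left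
        (ENNReal.ofReal_le_ofReal (one_div_le_one_div_of_le hU hu.1.le)) _

lemma lintegral_dilationEnergy_Ioc_le_lintegral (hT : 0 < T) (hU : 0 < U) (hσ : 0 ≤ σ) :
    ∫⁻ x in Set.Icc (1 / (2 * T)) (1 / T), dilationEnergy g y σ x (Set.Ioc U (2 * U)) ≤
      ENNReal.ofReal (U ^ (-2 * σ - 1) / U) * ∫⁻ H in Set.Icc (U / (2 * T)) (2 * U / T),
        ∫⁻ u in Set.Ioc U (2 * U),
          ‖mollifiedFract g y (u + H) - mollifiedFract g y u‖ₑ ^ 2 := by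
  have hweight : ∀ u ∈ Set.Ioc U (2 * U), u ^ (-2 * σ - 1) ≤ U ^ (-2 * σ - 1) :=
    fun u hu => Real.rpow_le_rpow_of_nonpos hU hu.1.le (by linarith)
  set F : ℝ → ℝ → ENNReal := fun H u => ‖mollifiedFract g y (u + H) - mollifiedFract g y u‖ₑ ^ 2
  have hmeas : Measurable (Function.uncurry F) := by
    unfold F Function.uncurry
    fun_prop
  simp only [dilationEnergy]
  rw [lintegral_lintegral_swap (measurable_enorm_sq_dilationIncrement_mul g y σ).aemeasurable,
    lintegral_lintegral_swap (f := F) hmeas.aemeasurable,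
    ← lintegral_const_mul' _ _ ENNReal.ofReal_ne_top]
  refine setLIntegral_mono_ae' measurableSet_Ioc (.of_forall fun u hu => ?_)
  rw [lintegral_mul_const' _ _ ENNReal.ofReal_ne_top]
  refine (mul_le_mul' (lintegral_enorm_sq_dilationIncrement_le g y hT hU hu)
    (ENNReal.ofReal_le_ofReal (hweight u hu))).trans_eq ?_
  rw [mul_right_comm, ← ENNReal.ofReal_mul (by positivity), one_div_mul_eq_div]

variable {g y} {A K ϑ : ℝ}

lemma lintegral_dilationEnergy_Ioc_le (hg : IsMollifierWeight g A) (hy : Real.exp 1 ≤ y)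
    (hT : 0 < T) (hU : y ^ 2 ≤ U) (hσ : 0 ≤ σ) :
    ∫⁻ x in Set.Icc (1 / (2 * T)) (1 / T), dilationEnergy g y σ x (Set.Ioc U (2 * U)) ≤
      ENNReal.ofReal (U ^ (-2 * σ - 1) / U * (Real.exp (4 * π) *
        (U * (400 * totientRatioConst * A ^ 2 * (2 * U / T) / Real.log y +
          12 * A ^ 2 * y ^ 2 * Real.exp (-π * (U / y ^ 2)))) * (2 * U / T))) := by
  have hy₀ : 0 < y := (Real.exp_pos 1).trans_le hy
  have hU₀ : 0 < U := (by positivity : 0 < y ^ 2).trans_le hU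
  have hlog : 0 < Real.log y := Real.log_pos ((Real.one_lt_exp_iff.2 one_pos).trans_le hy)
  have hconst := totientRatioConst_nonneg
  set D := Real.exp (4 * π) * (U * (400 * totientRatioConst * A ^ 2 * (2 * U / T) / Real.log y +
    12 * A ^ 2 * y ^ 2 * Real.exp (-π * (U / y ^ 2)))) with hD
  have hD₀ : 0 ≤ D := by positivity
  refine (lintegral_dilationEnergy_Ioc_le_lintegral g y hT hU₀ hσ).trans ?_
  rw [ENNReal.ofReal_mul (by positivity)]
  gcongr
  calc _ ≤ ∫⁻ _ in Set.Icc (U / (2 * T)) (2 * U / T), ENNReal.ofReal D := by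
        refine setLIntegral_mono_ae' measurableSet_Icc (.of_forall fun H hH => ?_)
        have hH₀ : 0 < H := (by positivity : 0 < U / (2 * T)).trans_le hH.1
        refine (lintegral_enorm_sq_mollifiedFract_increment_le hg hy hU hH₀).trans
          (ENNReal.ofReal_le_ofReal ?_)
        have hH₁ := hH.2
        rw [hD]
        gcongr
    _ = ENNReal.ofReal (D * (2 * U / T - U / (2 * T))) := by
        rw [setLIntegral_const, Real.volume_Icc, ← ENNReal.ofReal_mul hD₀]
    _ ≤ ENNReal.ofReal (D * (2 * U / T)) := ENNReal.ofReal_le_ofReal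
        (mul_le_mul_of_nonneg_left (sub_le_self _ (by positivity)) hD₀)

/-- The constant in the bound for the averaged dilation energy of one dyadic block, for a mollifier
of length `T^ϑ` and a line at distance at most `K / log T` from the critical line. -/
def dyadicBlockConst (A K ϑ : ℝ) : ℝ :=
  2 * Real.exp (8 * K) * Real.exp (4 * π) * (800 * totientRatioConst * A ^ 2 / ϑ + 12 * A ^ 2)

lemma dyadicBlockConst_nonneg (hϑ : 0 < ϑ) : 0 ≤ dyadicBlockConst A K ϑ := by
  have hconst := totientRatioConst_nonneg
  unfold dyadicBlockConst
  positivity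

lemma sq_mul_exp_neg_div_le (hy : 0 < y) (hT : 1 < T) (hTU : T ≤ U)
    (hexp : y ^ 2 * Real.exp (-π * (T / y ^ 2)) ≤ 1 / Real.log T) :
    y ^ 2 * Real.exp (-π * (U / y ^ 2)) ≤ U / (T * Real.log T) := by
  have hL : 0 < Real.log T := Real.log_pos hT
  calc y ^ 2 * Real.exp (-π * (U / y ^ 2)) ≤ y ^ 2 * Real.exp (-π * (T / y ^ 2)) := by
        gcongr _ * Real.exp ?_
        rw [neg_mul, neg_mul, neg_le_neg_iff]
        gcongr
    _ ≤ 1 / Real.log T := hexp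
    _ ≤ (U / T) * (1 / Real.log T) :=
        le_mul_of_one_le_left (by positivity) ((one_le_div (by linarith)).2 hTU)
    _ = U / (T * Real.log T) := by field_simp

lemma lintegral_dilationEnergy_dyadic_le (hg : IsMollifierWeight g A) (hy : Real.exp 1 ≤ y)
    (hT : 1 < T) (hyT : y ^ 2 ≤ T) (hTU : T ≤ U) (hUT : U ≤ T ^ 4) (hϑ : 0 < ϑ)
    (hyϑ : ϑ * Real.log T ≤ Real.log y)
    (hexp : y ^ 2 * Real.exp (-π * (T / y ^ 2)) ≤ 1 / Real.log T) (hσ : 0 ≤ σ)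
    (hσK : |σ - 1 / 2| ≤ K / Real.log T) :
    ∫⁻ x in Set.Icc (1 / (2 * T)) (1 / T), dilationEnergy g y σ x (Set.Ioc U (2 * U)) ≤
      ENNReal.ofReal (dyadicBlockConst A K ϑ / (T ^ 2 * Real.log T)) := by
  have hT₀ : 0 < T := by linarith
  have hU₀ : 0 < U := by linarith
  have hL : 0 < Real.log T := Real.log_pos hT
  have hconst := totientRatioConst_nonneg
  have htiny := sq_mul_exp_neg_div_le ((Real.exp_pos 1).trans_le hy) hT hTU hexp
  have hweight : U ^ (1 - 2 * σ) ≤ Real.exp (8 * K) := by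
    refine rpow_one_sub_two_mul_le_exp (by linarith) hL ?_ hσK
    simpa using Real.log_le_log hU₀ hUT
  have hpow : U ^ (-2 * σ - 1) * U ^ 2 = U ^ (1 - 2 * σ) := by
    rw [← Real.rpow_two, ← Real.rpow_add hU₀]
    ring_nf
  refine (lintegral_dilationEnergy_Ioc_le hg hy hT₀ (hyT.trans hTU) hσ).trans
    (ENNReal.ofReal_le_ofReal ?_)
  calc _ ≤ U ^ (-2 * σ - 1) / U * (Real.exp (4 * π) *
        (U * (400 * totientRatioConst * A ^ 2 * (2 * U / T) / (ϑ * Real.log T) +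
          12 * A ^ 2 * (U / (T * Real.log T)))) * (2 * U / T)) := by
        rw [mul_assoc (12 * A ^ 2)]
        gcongr
    _ = U ^ (-2 * σ - 1) * U ^ 2 * (2 * Real.exp (4 * π) *
          (800 * totientRatioConst * A ^ 2 / ϑ + 12 * A ^ 2) / (T ^ 2 * Real.log T)) := by
        field_simp
        ring
    _ ≤ Real.exp (8 * K) * (2 * Real.exp (4 * π) *
          (800 * totientRatioConst * A ^ 2 / ϑ + 12 * A ^ 2) / (T ^ 2 * Real.log T)) := by
        rw [hpow]
        gcongr
    _ = dyadicBlockConst A K ϑ / (T ^ 2 * Real.log T) := by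
        rw [dyadicBlockConst]
        ring

lemma lintegral_Ioc_mul_two_pow_le (f : ℝ → ENNReal) (T : ℝ) (N : ℕ) :
    ∫⁻ u in Set.Ioc T (T * 2 ^ N), f u ≤
      ∑ j ∈ Finset.range N, ∫⁻ u in Set.Ioc (T * 2 ^ j) (2 * (T * 2 ^ j)), f u := by
  induction N with
  | zero => simp
  | succ n ih =>
    rw [Finset.sum_range_succ]
    refine (lintegral_mono_set Set.Ioc_subset_Ioc_union_Ioc).trans
      ((lintegral_union_le _ _ _).trans (add_le_add ih (le_of_eq ?_)))
    rw [pow_succ, ← mul_assoc, mul_comm _ 2]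

lemma exists_dyadic_count (hT : 3 ≤ T) :
    ∃ N : ℕ, T ^ 4 ≤ T * 2 ^ N ∧ (∀ j ∈ Finset.range N, T * 2 ^ j ≤ T ^ 4) ∧
      N ≤ 6 * Real.log T := by
  have hT₀ : 0 < T := by linarith
  have hlog₂ : 0.69 < Real.log 2 := by linarith [Real.log_two_gt_d9]
  have hL : 1 ≤ Real.log T := by
    rw [Real.le_log_iff_exp_le hT₀]
    linarith [Real.exp_one_lt_d9]
  refine ⟨⌈3 * Real.log T / Real.log 2⌉₊, ?_, fun j hj => ?_, ?_⟩
  · rw [pow_succ' T 3]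
    gcongr
    rw [← Real.log_le_log_iff (by positivity) (by positivity), Real.log_pow, Real.log_pow]
    exact_mod_cast (div_le_iff₀ (by linarith)).1 (Nat.le_ceil (3 * Real.log T / Real.log 2))
  · rw [pow_succ' T 3]
    gcongr
    rw [← Real.log_le_log_iff (by positivity) (by positivity), Real.log_pow, Real.log_pow]
    exact_mod_cast ((lt_div_iff₀ (by linarith)).1 (Nat.lt_ceil.1 (Finset.mem_range.1 hj))).le
  · have hceil := Nat.ceil_lt_add_one (a := 3 * Real.log T / Real.log 2) (by positivity)
    have hdiv : 3 * Real.log T / Real.log 2 ≤ 5 * Real.log T := by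
      rw [div_le_iff₀ (by linarith)]
      nlinarith
    linarith

end DilationEnergyDyadic

/-! ### The second moment near the critical line -/

section MollifiedSecondMoment

variable {g : ℝ → ℂ} {A B C K ϑ σ x y T : ℝ}

lemma dilationEnergy_Ioi_zero_le_add_sum (g : ℝ → ℂ) (y σ x : ℝ) {N : ℕ}
    (hN : T ^ 4 ≤ T * 2 ^ N) :
    dilationEnergy g y σ x (Set.Ioi 0) ≤
      dilationEnergy g y σ x (Set.Ioc 0 T) + dilationEnergy g y σ x (Set.Ioi (T ^ 4)) +
        ∑ j ∈ Finset.range N,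
          dilationEnergy g y σ x (Set.Ioc (T * 2 ^ j) (2 * (T * 2 ^ j))) := by
  have hcover : Set.Ioi 0 ⊆ (Set.Ioc 0 T ∪ Set.Ioi (T ^ 4)) ∪ Set.Ioc T (T * 2 ^ N) := by
    intro u hu
    by_cases hsmall : u ≤ T
    · exact Or.inl (Or.inl ⟨hu, hsmall⟩)
    by_cases hlarge : T ^ 4 < u
    · exact Or.inl (Or.inr hlarge)
    · exact Or.inr ⟨not_le.1 hsmall, (not_lt.1 hlarge).trans hN⟩
  refine (lintegral_mono_set hcover).trans ((lintegral_union_le _ _ _).trans ?_)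
  exact add_le_add (lintegral_union_le _ _ _) (lintegral_Ioc_mul_two_pow_le _ _ _)

lemma volume_Icc_one_div_two_mul_one_div (hT : 0 < T) :
    volume (Set.Icc (1 / (2 * T)) (1 / T)) = ENNReal.ofReal (1 / (2 * T)) := by
  rw [Real.volume_Icc]
  congr 1
  field_simp
  norm_num

lemma measurable_dilationEnergy (g : ℝ → ℂ) (y σ : ℝ) (S : Set ℝ) :
    Measurable fun x => dilationEnergy g y σ x S :=
  (measurable_enorm_sq_dilationIncrement_mul g y σ).lintegral_prod_right'

lemma dilationEnergy_Ioc_zero_add_Ioi_le (hg : IsMollifierWeight g A) (hy : 1 < y) (hT : 3 ≤ T)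
    (hyT : y ^ 2 ≤ T) (hσ₀ : 1 / 4 ≤ σ) (hσ₁ : σ ≤ 3 / 4) (hσK : |σ - 1 / 2| ≤ K / Real.log T)
    (hB : ‖∑ k ∈ Finset.Ioc 0 ⌊y⌋₊, mollifierCoeff g y k / k‖ ≤ B) (hC₀ : 0 ≤ C)
    (hC : ∑ m ∈ Finset.Ioc 0 ⌊2 * T⌋₊, ‖mollifierDivisorSum g y m‖ ^ 2 / m ≤ C)
    (hx : x ∈ Set.Icc (1 / (2 * T)) (1 / T)) :
    dilationEnergy g y σ x (Set.Ioc 0 T) + dilationEnergy g y σ x (Set.Ioi (T ^ 4)) ≤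
      ENNReal.ofReal (((4 * B ^ 2 + 16 * C) * Real.exp (8 * K) + 32 * A ^ 2) / T) := by
  have : 0 < T := by linarith
  rw [add_div, ENNReal.ofReal_add (by positivity) (by positivity)]
  exact add_le_add (dilationEnergy_Ioc_zero_le g y hT
    ((by positivity : 0 < 1 / (2 * T)).trans_le hx.1) hx.2 hσ₀ hσ₁ hσK hB hC)
    (dilationEnergy_Ioi_le hg (by linarith) hy hyT hσ₀)

lemma lintegral_dilationEnergy_Ioi_zero_le (hg : IsMollifierWeight g A) (hy : Real.exp 1 ≤ y)
    (hT : 3 ≤ T) (hyT : y ^ 2 ≤ T) (hϑ : 0 < ϑ) (hyϑ : ϑ * Real.log T ≤ Real.log y)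
    (hexp : y ^ 2 * Real.exp (-π * (T / y ^ 2)) ≤ 1 / Real.log T) (hσ₀ : 1 / 4 ≤ σ)
    (hσ₁ : σ ≤ 3 / 4) (hσK : |σ - 1 / 2| ≤ K / Real.log T)
    (hB : ‖∑ k ∈ Finset.Ioc 0 ⌊y⌋₊, mollifierCoeff g y k / k‖ ≤ B) (hC₀ : 0 ≤ C)
    (hC : ∑ m ∈ Finset.Ioc 0 ⌊2 * T⌋₊, ‖mollifierDivisorSum g y m‖ ^ 2 / m ≤ C) :
    ∫⁻ x in Set.Icc (1 / (2 * T)) (1 / T), dilationEnergy g y σ x (Set.Ioi 0) ≤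
      ENNReal.ofReal (((4 * B ^ 2 + 16 * C) * Real.exp (8 * K) + 32 * A ^ 2 +
        12 * dyadicBlockConst A K ϑ) / (2 * T ^ 2)) := by
  have hT₀ : 0 < T := by linarith
  have hL : 0 < Real.log T := Real.log_pos (by linarith)
  have hy₁ : 1 < y := (Real.one_lt_exp_iff.2 one_pos).trans_le hy
  have hblock := dyadicBlockConst_nonneg (A := A) (K := K) hϑ
  obtain ⟨N, hNT, hjT, hN⟩ := exists_dyadic_count hT
  set E := (4 * B ^ 2 + 16 * C) * Real.exp (8 * K) + 32 * A ^ 2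
  calc _ ≤ ∫⁻ x in Set.Icc (1 / (2 * T)) (1 / T), (ENNReal.ofReal (E / T) +
          ∑ j ∈ Finset.range N,
            dilationEnergy g y σ x (Set.Ioc (T * 2 ^ j) (2 * (T * 2 ^ j)))) :=
        setLIntegral_mono_ae' measurableSet_Icc (.of_forall fun x hx =>
          (dilationEnergy_Ioi_zero_le_add_sum g y σ x hNT).trans (add_le_add
            (dilationEnergy_Ioc_zero_add_Ioi_le hg hy₁ hT hyT hσ₀ hσ₁ hσK hB hC₀ hC hx) le_rfl))
    _ = ENNReal.ofReal (E / T * (1 / (2 * T))) + ∑ j ∈ Finset.range N,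
          ∫⁻ x in Set.Icc (1 / (2 * T)) (1 / T),
            dilationEnergy g y σ x (Set.Ioc (T * 2 ^ j) (2 * (T * 2 ^ j))) := by
        rw [lintegral_add_left measurable_const, setLIntegral_const,
          volume_Icc_one_div_two_mul_one_div hT₀, ← ENNReal.ofReal_mul (by positivity),
          lintegral_finsetSum _ fun j _ => measurable_dilationEnergy g y σ _]
    _ ≤ ENNReal.ofReal (E / T * (1 / (2 * T))) + ∑ _j ∈ Finset.range N,
          ENNReal.ofReal (dyadicBlockConst A K ϑ / (T ^ 2 * Real.log T)) := by
        gcongr with j hj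
        exact lintegral_dilationEnergy_dyadic_le hg hy (by linarith) hyT
          (le_mul_of_one_le_right hT₀.le (one_le_pow₀ one_le_two)) (hjT j hj) hϑ hyϑ hexp
          (by linarith) hσK
    _ ≤ ENNReal.ofReal (E / T * (1 / (2 * T)) +
          6 * Real.log T * (dyadicBlockConst A K ϑ / (T ^ 2 * Real.log T))) := by
        rw [Finset.sum_const, Finset.card_range, nsmul_eq_mul, ← ENNReal.ofReal_natCast,
          ← ENNReal.ofReal_mul (by positivity),
          ← ENNReal.ofReal_add (by positivity) (by positivity)]
        exact ENNReal.ofReal_le_ofReal (by gcongr)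
    _ = ENNReal.ofReal ((E + 12 * dyadicBlockConst A K ϑ) / (2 * T ^ 2)) := by
        congr 1
        field_simp
        ring

lemma setLIntegral_enorm_sq_riemannZeta_mul_weightedMollifier_le_of_average {E : ℝ}
    (hT : 2 ≤ T) (hσ₀ : 0 < σ) (hσ₁ : σ < 1)
    (hE : ∫⁻ x in Set.Icc (1 / (2 * T)) (1 / T), dilationEnergy g y σ x (Set.Ioi 0) ≤
      ENNReal.ofReal (E / (2 * T ^ 2))) :
    ∫⁻ t in Set.Icc (T / 2) (5 * T / 2),
      ‖riemannZeta (σ + t * Complex.I) * weightedMollifier g y (σ + t * Complex.I)‖ₑ ^ 2 ≤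
    ENNReal.ofReal (20000 * E * T) := by
  have hT₀ : 0 < T := by linarith
  set I := ∫⁻ t in Set.Icc (T / 2) (5 * T / 2),
    ‖riemannZeta (σ + t * Complex.I) * weightedMollifier g y (σ + t * Complex.I)‖ₑ ^ 2
  have haverage : I * ENNReal.ofReal (1 / (2 * T)) ≤
      ENNReal.ofReal (20000 * T ^ 2) * ENNReal.ofReal (E / (2 * T ^ 2)) := calc
    I * ENNReal.ofReal (1 / (2 * T)) = ∫⁻ _ in Set.Icc (1 / (2 * T)) (1 / T), I := by
      rw [setLIntegral_const, volume_Icc_one_div_two_mul_one_div hT₀]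
    _ ≤ ∫⁻ x in Set.Icc (1 / (2 * T)) (1 / T),
          ENNReal.ofReal (20000 * T ^ 2) * dilationEnergy g y σ x (Set.Ioi 0) :=
      setLIntegral_mono_ae' measurableSet_Icc (.of_forall fun x hx =>
        setLIntegral_enorm_sq_riemannZeta_mul_weightedMollifier_le g y hT hσ₀ hσ₁ hx.1 hx.2)
    _ ≤ ENNReal.ofReal (20000 * T ^ 2) * ENNReal.ofReal (E / (2 * T ^ 2)) := by
      rw [lintegral_const_mul' _ _ ENNReal.ofReal_ne_top]
      gcongr
  calc I = I * ENNReal.ofReal (1 / (2 * T)) * ENNReal.ofReal (2 * T) := by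
        rw [mul_assoc, ← ENNReal.ofReal_mul (by positivity),
          one_div_mul_cancel (by positivity), ENNReal.ofReal_one, mul_one]
    _ ≤ ENNReal.ofReal (20000 * T ^ 2) * ENNReal.ofReal (E / (2 * T ^ 2)) *
          ENNReal.ofReal (2 * T) := mul_le_mul_left haverage _
    _ = ENNReal.ofReal (20000 * E * T) := by
        rw [← ENNReal.ofReal_mul (by positivity), ← ENNReal.ofReal_mul' (by positivity)]
        congr 1
        field_simp

lemma eventually_sq_mul_exp_neg_div_le (hϑ : ϑ < 1 / 2) :
    ∀ᶠ T : ℝ in atTop, (T ^ ϑ) ^ 2 * Real.exp (-π * (T / (T ^ ϑ) ^ 2)) ≤ 1 / Real.log T := by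
  have hδ : 0 < 1 - 2 * ϑ := by linarith
  have hdecay := (tendsto_rpow_mul_exp_neg_mul_atTop_nhds_zero (2 / (1 - 2 * ϑ)) π
    Real.pi_pos).comp (tendsto_rpow_atTop hδ)
  filter_upwards [hdecay.eventually_le_const one_pos, eventually_gt_atTop 1] with T hdecayT hT
  have hT₀ : 0 < T := by linarith
  have hlength : (T ^ ϑ) ^ 2 = T ^ (2 * ϑ) := by
    rw [← Real.rpow_two, ← Real.rpow_mul hT₀.le, mul_comm]
  have hquot : T / T ^ (2 * ϑ) = T ^ (1 - 2 * ϑ) := by rw [Real.rpow_sub hT₀, Real.rpow_one]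
  have hlength_le : T ^ (2 * ϑ) ≤ T := by
    simpa using Real.rpow_le_rpow_of_exponent_le hT.le (by linarith : 2 * ϑ ≤ 1)
  have hlog_le : Real.log T ≤ T := by linarith [Real.log_le_sub_one_of_pos hT₀]
  rw [Function.comp_apply, ← Real.rpow_mul hT₀.le, mul_div_cancel₀ _ hδ.ne', Real.rpow_two]
    at hdecayT
  rw [hlength, hquot, le_div_iff₀ (Real.log_pos hT)]
  have hlog_nonneg : 0 ≤ Real.log T := (Real.log_pos hT).le
  calc T ^ (2 * ϑ) * Real.exp (-π * T ^ (1 - 2 * ϑ)) * Real.log T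
      ≤ T * Real.exp (-π * T ^ (1 - 2 * ϑ)) * T := by gcongr
    _ = T ^ 2 * Real.exp (-π * T ^ (1 - 2 * ϑ)) := by ring
    _ ≤ 1 := hdecayT

lemma norm_sum_mollifierCoeff_div_le_of_exp_one_le (hg : IsMollifierWeight g A)
    (hy : Real.exp 1 ≤ y) :
    ‖∑ k ∈ Finset.Ioc 0 ⌊y⌋₊, mollifierCoeff g y k / k‖ ≤ 10 * A * totientRatio 1 := by
  have hy₁ : 1 < y := (Real.one_lt_exp_iff.2 one_pos).trans_le hy
  have hbound := norm_sum_mollifierCoeff_div_le hg hy₁ one_pos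
  simp only [isUnit_one, IsUnit.dvd, Finset.filter_true, Nat.cast_one, one_mul] at hbound
  have hA := hg.nonneg
  have hratio := one_le_totientRatio 1
  refine hbound.trans (div_le_self (by positivity) ?_)
  exact (Real.le_log_iff_exp_le (by linarith)).2 hy

theorem exists_setLIntegral_enorm_sq_riemannZeta_mul_weightedMollifier_le
    (hg : IsMollifierWeight g A) (hϑ₀ : 0 < ϑ) (hϑ₁ : ϑ < 1 / 2) (K : ℝ) :
    ∃ C : ℝ, 0 ≤ C ∧ ∀ᶠ T : ℝ in atTop, ∀ σ : ℝ, |σ - 1 / 2| ≤ K / Real.log T →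
      ∫⁻ t in Set.Icc (T / 2) (5 * T / 2), ‖riemannZeta (σ + t * Complex.I) *
        weightedMollifier g (T ^ ϑ) (σ + t * Complex.I)‖ₑ ^ 2 ≤ ENNReal.ofReal (C * T) := by
  obtain ⟨C, hC₀, hC⟩ := exists_sum_norm_sq_mollifierDivisorSum_div_le hg (2 / ϑ)
  have hblock := dyadicBlockConst_nonneg (A := A) (K := K) hϑ₀
  refine ⟨20000 * ((4 * (10 * A * totientRatio 1) ^ 2 + 16 * C) * Real.exp (8 * K) + 32 * A ^ 2 +
    12 * dyadicBlockConst A K ϑ), by positivity, ?_⟩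
  have hlog := Real.tendsto_log_atTop
  filter_upwards [eventually_ge_atTop 3, (tendsto_rpow_atTop hϑ₀).eventually hC,
    (tendsto_rpow_atTop hϑ₀).eventually_ge_atTop (Real.exp 1), hlog.eventually_ge_atTop (4 * K),
    eventually_sq_mul_exp_neg_div_le hϑ₁] with T hT hCT hy hTK hexp σ hσK
  have hT₀ : 0 < T := by linarith
  have hyϑ : Real.log (T ^ ϑ) = ϑ * Real.log T := Real.log_rpow hT₀ ϑ
  have hyT : (T ^ ϑ) ^ 2 ≤ T := by
    rw [← Real.rpow_two, ← Real.rpow_mul hT₀.le]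
    simpa using Real.rpow_le_rpow_of_exponent_le (by linarith : 1 ≤ T) (by linarith : ϑ * 2 ≤ 1)
  have hquarter : K / Real.log T ≤ 1 / 4 := by
    rw [div_le_iff₀ (Real.log_pos (by linarith))]
    linarith
  obtain ⟨hσ₀, hσ₁⟩ := abs_le.1 (hσK.trans hquarter)
  refine setLIntegral_enorm_sq_riemannZeta_mul_weightedMollifier_le_of_average (by linarith)
    (by linarith) (by linarith) (lintegral_dilationEnergy_Ioi_zero_le hg hy hT hyT hϑ₀ hyϑ.ge hexp
      (by linarith) (by linarith) hσK (norm_sum_mollifierCoeff_div_le_of_exp_one_le hg hy) hC₀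
      (hCT _ ?_))
  have hfloor : 0 < ⌊2 * T⌋₊ := Nat.floor_pos.2 (by linarith)
  calc Real.log ⌊2 * T⌋₊ ≤ 2 * Real.log T :=
        log_le_two_mul_log hT (Finset.mem_Ioc.2 ⟨hfloor, le_rfl⟩)
    _ = 2 / ϑ * Real.log (T ^ ϑ) := by rw [hyϑ]; field_simp

end MollifiedSecondMoment

/-! ### Mean values over discs around clustered zeros -/

section ZeroFactor

variable {U : Set ℂ} {f : ℂ → ℂ}

lemma analyticOrderAt_eq_one_add_dslope {a : ℂ} (hf : AnalyticAt ℂ (dslope f a) a) (hfa : f a = 0) :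
    analyticOrderAt f a = 1 + analyticOrderAt (dslope f a) a := by
  have hfactor : f = (fun z => z - a) * dslope f a := by
    funext z
    simpa [hfa] using (sub_smul_dslope f a z).symm
  conv_lhs => rw [hfactor]
  rw [analyticOrderAt_mul (by fun_prop) hf, analyticOrderAt_id_sub_const_self]

lemma exists_eq_pow_mul_of_le_analyticOrderAt (hU : IsOpen U) {a : ℂ} (ha : a ∈ U) {k : ℕ}
    (hf : DifferentiableOn ℂ f U) (hk : (k : ℕ∞) ≤ analyticOrderAt f a) :
    ∃ h : ℂ → ℂ, DifferentiableOn ℂ h U ∧ ∀ z, f z = (z - a) ^ k * h z := by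
  induction k generalizing f with
  | zero => exact ⟨f, hf, fun z => by simp⟩
  | succ k ih =>
    have hUa : U ∈ nhds a := hU.mem_nhds ha
    have hslope : DifferentiableOn ℂ (dslope f a) U := (Complex.differentiableOn_dslope hUa).2 hf
    have hfa : f a = 0 := by
      refine ((hf.analyticAt hUa).analyticOrderAt_ne_zero).1 fun hzero => ?_
      simp [hzero] at hk
    rw [analyticOrderAt_eq_one_add_dslope (hslope.analyticAt hUa) hfa, Nat.cast_succ, add_comm,
      ENat.add_le_add_iff_left ENat.one_ne_top] at hk
    obtain ⟨h, hh, hfactor⟩ := ih hslope hk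
    refine ⟨h, hh, fun z => ?_⟩
    have hz : (z - a) * dslope f a z = f z := by simpa [hfa] using sub_smul_dslope f a z
    rw [← hz, hfactor z]
    ring

lemma exists_eq_prod_pow_mul_of_le_analyticOrderAt (hU : IsOpen U) {S : Finset ℂ} {m : ℂ → ℕ}
    (hf : DifferentiableOn ℂ f U) (hS : ∀ a ∈ S, a ∈ U)
    (hm : ∀ a ∈ S, (m a : ℕ∞) ≤ analyticOrderAt f a) :
    ∃ h : ℂ → ℂ, DifferentiableOn ℂ h U ∧ ∀ z, f z = (∏ a ∈ S, (z - a) ^ m a) * h z := by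
  classical
  induction S using Finset.induction_on generalizing f with
  | empty => exact ⟨f, hf, fun z => by simp⟩
  | insert a S haS ih =>
    rw [Finset.forall_mem_insert] at hS hm
    obtain ⟨f₁, hf₁, hfactor⟩ := exists_eq_pow_mul_of_le_analyticOrderAt hU hS.1 hf hm.1
    have horder (b : ℂ) (hb : b ∈ S) : analyticOrderAt f b = analyticOrderAt f₁ b := by
      have hba : b - a ≠ 0 := sub_ne_zero.2 (ne_of_mem_of_not_mem hb haS)
      have hpow : analyticOrderAt (fun z => (z - a) ^ m a) b = 0 :=
        analyticOrderAt_eq_zero.2 (Or.inr (pow_ne_zero _ hba))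
      rw [show f = (fun z => (z - a) ^ m a) * f₁ from funext hfactor,
        analyticOrderAt_mul (by fun_prop) (hf₁.analyticAt (hU.mem_nhds (hS.2 b hb))), hpow,
        zero_add]
    obtain ⟨h, hh, hfactor₁⟩ := ih hf₁ hS.2 fun b hb => (hm.2 b hb).trans_eq (horder b hb)
    exact ⟨h, hh, fun z => by rw [hfactor z, hfactor₁ z, Finset.prod_insert haS, mul_assoc]⟩

end ZeroFactor

section DiscMeanValue

variable {U : Set ℂ} {G : ℂ → ℂ} {S : Finset ℂ} {m : ℂ → ℕ} {w : ℂ} {r R : ℝ}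

lemma enorm_sq_le_lintegral_circleMap (hR : 0 < R)
    (hG : DifferentiableOn ℂ G (Metric.closedBall w R)) :
    ENNReal.ofReal (2 * π) * ‖G w‖ₑ ^ 2 ≤
      ∫⁻ θ in Set.Ioo (-π) π, ‖G (circleMap w R θ)‖ₑ ^ 2 := by
  have hdiff : DiffContOnCl ℂ (fun z => G z ^ 2) (Metric.ball w |R|) := by
    rw [abs_of_pos hR]
    apply DifferentiableOn.diffContOnCl
    rw [closure_ball _ hR.ne']
    exact hG.pow 2
  have hperiodic : Function.Periodic (fun θ => G (circleMap w R θ) ^ 2) (2 * π) := fun θ => by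
    simp only [periodic_circleMap w R θ]
  have hshift := hperiodic.intervalIntegral_add_eq 0 (-π)
  rw [zero_add, show -π + 2 * π = π by ring] at hshift
  have hmean : (2 * π : ℝ) • G w ^ 2 = ∫ θ in Set.Ioo (-π) π, G (circleMap w R θ) ^ 2 := by
    rw [← hdiff.circleAverage, Real.circleAverage_def, hshift, smul_smul,
      mul_inv_cancel₀ (by positivity), one_smul,
      intervalIntegral.integral_of_le (by linarith [Real.pi_pos]), integral_Ioc_eq_integral_Ioo]
  calc ENNReal.ofReal (2 * π) * ‖G w‖ₑ ^ 2 = ‖(2 * π : ℝ) • G w ^ 2‖ₑ := by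
        rw [enorm_smul, enorm_pow, Real.enorm_of_nonneg (by positivity)]
    _ ≤ ∫⁻ θ in Set.Ioo (-π) π, ‖G (circleMap w R θ) ^ 2‖ₑ := by
        rw [hmean]
        exact enorm_integral_le_lintegral_enorm _
    _ = ∫⁻ θ in Set.Ioo (-π) π, ‖G (circleMap w R θ)‖ₑ ^ 2 := by simp only [enorm_pow]

lemma norm_prod_sub_pow_mul_two_pow_le (m : ℂ → ℕ) {z : ℂ} (hS : ∀ a ∈ S, ‖w - a‖ ≤ r)
    (hz : 3 * r ≤ ‖z - w‖) :
    ‖∏ a ∈ S, (w - a) ^ m a‖ * 2 ^ ∑ a ∈ S, m a ≤ ‖∏ a ∈ S, (z - a) ^ m a‖ := by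
  simp only [norm_prod, norm_pow]
  rw [← Finset.prod_pow_eq_pow_sum, ← Finset.prod_mul_distrib]
  refine Finset.prod_le_prod (fun _ _ => by positivity) fun a ha => ?_
  rw [← mul_pow]
  refine pow_le_pow_left₀ (by positivity) ?_ _
  have htriangle : ‖z - w‖ ≤ ‖z - a‖ + ‖w - a‖ := by
    simpa using norm_sub_le (z - a) (w - a)
  linarith [hS a ha]

lemma enorm_sq_prod_sub_pow_mul_four_pow_le (m : ℂ → ℕ) {z : ℂ} (hS : ∀ a ∈ S, ‖w - a‖ ≤ r)
    (hz : 3 * r ≤ ‖z - w‖) :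
    ‖∏ a ∈ S, (w - a) ^ m a‖ₑ ^ 2 * 4 ^ ∑ a ∈ S, m a ≤ ‖∏ a ∈ S, (z - a) ^ m a‖ₑ ^ 2 := by
  have hle := ENNReal.ofReal_le_ofReal (norm_prod_sub_pow_mul_two_pow_le m hS hz)
  rw [ENNReal.ofReal_mul (norm_nonneg _), ofReal_norm, ofReal_norm,
    ENNReal.ofReal_pow zero_le_two, ENNReal.ofReal_ofNat] at hle
  calc _ = (‖∏ a ∈ S, (w - a) ^ m a‖ₑ * 2 ^ ∑ a ∈ S, m a) ^ 2 := by
        rw [mul_pow, pow_right_comm 2]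
        norm_num
    _ ≤ _ := by gcongr

-- Dividing out the zeros within `r` of `w` and applying the mean value property to the quotient
-- gains a factor `4` per zero, which absorbs any number of zeros clustering near `w`.
lemma enorm_sq_mul_four_pow_le_lintegral_circleMap (hU : IsOpen U) (hG : DifferentiableOn ℂ G U)
    (hr : 0 < r) (hR : 3 * r ≤ R) (hball : Metric.closedBall w R ⊆ U)
    (hS : ∀ a ∈ S, ‖w - a‖ ≤ r) (hm : ∀ a ∈ S, (m a : ℕ∞) ≤ analyticOrderAt G a) :
    ENNReal.ofReal (2 * π) * (‖G w‖ₑ ^ 2 * 4 ^ ∑ a ∈ S, m a) ≤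
      ∫⁻ θ in Set.Ioo (-π) π, ‖G (circleMap w R θ)‖ₑ ^ 2 := by
  have hSU (a : ℂ) (ha : a ∈ S) : a ∈ U := hball <| by
    rw [Metric.mem_closedBall, dist_comm, dist_eq_norm]
    linarith [hS a ha]
  obtain ⟨h, hh, hfactor⟩ := exists_eq_prod_pow_mul_of_le_analyticOrderAt hU hG hSU hm
  set Q : ℂ → ℂ := fun z => ∏ a ∈ S, (z - a) ^ m a
  have hgain (θ : ℝ) : ‖Q w‖ₑ ^ 2 * 4 ^ ∑ a ∈ S, m a ≤ ‖Q (circleMap w R θ)‖ₑ ^ 2 := by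
    refine enorm_sq_prod_sub_pow_mul_four_pow_le m hS ?_
    rwa [circleMap_sub_center, norm_circleMap_zero, abs_of_pos (by linarith)]
  have hfinite : ‖Q w‖ₑ ^ 2 * 4 ^ ∑ a ∈ S, m a ≠ ⊤ :=
    ENNReal.mul_ne_top (ENNReal.pow_ne_top enorm_ne_top) (ENNReal.pow_ne_top (by norm_num))
  calc _ = (‖Q w‖ₑ ^ 2 * 4 ^ ∑ a ∈ S, m a) * (ENNReal.ofReal (2 * π) * ‖h w‖ₑ ^ 2) := by
        rw [hfactor w, enorm_mul]
        ring
    _ ≤ (‖Q w‖ₑ ^ 2 * 4 ^ ∑ a ∈ S, m a) *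
          ∫⁻ θ in Set.Ioo (-π) π, ‖h (circleMap w R θ)‖ₑ ^ 2 :=
        mul_le_mul_right (enorm_sq_le_lintegral_circleMap (by linarith) (hh.mono hball)) _
    _ = ∫⁻ θ in Set.Ioo (-π) π,
          (‖Q w‖ₑ ^ 2 * 4 ^ ∑ a ∈ S, m a) * ‖h (circleMap w R θ)‖ₑ ^ 2 :=
        (lintegral_const_mul' _ _ hfinite).symm
    _ ≤ ∫⁻ θ in Set.Ioo (-π) π, ‖G (circleMap w R θ)‖ₑ ^ 2 := by
        refine lintegral_mono fun θ => ?_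
        rw [hfactor (circleMap w R θ), enorm_mul, mul_pow]
        exact mul_le_mul_left (hgain θ) _

lemma setLIntegral_closedBall_eq_polar {F : ℂ → ENNReal} (hF : Measurable F) (w : ℂ) (R : ℝ) :
    ∫⁻ z in Metric.closedBall w R, F z =
      ∫⁻ ρ in Set.Ioi 0, ∫⁻ θ in Set.Ioo (-π) π,
        ENNReal.ofReal ρ * (Metric.closedBall w R).indicator F (circleMap w ρ θ) := by
  have hball : MeasurableSet (Metric.closedBall w R) := Metric.isClosed_closedBall.measurableSet
  have hpolar (ρ θ : ℝ) : w + Complex.polarCoord.symm (ρ, θ) = circleMap w ρ θ := by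
    rw [Complex.polarCoord_symm_apply, circleMap, Complex.exp_mul_I]
    simp
  have hmeas : Measurable fun p : ℝ × ℝ =>
      ENNReal.ofReal p.1 * (Metric.closedBall w R).indicator F (circleMap w p.1 p.2) := by
    refine (ENNReal.measurable_ofReal.comp measurable_fst).mul ((hF.indicator hball).comp ?_)
    unfold circleMap
    fun_prop
  rw [← lintegral_indicator hball, ← lintegral_add_left_eq_self _ w,
    ← Complex.lintegral_comp_polarCoord_symm, polarCoord_target]
  simp only [smul_eq_mul, hpolar]
  rw [Measure.volume_eq_prod, ← Measure.prod_restrict, lintegral_prod _ hmeas.aemeasurable]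

lemma ofReal_sq_mul_le_setLIntegral_closedBall {F : ℂ → ENNReal} (hF : Measurable F) (hr : 0 < r)
    {X : ENNReal}
    (hX : ∀ R ∈ Set.Icc (3 * r) (4 * r), X ≤ ∫⁻ θ in Set.Ioo (-π) π, F (circleMap w R θ)) :
    ENNReal.ofReal (r ^ 2) * X ≤ ∫⁻ z in Metric.closedBall w (4 * r), F z := by
  calc ENNReal.ofReal (r ^ 2) * X ≤ ENNReal.ofReal (3 * r) * X * ENNReal.ofReal r := by
        rw [mul_right_comm, ← ENNReal.ofReal_mul (by positivity)]
        exact mul_le_mul_left (ENNReal.ofReal_le_ofReal (by nlinarith)) X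
    _ = ∫⁻ _ in Set.Icc (3 * r) (4 * r), ENNReal.ofReal (3 * r) * X := by
        rw [setLIntegral_const, Real.volume_Icc]
        congr 2
        ring
    _ ≤ ∫⁻ R in Set.Icc (3 * r) (4 * r), ∫⁻ θ in Set.Ioo (-π) π,
          ENNReal.ofReal R * (Metric.closedBall w (4 * r)).indicator F (circleMap w R θ) := by
        refine setLIntegral_mono' measurableSet_Icc fun R hR => ?_
        rw [lintegral_const_mul' _ _ ENNReal.ofReal_ne_top]
        refine mul_le_mul' (ENNReal.ofReal_le_ofReal hR.1) ((hX R hR).trans_eq ?_)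
        refine lintegral_congr fun θ => (Set.indicator_of_mem ?_ F).symm
        rw [Metric.mem_closedBall, dist_eq_norm, circleMap_sub_center, norm_circleMap_zero,
          abs_of_pos (by linarith [hR.1])]
        exact hR.2
    _ ≤ ∫⁻ z in Metric.closedBall w (4 * r), F z := by
        rw [setLIntegral_closedBall_eq_polar hF]
        exact lintegral_mono_set fun R hR => (by positivity : 0 < 3 * r).trans_le hR.1

lemma ofReal_sq_mul_enorm_sq_mul_four_pow_le (hU : IsOpen U) (hmeas : Measurable G)
    (hG : DifferentiableOn ℂ G U) (hr : 0 < r) (hball : Metric.closedBall w (4 * r) ⊆ U)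
    (hS : ∀ a ∈ S, ‖w - a‖ ≤ r) (hm : ∀ a ∈ S, (m a : ℕ∞) ≤ analyticOrderAt G a) :
    ENNReal.ofReal (r ^ 2) * (‖G w‖ₑ ^ 2 * 4 ^ ∑ a ∈ S, m a) ≤
      ∫⁻ z in Metric.closedBall w (4 * r), ‖G z‖ₑ ^ 2 := by
  refine ofReal_sq_mul_le_setLIntegral_closedBall (by fun_prop) hr fun R hR => ?_
  refine le_trans ?_ (enorm_sq_mul_four_pow_le_lintegral_circleMap hU hG hr hR.1
    ((Metric.closedBall_subset_closedBall hR.2).trans hball) hS hm)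
  refine le_mul_of_one_le_left' (ENNReal.one_le_ofReal.2 ?_)
  linarith [Real.pi_gt_three]

lemma setLIntegral_closedBall_le_lintegral_box {F : ℂ → ENNReal} (hF : Measurable F)
    (x t r : ℝ) :
    ∫⁻ z in Metric.closedBall (x + t * Complex.I : ℂ) r, F z ≤
      ∫⁻ s in Set.Icc (t - r) (t + r), ∫⁻ σ in Set.Icc (x - r) (x + r),
        F (σ + s * Complex.I) := by
  have hsubset : Metric.closedBall (x + t * Complex.I : ℂ) r ⊆
      Complex.measurableEquivRealProd ⁻¹' (Set.Icc (x - r) (x + r) ×ˢ Set.Icc (t - r) (t + r)) := by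
    intro z hz
    rw [Metric.mem_closedBall, dist_eq_norm] at hz
    have hre : |z.re - x| ≤ r := by simpa using (Complex.abs_re_le_norm _).trans hz
    have him : |z.im - t| ≤ r := by simpa using (Complex.abs_im_le_norm _).trans hz
    rw [← Real.dist_eq, ← Metric.mem_closedBall, Real.closedBall_eq_Icc] at hre him
    exact ⟨hre, him⟩
  refine (lintegral_mono_set hsubset).trans_eq ?_
  have hprod := Complex.volume_preserving_equiv_real_prod.setLIntegral_comp_preimage_emb
    Complex.measurableEquivRealProd.measurableEmbedding
    (fun p : ℝ × ℝ => F (p.1 + p.2 * Complex.I))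
    (Set.Icc (x - r) (x + r) ×ˢ Set.Icc (t - r) (t + r))
  simp only [Complex.measurableEquivRealProd_apply, Complex.re_add_im] at hprod
  rw [hprod, Measure.volume_eq_prod, ← Measure.prod_restrict, lintegral_prod_symm]
  exact (hF.comp (by fun_prop)).aemeasurable

end DiscMeanValue

/-! ### From zeros to the second moment on vertical lines -/

lemma card_filter_abs_sub_le (J : Finset ℤ) (x : ℝ) {c : ℝ} (hc : 0 ≤ c) :
    ((J.filter fun j : ℤ => |(j : ℝ) - x| ≤ c).card : ℝ) ≤ 2 * c + 1 := by
  have hsubset : (J.filter fun j : ℤ => |(j : ℝ) - x| ≤ c) ⊆ Finset.Icc ⌈x - c⌉ ⌊x + c⌋ := by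
    intro j hj
    rw [Finset.mem_filter, abs_le] at hj
    rw [Finset.mem_Icc, Int.ceil_le, Int.le_floor]
    constructor <;> linarith [hj.2.1, hj.2.2]
  calc ((J.filter fun j : ℤ => |(j : ℝ) - x| ≤ c).card : ℝ)
      ≤ (((⌊x + c⌋ + 1 - ⌈x - c⌉).toNat : ℤ) : ℝ) := by
        exact_mod_cast (Finset.card_le_card hsubset).trans_eq (Int.card_Icc _ _)
    _ = max ((⌊x + c⌋ : ℝ) + 1 - ⌈x - c⌉) 0 := by
        rw [Int.ofNat_toNat]
        push_cast
        rfl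
    _ ≤ 2 * c + 1 :=
        max_le (by linarith [Int.floor_le (x + c), Int.le_ceil (x - c)]) (by linarith)

lemma sum_setLIntegral_Icc_mul_le {H : ℝ → ENNReal} (hH : Measurable H) {J : Finset ℤ}
    {δ c : ℝ} {I : Set ℝ} (hδ : 0 < δ) (hc : 0 ≤ c)
    (hJ : ∀ j ∈ J, Set.Icc (j * δ - c) (j * δ + c) ⊆ I) :
    ∑ j ∈ J, ∫⁻ t in Set.Icc (j * δ - c) (j * δ + c), H t ≤
      ENNReal.ofReal (2 * (c / δ) + 1) * ∫⁻ t in I, H t := by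
  have hindicator (j : ℤ) (hj : j ∈ J) : ∫⁻ t in Set.Icc (j * δ - c) (j * δ + c), H t =
      ∫⁻ t in I, (Set.Icc (j * δ - c) (j * δ + c)).indicator H t := by
    rw [setLIntegral_indicator measurableSet_Icc, Set.inter_eq_left.2 (hJ j hj)]
  rw [Finset.sum_congr rfl hindicator,
    ← lintegral_finsetSum _ fun j _ => hH.indicator measurableSet_Icc,
    ← lintegral_const_mul' _ _ ENNReal.ofReal_ne_top]
  refine lintegral_mono fun t => ?_
  simp only [Set.indicator_apply]
  rw [← Finset.sum_filter, Finset.sum_const, nsmul_eq_mul, ← ENNReal.ofReal_natCast]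
  refine mul_le_mul_left (ENNReal.ofReal_le_ofReal ?_) _
  refine le_trans (Nat.cast_le.2 (Finset.card_le_card ?_))
    (card_filter_abs_sub_le J (t / δ) (by positivity))
  refine Finset.monotone_filter_right _ fun j _ hj => ?_
  rw [← Real.closedBall_eq_Icc, Metric.mem_closedBall, dist_comm, Real.dist_eq] at hj
  rwa [le_div_iff₀ hδ, ← abs_of_pos hδ, ← abs_mul, abs_of_pos hδ, sub_mul, div_mul_cancel₀ _ hδ.ne']

section ZeroSum

variable {U : Set ℂ} {G : ℂ → ℂ} {Z : Finset ℝ} {m : ℝ → ℕ} {α β δ r : ℝ}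

/-- The integral of `|G|²` over the horizontal segment at height `t` of half-length `4r` centred
on the line `Re z = β`; the discs of radius `4r` around points of that line are swept out by such
segments. -/
def segmentEnergy (G : ℂ → ℂ) (β r t : ℝ) : ENNReal :=
  ∫⁻ σ in Set.Icc (β - 4 * r) (β + 4 * r), ‖G (σ + t * Complex.I)‖ₑ ^ 2

lemma measurable_enorm_sq_comp_re_add_im (hmeas : Measurable G) :
    Measurable fun p : ℝ × ℝ => ‖G (p.2 + p.1 * Complex.I)‖ₑ ^ 2 :=
  (hmeas.comp (by fun_prop)).enorm.pow_const 2

lemma measurable_segmentEnergy (hmeas : Measurable G) (β r : ℝ) :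
    Measurable (segmentEnergy G β r) :=
  (measurable_enorm_sq_comp_re_add_im hmeas).lintegral_prod_right'

lemma setLIntegral_segmentEnergy_le (hmeas : Measurable G) {I : Set ℝ} {X : ENNReal}
    (hX : ∀ σ : ℝ, |σ - β| ≤ 4 * r → ∫⁻ t in I, ‖G (σ + t * Complex.I)‖ₑ ^ 2 ≤ X) :
    ∫⁻ t in I, segmentEnergy G β r t ≤ ENNReal.ofReal (8 * r) * X := by
  unfold segmentEnergy
  rw [lintegral_lintegral_swap (measurable_enorm_sq_comp_re_add_im hmeas).aemeasurable]
  calc _ ≤ ∫⁻ _ in Set.Icc (β - 4 * r) (β + 4 * r), X :=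
        setLIntegral_mono' measurableSet_Icc fun σ hσ => hX σ <| by
          rwa [← Real.closedBall_eq_Icc, Metric.mem_closedBall, Real.dist_eq] at hσ
    _ = ENNReal.ofReal (8 * r) * X := by
        rw [setLIntegral_const, Real.volume_Icc, mul_comm]
        congr 2
        ring

lemma ofReal_sq_mul_enorm_sq_mul_four_pow_le_segmentEnergy (hU : IsOpen U) (hmeas : Measurable G)
    (hG : DifferentiableOn ℂ G U) (hr : 0 < r) (hαδ : |α| + δ ≤ r) {b γ : ℝ}
    (hstrip : ∀ z : ℂ, z.im ∈ Set.Icc (b - 5 * r) (b + 5 * r) → z ∈ U)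
    (hZ : ∀ γ ∈ Z, γ ∈ Set.Icc b (b + δ))
    (hm : ∀ γ ∈ Z, (m γ : ℕ∞) ≤ analyticOrderAt G (β + γ * Complex.I)) (hγ : γ ∈ Z) :
    ENNReal.ofReal (r ^ 2) * (‖G (β + (γ + α : ℝ) * Complex.I)‖ₑ ^ 2 * 4 ^ ∑ γ ∈ Z, m γ) ≤
      ∫⁻ t in Set.Icc (b - 5 * r) (b + 5 * r), segmentEnergy G β r t := by
  classical
  have hinj : Function.Injective fun γ : ℝ => (β + γ * Complex.I : ℂ) := fun x y h => by
    simpa using h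
  obtain ⟨hα₁, hα₂⟩ := abs_le.1 (le_refl |α|)
  have hIcc : Set.Icc (γ + α - 4 * r) (γ + α + 4 * r) ⊆ Set.Icc (b - 5 * r) (b + 5 * r) :=
    Set.Icc_subset_Icc (by linarith [(hZ γ hγ).1, (hZ γ hγ).2])
      (by linarith [(hZ γ hγ).2])
  have hball := ofReal_sq_mul_enorm_sq_mul_four_pow_le (U := U) (m := fun z => m z.im)
    (S := Z.image fun γ : ℝ => (β + γ * Complex.I : ℂ)) (w := β + (γ + α : ℝ) * Complex.I)
    hU hmeas hG hr
    (fun z hz => hstrip z <| hIcc <| by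
      rw [← Real.closedBall_eq_Icc, Metric.mem_closedBall, Real.dist_eq]
      simpa using (Complex.abs_im_le_norm _).trans (mem_closedBall_iff_norm.1 hz))
    (Finset.forall_mem_image.2 fun γ' hγ' => by
      have hdiff : (β + (γ + α : ℝ) * Complex.I - (β + γ' * Complex.I) : ℂ) =
          (γ - γ' + α : ℝ) * Complex.I := by
        push_cast
        ring
      rw [hdiff, norm_mul, Complex.norm_I, mul_one, Complex.norm_real, Real.norm_eq_abs, abs_le]
      constructor <;> linarith [(hZ γ hγ).1, (hZ γ hγ).2, (hZ γ' hγ').1, (hZ γ' hγ').2])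
    (Finset.forall_mem_image.2 fun γ' hγ' => by simpa using hm γ' hγ')
  rw [Finset.sum_image hinj.injOn] at hball
  simp only [Complex.add_im, Complex.ofReal_im, Complex.im_ofReal_mul, Complex.I_im, mul_one,
    zero_add] at hball
  exact hball.trans ((setLIntegral_closedBall_le_lintegral_box (by fun_prop) _ _ _).trans
    (lintegral_mono_set hIcc))

lemma ofReal_sq_mul_sum_enorm_sq_le_segmentEnergy (hU : IsOpen U) (hmeas : Measurable G)
    (hG : DifferentiableOn ℂ G U) (hr : 0 < r) (hαδ : |α| + δ ≤ r) {b : ℝ}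
    (hstrip : ∀ z : ℂ, z.im ∈ Set.Icc (b - 5 * r) (b + 5 * r) → z ∈ U)
    (hZ : ∀ γ ∈ Z, γ ∈ Set.Icc b (b + δ))
    (hm : ∀ γ ∈ Z, (m γ : ℕ∞) ≤ analyticOrderAt G (β + γ * Complex.I)) :
    ENNReal.ofReal (r ^ 2) * ∑ γ ∈ Z, m γ * ‖G (β + (γ + α : ℝ) * Complex.I)‖ₑ ^ 2 ≤
      ∫⁻ t in Set.Icc (b - 5 * r) (b + 5 * r), segmentEnergy G β r t := by
  set E := ∫⁻ t in Set.Icc (b - 5 * r) (b + 5 * r), segmentEnergy G β r t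
  set n := ∑ γ ∈ Z, m γ with hn
  have hpow_ne_zero : (4 : ENNReal) ^ n ≠ 0 := by simp
  have hpow_ne_top : (4 : ENNReal) ^ n ≠ ⊤ := ENNReal.pow_ne_top (by norm_num)
  have hcount : (n : ENNReal) ≤ 4 ^ n := by exact_mod_cast (Nat.lt_pow_self (by norm_num)).le
  rw [← ENNReal.mul_le_mul_iff_left hpow_ne_zero hpow_ne_top]
  calc _ = ∑ γ ∈ Z, (m γ : ENNReal) * (ENNReal.ofReal (r ^ 2) *
          (‖G (β + (γ + α : ℝ) * Complex.I)‖ₑ ^ 2 * 4 ^ n)) := by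
        rw [Finset.mul_sum, Finset.sum_mul]
        exact Finset.sum_congr rfl fun γ _ => by ring
    _ ≤ ∑ γ ∈ Z, (m γ : ENNReal) * E := Finset.sum_le_sum fun γ hγ => mul_le_mul_right
        (ofReal_sq_mul_enorm_sq_mul_four_pow_le_segmentEnergy hU hmeas hG hr hαδ hstrip hZ hm hγ) _
    _ = E * n := by rw [← Finset.sum_mul, hn, Nat.cast_sum, mul_comm]
    _ ≤ E * 4 ^ n := mul_le_mul_right hcount _

theorem ofReal_sq_mul_sum_enorm_sq_le (hU : IsOpen U) (hmeas : Measurable G)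
    (hG : DifferentiableOn ℂ G U) (hδ : 0 < δ) (hαδ : |α| + δ ≤ r) {u v : ℝ}
    (hstrip : ∀ z : ℂ, z.im ∈ Set.Icc u v → z ∈ U)
    (hZ : ∀ γ ∈ Z, γ ∈ Set.Icc (u + 6 * r) (v - 6 * r))
    (hm : ∀ γ ∈ Z, (m γ : ℕ∞) ≤ analyticOrderAt G (β + γ * Complex.I)) {X : ENNReal}
    (hX : ∀ σ : ℝ, |σ - β| ≤ 4 * r →
      ∫⁻ t in Set.Icc u v, ‖G (σ + t * Complex.I)‖ₑ ^ 2 ≤ X) :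
    ENNReal.ofReal (r ^ 2) * ∑ γ ∈ Z, m γ * ‖G (β + (γ + α : ℝ) * Complex.I)‖ₑ ^ 2 ≤
      ENNReal.ofReal (2 * (5 * r / δ) + 1) * (ENNReal.ofReal (8 * r) * X) := by
  classical
  have hδr : δ ≤ r := by linarith [abs_nonneg α]
  have hr : 0 < r := hδ.trans_le hδr
  set cell : ℝ → ℤ := fun γ => ⌊γ / δ⌋
  have hcell {γ : ℝ} {j : ℤ} (h : cell γ = j) : γ ∈ Set.Icc (j * δ) (j * δ + δ) := by
    obtain ⟨hlower, hupper⟩ := Int.floor_eq_iff.1 h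
    rw [le_div_iff₀ hδ] at hlower
    rw [div_lt_iff₀ hδ, add_one_mul] at hupper
    exact ⟨hlower, hupper.le⟩
  have hwindow : ∀ j ∈ Z.image cell,
      Set.Icc (j * δ - 5 * r) (j * δ + 5 * r) ⊆ Set.Icc u v := by
    refine Finset.forall_mem_image.2 fun γ hγ => Set.Icc_subset_Icc ?_ ?_ <;>
    linarith [(hcell (γ := γ) rfl).1, (hcell (γ := γ) rfl).2, (hZ γ hγ).1, (hZ γ hγ).2]
  calc _ = ∑ j ∈ Z.image cell, ENNReal.ofReal (r ^ 2) * ∑ γ ∈ Z with cell γ = j,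
          m γ * ‖G (β + (γ + α : ℝ) * Complex.I)‖ₑ ^ 2 := by
        rw [← Finset.mul_sum,
          Finset.sum_fiberwise_of_maps_to fun γ hγ => Finset.mem_image_of_mem cell hγ]
    _ ≤ ∑ j ∈ Z.image cell, ∫⁻ t in Set.Icc (j * δ - 5 * r) (j * δ + 5 * r),
          segmentEnergy G β r t := Finset.sum_le_sum fun j hj =>
        ofReal_sq_mul_sum_enorm_sq_le_segmentEnergy hU hmeas hG hr hαδ
          (fun z hz => hstrip z (hwindow j hj hz))
          (fun γ hγ => hcell (Finset.mem_filter.1 hγ).2)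
          (fun γ hγ => hm γ (Finset.mem_filter.1 hγ).1)
    _ ≤ ENNReal.ofReal (2 * (5 * r / δ) + 1) * ∫⁻ t in Set.Icc u v, segmentEnergy G β r t :=
        sum_setLIntegral_Icc_mul_le (measurable_segmentEnergy hmeas β r) hδ (by positivity) hwindow
    _ ≤ ENNReal.ofReal (2 * (5 * r / δ) + 1) * (ENNReal.ofReal (8 * r) * X) :=
        mul_le_mul_right (setLIntegral_segmentEnergy_le hmeas hX) _

end ZeroSum

/-! ### Zeros of zeta and the shifted mollifier -/

section ZetaZeros

lemma measurable_riemannZeta : Measurable riemannZeta :=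
  measurable_of_continuousOn_compl_singleton 1 differentiableOn_riemannZeta.continuousOn

lemma half_add_mul_I_ne_one (γ : ℝ) : (1 / 2 + γ * Complex.I : ℂ) ≠ 1 := fun h => by
  have hre := congrArg Complex.re h
  norm_num at hre

lemma finite_zero_ordinates (a b : ℝ) :
    {γ : ℝ | a < γ ∧ γ ≤ b ∧ riemannZeta (1 / 2 + γ * Complex.I) = 0}.Finite := by
  set line : ℝ → ℂ := fun γ => 1 / 2 + γ * Complex.I
  have hinj : Function.Injective line := fun x y h => by simpa [line] using h
  have hcompact : IsCompact (line '' Set.Icc a b) := isCompact_Icc.image (by fun_prop)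
  refine (hcompact.inter_riemannZetaZeros_finite.preimage hinj.injOn).subset ?_
  exact fun γ hγ => ⟨Set.mem_image_of_mem line ⟨hγ.1.le, hγ.2.1⟩, hγ.2.2⟩

lemma zetaMult_le_analyticOrderAt {z : ℂ} (hz : z ≠ 1) :
    (zetaMult z : ℕ∞) ≤ analyticOrderAt riemannZeta z := by
  rw [natCast_le_analyticOrderAt_iff_iteratedDeriv_eq_zero (analyticOn_riemannZeta z hz)]
  exact fun i hi => by simpa using Nat.notMem_of_lt_sInf hi

end ZetaZeros

section ShiftedMollifier

variable {T ϑ : ℝ} {P : Polynomial ℝ}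

lemma differentiable_weightedMollifier (g : ℝ → ℂ) (y : ℝ) :
    Differentiable ℂ (weightedMollifier g y) := fun s =>
  DifferentiableAt.fun_sum fun k hk => by
    have hk₀ : (k : ℂ) ≠ 0 := Nat.cast_ne_zero.2 (Finset.mem_Ioc.1 hk).1.ne'
    exact (differentiableAt_id.neg.const_cpow (Or.inl hk₀)).const_mul _

lemma zetaMult_le_analyticOrderAt_mul_weightedMollifier (g : ℝ → ℂ) (y : ℝ) {z : ℂ} (hz : z ≠ 1) :
    (zetaMult z : ℕ∞) ≤
      analyticOrderAt (fun s => riemannZeta s * weightedMollifier g y s) z := by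
  have hmul := analyticOrderAt_mul (analyticOn_riemannZeta z hz)
    ((differentiable_weightedMollifier g y).analyticAt z)
  exact (zetaMult_le_analyticOrderAt hz).trans (le_self_add.trans_eq hmul.symm)

/-- The weight `P(x) e^{c (1 - x)}`. Since `1 - log (y / n) / log y = log n / log y`, the
exponential turns the weight `P` into that of the mollifier at a point shifted by
`-c / log y`. -/
def twistedWeight (P : Polynomial ℝ) (c : ℂ) (x : ℝ) : ℂ :=
  (P.eval x : ℝ) * Complex.exp (c * (1 - x))

lemma exists_isMollifierWeight_twistedWeight (c : ℂ) (hP : P.eval 0 = 0) :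
    ∃ A, IsMollifierWeight (twistedWeight P c) A := by
  refine exists_isMollifierWeight ?_ (by simp [twistedWeight, hP])
  exact (Complex.ofRealCLM.contDiff.comp (P.contDiff_aeval 2)).mul
    (contDiff_const.mul (contDiff_const.sub Complex.ofRealCLM.contDiff)).cexp

lemma moll_add_div_log (hϑ : 0 < ϑ) (hT : 1 < T) (P : Polynomial ℝ) (s w : ℂ) :
    moll T ϑ P (s + w / Real.log T) =
      weightedMollifier (twistedWeight P (-(w * ϑ))) (T ^ ϑ) s := by
  have hT₀ : 0 < T := by linarith
  have hlog : (Real.log T : ℂ) ≠ 0 := Complex.ofReal_ne_zero.2 (Real.log_pos hT).ne'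
  have hϑ' : (ϑ : ℂ) ≠ 0 := Complex.ofReal_ne_zero.2 hϑ.ne'
  unfold moll weightedMollifier
  refine Finset.sum_congr rfl fun n hn => ?_
  have hn₀ : n ≠ 0 := Nat.one_le_iff_ne_zero.1 (Finset.mem_Icc.1 hn).1
  have hn' : (n : ℂ) ≠ 0 := Nat.cast_ne_zero.2 hn₀
  have hshift : (n : ℂ) ^ (-(s + w / Real.log T)) = Complex.exp (-(w * ϑ) *
      (1 - (Real.log (T ^ ϑ / n) / Real.log (T ^ ϑ) : ℝ))) * (n : ℂ) ^ (-s) := by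
    rw [Complex.cpow_def_of_ne_zero hn', Complex.cpow_def_of_ne_zero hn', ← Complex.exp_add,
      Real.log_div (by positivity) (Nat.cast_ne_zero.2 hn₀), Real.log_rpow hT₀,
      ← Complex.natCast_log]
    congr 1
    push_cast
    field_simp
    ring
  rw [hshift, mollifierCoeff, twistedWeight]
  ring

lemma riemannZeta_mul_moll_shift (hϑ : 0 < ϑ) (hT : 1 < T) (P : Polynomial ℝ) (κ η γ : ℝ) :
    riemannZeta ((1 / 2 + γ * Complex.I) + 2 * π * Complex.I * κ / Real.log T) *
        moll T ϑ P ((1 / 2 + γ * Complex.I) + 2 * π * Complex.I * η / Real.log T) =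
      riemannZeta ((1 / 2 : ℝ) + (γ + 2 * π * κ / Real.log T : ℝ) * Complex.I) *
        weightedMollifier (twistedWeight P (-(2 * π * Complex.I * (η - κ) * ϑ))) (T ^ ϑ)
          ((1 / 2 : ℝ) + (γ + 2 * π * κ / Real.log T : ℝ) * Complex.I) := by
  rw [← moll_add_div_log hϑ hT]
  congr 2
  · push_cast
    ring
  · push_cast
    ring

end ShiftedMollifier

section ZetaZeroSum

variable {g : ℝ → ℂ} {a α y C T : ℝ}

lemma ofReal_sq_mul_sum_ordMult_mul_enorm_sq_le (ha : 0 ≤ a) (hTa : 12 * (1 + a) ≤ T)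
    (hTe : Real.exp 1 ≤ T) (hα : |α| ≤ a / Real.log T)
    (hmoment : ∀ σ : ℝ, |σ - 1 / 2| ≤ 4 * (1 + a) / Real.log T →
      ∫⁻ t in Set.Icc (T / 2) (5 * T / 2), ‖riemannZeta (σ + t * Complex.I) *
        weightedMollifier g y (σ + t * Complex.I)‖ₑ ^ 2 ≤ ENNReal.ofReal (C * T))
    {Z : Finset ℝ} (hZ : ∀ γ ∈ Z, γ ∈ Set.Ioc T (2 * T)) :
    ENNReal.ofReal (((1 + a) / Real.log T) ^ 2) * ∑ γ ∈ Z, ordMult γ *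
        ‖riemannZeta ((1 / 2 : ℝ) + (γ + α : ℝ) * Complex.I) *
          weightedMollifier g y ((1 / 2 : ℝ) + (γ + α : ℝ) * Complex.I)‖ₑ ^ 2 ≤
      ENNReal.ofReal (10 * (1 + a) + 1) *
        (ENNReal.ofReal (8 * ((1 + a) / Real.log T)) * ENNReal.ofReal (C * T)) := by
  have hlog : 1 ≤ Real.log T := (Real.le_log_iff_exp_le (by linarith)).2 hTe
  have hradius : (1 + a) / Real.log T ≤ 1 + a := div_le_self (by positivity) hlog
  have hdiff : DifferentiableOn ℂ (fun z => riemannZeta z * weightedMollifier g y z) {1}ᶜ :=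
    differentiableOn_riemannZeta.mul (differentiable_weightedMollifier g y).differentiableOn
  have hmeas : Measurable fun z => riemannZeta z * weightedMollifier g y z :=
    measurable_riemannZeta.mul (differentiable_weightedMollifier g y).continuous.measurable
  convert ofReal_sq_mul_sum_enorm_sq_le (m := ordMult) (α := α) (β := 1 / 2)
    (δ := 1 / Real.log T) (u := T / 2) (v := 5 * T / 2) isOpen_compl_singleton hmeas hdiff
    (by positivity) ?_ ?_ ?_ ?_ ?_ using 3
  · field_simp
    ring
  · rw [add_div]
    linarith
  · rintro z hz rfl
    linarith [hz.1, Complex.one_im]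
  · intro γ hγ
    obtain ⟨hlower, hupper⟩ := hZ γ hγ
    constructor <;> linarith
  · intro γ _
    push_cast
    exact zetaMult_le_analyticOrderAt_mul_weightedMollifier g y (half_add_mul_I_ne_one γ)
  · exact fun σ hσ => hmoment σ (hσ.trans_eq (mul_div_assoc _ _ _).symm)

lemma sum_ordMult_mul_norm_sq_le (ha : 0 ≤ a) (hC : 0 ≤ C) (hTa : 12 * (1 + a) ≤ T)
    (hTe : Real.exp 1 ≤ T) (hα : |α| ≤ a / Real.log T)
    (hmoment : ∀ σ : ℝ, |σ - 1 / 2| ≤ 4 * (1 + a) / Real.log T →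
      ∫⁻ t in Set.Icc (T / 2) (5 * T / 2), ‖riemannZeta (σ + t * Complex.I) *
        weightedMollifier g y (σ + t * Complex.I)‖ₑ ^ 2 ≤ ENNReal.ofReal (C * T))
    {Z : Finset ℝ} (hZ : ∀ γ ∈ Z, γ ∈ Set.Ioc T (2 * T)) :
    ∑ γ ∈ Z, (ordMult γ : ℝ) * ‖riemannZeta ((1 / 2 : ℝ) + (γ + α : ℝ) * Complex.I) *
        weightedMollifier g y ((1 / 2 : ℝ) + (γ + α : ℝ) * Complex.I)‖ ^ 2 ≤
      8 * (10 * (1 + a) + 1) * C * (T * Real.log T) := by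
  have hT : 0 < T := by linarith
  have hlog : 0 < Real.log T := by linarith [(Real.le_log_iff_exp_le hT).2 hTe]
  set f : ℝ → ℝ := fun γ => (ordMult γ : ℝ) *
    ‖riemannZeta ((1 / 2 : ℝ) + (γ + α : ℝ) * Complex.I) *
      weightedMollifier g y ((1 / 2 : ℝ) + (γ + α : ℝ) * Complex.I)‖ ^ 2
  have hf (γ : ℝ) : 0 ≤ f γ := by positivity
  have hofReal (γ : ℝ) : ENNReal.ofReal (f γ) = ordMult γ *
      ‖riemannZeta ((1 / 2 : ℝ) + (γ + α : ℝ) * Complex.I) *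
        weightedMollifier g y ((1 / 2 : ℝ) + (γ + α : ℝ) * Complex.I)‖ₑ ^ 2 := by
    rw [ENNReal.ofReal_mul (by positivity), ENNReal.ofReal_natCast,
      ENNReal.ofReal_pow (norm_nonneg _), ofReal_norm]
  have hsum := ofReal_sq_mul_sum_ordMult_mul_enorm_sq_le ha hTa hTe hα hmoment hZ
  simp only [← hofReal] at hsum
  rw [← ENNReal.ofReal_sum_of_nonneg fun γ _ => hf γ, ← ENNReal.ofReal_mul (by positivity),
    ← ENNReal.ofReal_mul (by positivity), ← ENNReal.ofReal_mul (by positivity),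
    ENNReal.ofReal_le_ofReal_iff (by positivity)] at hsum
  have hrescaled : (1 + a) * ∑ γ ∈ Z, f γ ≤ 8 * (10 * (1 + a) + 1) * C * (T * Real.log T) := by
    have hcancel := mul_le_mul_of_nonneg_left hsum
      (by positivity : 0 ≤ Real.log T ^ 2 / (1 + a))
    field_simp at hcancel ⊢
    linarith
  exact (le_mul_of_one_le_left (Finset.sum_nonneg fun γ _ => hf γ) (by linarith)).trans hrescaled

end ZetaZeroSum

theorem mollified_zeta_moment_general (κ η ϑ : ℝ)
    (hϑ₀ : 0 < ϑ) (hϑ₁ : ϑ < 1 / 2) (P : Polynomial ℝ) (hP : P.eval 0 = 0) :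
    ∃ C : ℝ, 0 < C ∧ ∀ᶠ T : ℝ in atTop,
      (∑ᶠ γ ∈ {γ : ℝ | T < γ ∧ γ ≤ 2 * T ∧ riemannZeta (1 / 2 + γ * Complex.I) = 0},
        (ordMult γ : ℝ) *
          ‖riemannZeta ((1 / 2 + γ * Complex.I) + 2 * π * Complex.I * κ / Real.log T) *
            moll T ϑ P ((1 / 2 + γ * Complex.I) + 2 * π * Complex.I * η / Real.log T)‖ ^ 2)
        ≤ C * (T * Real.log T) := by
  set a := 2 * π * |κ|
  have ha₀ : 0 ≤ a := by positivity
  obtain ⟨A, hg⟩ :=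
    exists_isMollifierWeight_twistedWeight (-(2 * π * Complex.I * (η - κ) * ϑ)) hP
  obtain ⟨C, hC₀, hC⟩ := exists_setLIntegral_enorm_sq_riemannZeta_mul_weightedMollifier_le hg
    hϑ₀ hϑ₁ (4 * (1 + a))
  refine ⟨8 * (10 * (1 + a) + 1) * C + 1, by positivity, ?_⟩
  filter_upwards [hC, eventually_ge_atTop (12 * (1 + a)), eventually_ge_atTop (Real.exp 1)]
    with T hmoment hTa hTe
  have hT : 1 < T := by linarith
  have hlog : 0 < Real.log T := Real.log_pos hT
  have hα : |2 * π * κ / Real.log T| ≤ a / Real.log T := by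
    rw [abs_div, abs_of_pos hlog, abs_mul, abs_of_pos Real.two_pi_pos]
  have hfinite := finite_zero_ordinates T (2 * T)
  refine (finsum_mem_eq_finite_toFinset_sum _ hfinite).trans_le ?_
  refine le_trans ?_ ((sum_ordMult_mul_norm_sq_le ha₀ hC₀ hTa hTe hα hmoment
    (Z := hfinite.toFinset) fun γ hγ => ?_).trans (by gcongr; linarith))
  · refine (Finset.sum_congr rfl fun γ _ => ?_).le
    rw [riemannZeta_mul_moll_shift hϑ₀ hT]
  · obtain ⟨hlower, hupper, -⟩ := hfinite.mem_toFinset.1 hγ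
    exact ⟨hlower, hupper⟩

/-- Assume RH. Fix reals `κ, η`, a number `0 < ϑ < 1/2`, and a polynomial `P` with
`P(0) = 0`. Then as `T → ∞`,
`Σ_{T<γ≤2T} |ζ(ρ + 2πiκ/log T) M(ρ + 2πiη/log T, P)|² ≪ T log T`,
where `ρ = 1/2 + iγ` runs over the nontrivial zeros with ordinate in `(T, 2T]`, counted
with multiplicity. -/
theorem mollified_zeta_moment (hRH : RiemannHypothesis) (κ η ϑ : ℝ)
    (hϑ₀ : 0 < ϑ) (hϑ₁ : ϑ < 1 / 2) (P : Polynomial ℝ) (hP : P.eval 0 = 0) :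
    ∃ C : ℝ, 0 < C ∧ ∀ᶠ T : ℝ in atTop,
      (∑ᶠ γ ∈ {γ : ℝ | T < γ ∧ γ ≤ 2 * T ∧ riemannZeta (1 / 2 + γ * Complex.I) = 0},
        (ordMult γ : ℝ) *
          ‖riemannZeta ((1 / 2 + γ * Complex.I) + 2 * π * Complex.I * κ / Real.log T) *
            moll T ϑ P ((1 / 2 + γ * Complex.I) + 2 * π * Complex.I * η / Real.log T)‖ ^ 2)
        ≤ C * (T * Real.log T) :=
  mollified_zeta_moment_general κ η ϑ hϑ₀ hϑ₁ P hP
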